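/- Existence of inhomogeneous global minimizers trapping U₀ (Theorem 1.1(i)): assume 0 ∈ ∂{U₀ > 0}. Then there exist global minimizers Ū and U̲ of J such that U̲(x) ≤ U₀(x) ≤ Ū(x) for all x ∈ ℝⁿ, the open unit ball B₁ is contained in {Ū > 0}, B₁ ⊆ {U̲ = 0}, the sets ∂{Ū > 0} and ∂{U̲ > 0} are nonempty, and dist(0, ∂{Ū > 0}) = dist(0, ∂{U̲ > 0}) = 1. -/

import Mathlib

open MeasureTheory Metric Set Filter ENNReal NNReal

/-- The Alt–Caffarelli energy `J_D(u) = ∫_D (‖∇u‖² + 𝟙_{u>0})`, valued in `[0,∞]`. -/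
noncomputable def JE {n : ℕ} (D : Set (EuclideanSpace ℝ (Fin n)))
    (u : EuclideanSpace ℝ (Fin n) → ℝ) : ℝ≥0∞ :=
  ∫⁻ x in D, ((‖gradient u x‖₊ : ℝ≥0∞) ^ 2 + if 0 < u x then 1 else 0)

/-- `u` is a (nonnegative, locally Lipschitz) minimizer of `J` in the open set `Ω`:
for every nonnegative locally Lipschitz competitor `v` with `{v ≠ u}` a bounded subset
of `Ω`, one has `J_{Ω ∩ B}(u) ≤ J_{Ω ∩ B}(v)` for every open ball `B ⊇ {v ≠ u}`. -/
def IsMinimizer {n : ℕ} (Ω : Set (EuclideanSpace ℝ (Fin n)))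
    (u : EuclideanSpace ℝ (Fin n) → ℝ) : Prop :=
  (∀ x, 0 ≤ u x) ∧ LocallyLipschitz u ∧
  ∀ v : EuclideanSpace ℝ (Fin n) → ℝ, (∀ x, 0 ≤ v x) → LocallyLipschitz v →
    Bornology.IsBounded {x | v x ≠ u x} → {x | v x ≠ u x} ⊆ Ω →
    ∀ (c : EuclideanSpace ℝ (Fin n)) (r : ℝ), {x | v x ≠ u x} ⊆ Metric.ball c r →
      JE (Ω ∩ Metric.ball c r) u ≤ JE (Ω ∩ Metric.ball c r) v

/-!
For a minimizing cone `U`, a maximum of `U` and a translate is a subminimizer, and a minimum of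
`U` and finitely many translates is a superminimizer. Using such a `W`, `ε`-close to `U`, as one of
two obstacles in the unit ball yields `ψ` which minimizes in the half ball, equals `W` outside the
unit ball, and satisfies `ψ ≥ U` with `0 < ψ 0`, respectively `ψ ≤ U` with `ψ = 0` near `0`. An
explicit radial barrier bounds the Lipschitz constants of these `ψ` and shows that they are
nondegenerate at the free boundary.

As `ε → 0` there are two cases. Either the free boundaries of the `ψ` stay away from `0`: then their
limit is a global minimizer, because it equals `U` outside the unit ball and has the same energy as
`U`. Or they approach `0`: then rescaling each `ψ` by the distance from `0` to its free boundary
produces a global minimizer in the limit, because the half ball is blown up to the whole space.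
Homogeneity preserves the comparison with `U` under rescaling, and a last rescaling normalizes the
distance to `1`.
-/

namespace AltCaffarelli

open scoped Topology Gradient RealInnerProductSpace

section IsLipschitz

variable {X : Type*} [PseudoMetricSpace X] {u v : X → ℝ}

/-- Lipschitz real functions, with an unspecified constant: the class in which all variational
arguments take place. -/
def IsLipschitz (u : X → ℝ) : Prop := ∃ K : ℝ≥0, LipschitzWith K u

theorem IsLipschitz.continuous (hu : IsLipschitz u) : Continuous u :=
  let ⟨_, hK⟩ := hu; hK.continuous

theorem IsLipschitz.max (hu : IsLipschitz u) (hv : IsLipschitz v) :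
    IsLipschitz fun x ↦ max (u x) (v x) :=
  let ⟨_, hK⟩ := hu; let ⟨_, hL⟩ := hv; ⟨_, hK.max hL⟩

theorem IsLipschitz.min (hu : IsLipschitz u) (hv : IsLipschitz v) :
    IsLipschitz fun x ↦ min (u x) (v x) :=
  let ⟨_, hK⟩ := hu; let ⟨_, hL⟩ := hv; ⟨_, hK.min hL⟩

theorem IsLipschitz.sub (hu : IsLipschitz u) (hv : IsLipschitz v) :
    IsLipschitz fun x ↦ u x - v x :=
  let ⟨_, hK⟩ := hu; let ⟨_, hL⟩ := hv; ⟨_, hK.sub hL⟩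

theorem isLipschitz_const (c : ℝ) : IsLipschitz fun _ : X ↦ c := ⟨0, .const c⟩

theorem IsLipschitz.abs (hu : IsLipschitz u) : IsLipschitz fun x ↦ |u x| :=
  let ⟨_, hK⟩ := hu; ⟨_, (lipschitzWith_one_norm (E := ℝ)).comp hK⟩

end IsLipschitz

section Gradient

variable {E : Type*} [NormedAddCommGroup E] [InnerProductSpace ℝ E] [CompleteSpace E]
  {u v : E → ℝ} {x : E}

theorem gradient_fun_add (hu : DifferentiableAt ℝ u x) (hv : DifferentiableAt ℝ v x) :
    ∇ (fun y ↦ u y + v y) x = ∇ u x + ∇ v x := by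
  simp only [gradient, fderiv_fun_add hu hv, map_add]

theorem gradient_fun_sub (hu : DifferentiableAt ℝ u x) (hv : DifferentiableAt ℝ v x) :
    ∇ (fun y ↦ u y - v y) x = ∇ u x - ∇ v x := by
  simp only [gradient, fderiv_fun_sub hu hv, map_sub]

theorem gradient_const_mul (c : ℝ) (hu : DifferentiableAt ℝ u x) :
    ∇ (fun y ↦ c * u y) x = c • ∇ u x := by
  simp only [gradient, fderiv_const_mul hu, map_smulₛₗ, conj_trivial]

theorem norm_gradient (u : E → ℝ) (x : E) : ‖∇ u x‖ = ‖fderiv ℝ u x‖ :=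
  LinearIsometryEquiv.norm_map _ _

theorem norm_gradient_le {K : ℝ≥0} (hu : LipschitzWith K u) (x : E) : ‖∇ u x‖ ≤ K :=
  (norm_gradient u x).trans_le (norm_fderiv_le_of_lipschitz ℝ hu)

theorem gradient_eq_zero_of_differentiableAt_abs (hu : u x = 0)
    (h : DifferentiableAt ℝ (fun y ↦ |u y|) x) : ∇ u x = 0 := by
  have hmin : IsLocalMin (fun y ↦ |u y|) x := .of_forall fun y ↦ by simp [hu]
  have habs := h.hasFDerivAt
  rw [hmin.fderiv_eq_zero, hasFDerivAt_iff_isLittleO] at habs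
  have hfd : HasFDerivAt u (0 : E →L[ℝ] ℝ) x := by
    rw [hasFDerivAt_iff_isLittleO]
    simpa [hu, Asymptotics.isLittleO_abs_left] using habs
  rw [gradient, hfd.fderiv, map_zero]

/-- The integrand `‖∇u‖² + 𝟙_{u > 0}` of the Alt–Caffarelli functional. -/
noncomputable def energyDensity (u : E → ℝ) (x : E) : ℝ :=
  ‖∇ u x‖ ^ 2 + if 0 < u x then 1 else 0

theorem energyDensity_nonneg (u : E → ℝ) (x : E) : 0 ≤ energyDensity u x := by
  unfold energyDensity
  positivity

theorem energyDensity_le {K : ℝ≥0} (hu : LipschitzWith K u) (x : E) :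
    energyDensity u x ≤ (K : ℝ) ^ 2 + 1 := by
  unfold energyDensity
  gcongr
  · exact norm_gradient_le hu x
  · split_ifs <;> norm_num

theorem energyDensity_add_inner_le (hu : DifferentiableAt ℝ u x)
    (hv : DifferentiableAt ℝ v x) :
    energyDensity u x + 2 * ⟪∇ u x, ∇ (fun y ↦ v y - u y) x⟫
      - {x | 0 < u x ∧ v x ≤ 0}.indicator 1 x ≤ energyDensity v x := by
  have hconvex := norm_sub_sq_real (∇ v x) (∇ u x)
  have hphase : (if 0 < u x then (1 : ℝ) else 0) - {x | 0 < u x ∧ v x ≤ 0}.indicator 1 x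
      ≤ if 0 < v x then 1 else 0 := by
    by_cases h1 : 0 < u x <;> by_cases h2 : 0 < v x <;>
      simp [h1, h2, not_lt.1, not_le.2]
  rw [gradient_fun_sub hv hu, inner_sub_right, real_inner_self_eq_norm_sq, energyDensity,
    energyDensity, real_inner_comm]
  nlinarith [sq_nonneg ‖∇ v x - ∇ u x‖]

variable [MeasurableSpace E] [BorelSpace E]

theorem measurable_gradient (u : E → ℝ) : Measurable (∇ u) :=
  (LinearIsometryEquiv.continuous _).measurable.comp (measurable_fderiv ℝ u)

theorem measurable_energyDensity (hu : IsLipschitz u) : Measurable (energyDensity u) :=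
  ((measurable_gradient u).norm.pow_const 2).add <|
    .ite (measurableSet_lt measurable_const hu.continuous.measurable)
      measurable_const measurable_const

end Gradient

section EnergyDiff

variable {E : Type*} [NormedAddCommGroup E] [InnerProductSpace ℝ E] [FiniteDimensional ℝ E]
  [MeasurableSpace E] [BorelSpace E] {u v w : E → ℝ} {c : E} {r : ℝ}

theorem IsLipschitz.ae_differentiableAt (hu : IsLipschitz u) : ∀ᵐ x, DifferentiableAt ℝ u x :=
  let ⟨_, hK⟩ := hu; hK.ae_differentiableAt

theorem ae_gradient_eq_zero (hu : IsLipschitz u) : ∀ᵐ x, u x = 0 → ∇ u x = 0 := by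
  filter_upwards [hu.abs.ae_differentiableAt] with x hx h0
  exact gradient_eq_zero_of_differentiableAt_abs h0 hx

theorem ae_gradient_eq (hu : IsLipschitz u) (hv : IsLipschitz v) :
    ∀ᵐ x, u x = v x → ∇ u x = ∇ v x := by
  filter_upwards [ae_gradient_eq_zero (hu.sub hv), hu.ae_differentiableAt,
    hv.ae_differentiableAt] with x hx hux hvx huv
  rw [← sub_eq_zero, ← gradient_fun_sub hux hvx, hx (sub_eq_zero.2 huv)]

theorem ae_energyDensity_eq (hu : IsLipschitz u) (hv : IsLipschitz v) :
    ∀ᵐ x, u x = v x → energyDensity u x = energyDensity v x := by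
  filter_upwards [ae_gradient_eq hu hv] with x hx huv
  rw [energyDensity, energyDensity, hx huv, huv]

theorem ae_energyDensity_max_add_min (hu : IsLipschitz u) (hv : IsLipschitz v) :
    ∀ᵐ x, energyDensity (fun y ↦ max (u y) (v y)) x + energyDensity (fun y ↦ min (u y) (v y)) x =
      energyDensity u x + energyDensity v x := by
  filter_upwards [ae_energyDensity_eq (hu.max hv) hu, ae_energyDensity_eq (hu.max hv) hv,
    ae_energyDensity_eq (hu.min hv) hu, ae_energyDensity_eq (hu.min hv) hv]
    with x hmaxu hmaxv hminu hminv
  rcases le_total (u x) (v x) with h | h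
  · rw [hmaxv (max_eq_right h), hminu (min_eq_left h), add_comm]
  · rw [hmaxu (max_eq_left h), hminv (min_eq_right h)]

theorem integrableOn_energyDensity (hu : IsLipschitz u) (x : E) (r : ℝ) :
    IntegrableOn (energyDensity u) (ball x r) := by
  obtain ⟨K, hK⟩ := id hu
  refine Measure.integrableOn_of_bounded (M := (K : ℝ) ^ 2 + 1) measure_ball_lt_top.ne
    (measurable_energyDensity hu).aestronglyMeasurable (.of_forall fun y ↦ ?_)
  rw [Real.norm_of_nonneg (energyDensity_nonneg u y)]
  exact energyDensity_le hK y

theorem energyDensity_sub_ae_eq_indicator (hu : IsLipschitz u) (hv : IsLipschitz v)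
    (h : EqOn u v (ball c r)ᶜ) :
    (fun x ↦ energyDensity u x - energyDensity v x) =ᵐ[volume]
      (ball c r).indicator fun x ↦ energyDensity u x - energyDensity v x := by
  filter_upwards [ae_energyDensity_eq hu hv] with x hx
  by_cases hxr : x ∈ ball c r
  · rw [indicator_of_mem hxr]
  · rw [indicator_of_notMem hxr, hx (h hxr), sub_self]

theorem integrable_energyDensity_sub (hu : IsLipschitz u) (hv : IsLipschitz v)
    (h : EqOn u v (ball c r)ᶜ) : Integrable fun x ↦ energyDensity u x - energyDensity v x := by
  refine .congr ?_ (energyDensity_sub_ae_eq_indicator hu hv h).symm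
  rw [integrable_indicator_iff measurableSet_ball]
  exact (integrableOn_energyDensity hu c r).sub (integrableOn_energyDensity hv c r)

/-- The energy of `u` relative to `v`, for functions that agree outside a ball; it replaces the
difference of the two (infinite) total energies. -/
noncomputable def energyDiff (u v : E → ℝ) : ℝ := ∫ x, (energyDensity u x - energyDensity v x)

theorem energyDiff_eq_sub_setIntegral (hu : IsLipschitz u) (hv : IsLipschitz v)
    (h : EqOn u v (ball c r)ᶜ) :
    energyDiff u v = (∫ x in ball c r, energyDensity u x) - ∫ x in ball c r, energyDensity v x := by
  rw [energyDiff, integral_congr_ae (energyDensity_sub_ae_eq_indicator hu hv h),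
    integral_indicator measurableSet_ball,
    integral_sub (integrableOn_energyDensity hu c r) (integrableOn_energyDensity hv c r)]

theorem energyDiff_add (hu : IsLipschitz u) (hv : IsLipschitz v) (hw : IsLipschitz w)
    (huv : EqOn u v (ball c r)ᶜ) (hvw : EqOn v w (ball c r)ᶜ) :
    energyDiff u v + energyDiff v w = energyDiff u w := by
  rw [energyDiff_eq_sub_setIntegral hu hv huv, energyDiff_eq_sub_setIntegral hv hw hvw,
    energyDiff_eq_sub_setIntegral hu hw (huv.trans hvw), sub_add_sub_cancel]

end EnergyDiff

section IntegrationByParts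

open scoped Laplacian

variable {E : Type*} [NormedAddCommGroup E] [InnerProductSpace ℝ E] [FiniteDimensional ℝ E]

theorem hasCompactSupport_of_eqOn_zero {η : E → ℝ} {r : ℝ} (h : EqOn η 0 (ball 0 r)ᶜ) :
    HasCompactSupport η :=
  .intro (isCompact_closedBall 0 r) fun _ hx ↦ h fun hxr ↦ hx (ball_subset_closedBall hxr)

theorem laplacian_eq_sum_fderiv {ι : Type*} [Fintype ι] {P : E → ℝ} (hP : ContDiff ℝ 2 P)
    (b : OrthonormalBasis ι ℝ E) (x : E) :
    Δ P x = ∑ i, fderiv ℝ (fun y ↦ fderiv ℝ P y (b i)) x (b i) := by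
  have hd : DifferentiableAt ℝ (fderiv ℝ P) x :=
    (hP.fderiv_right (m := 1) le_rfl).differentiable one_ne_zero x
  rw [InnerProductSpace.laplacian_eq_iteratedFDeriv_orthonormalBasis P b]
  refine Finset.sum_congr rfl fun i _ ↦ ?_
  rw [iteratedFDeriv_two_apply, fderiv_clm_apply hd (differentiableAt_const _)]
  simp

theorem continuous_laplacian {P : E → ℝ} (hP : ContDiff ℝ 2 P) : Continuous (Δ P) := by
  rw [funext (laplacian_eq_sum_fderiv hP (stdOrthonormalBasis ℝ E))]
  refine continuous_finsetSum _ fun i _ ↦ ?_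
  have hi : ContDiff ℝ 1 fun y ↦ fderiv ℝ P y (stdOrthonormalBasis ℝ E i) :=
    (hP.fderiv_right le_rfl).clm_apply contDiff_const
  exact (hi.continuous_fderiv one_ne_zero).clm_apply continuous_const

variable [MeasurableSpace E] [BorelSpace E] {η : E → ℝ}

theorem integrable_inner_gradient {G : E → E} (hG : Continuous G) (hη : IsLipschitz η)
    (hc : HasCompactSupport η) : Integrable fun x ↦ ⟪G x, ∇ η x⟫ := by
  obtain ⟨K, hK⟩ := hη
  rw [← integrableOn_iff_integrable_of_support_subset (s := tsupport η)]
  · obtain ⟨C, hC⟩ := hc.isCompact.exists_bound_of_continuousOn hG.continuousOn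
    refine Measure.integrableOn_of_bounded (M := C * K) hc.isCompact.measure_lt_top.ne
      (hG.measurable.inner (measurable_gradient η)).aestronglyMeasurable ?_
    filter_upwards [ae_restrict_mem (isClosed_tsupport η).measurableSet] with x hx
    exact (norm_inner_le_norm _ _).trans <|
      mul_le_mul (hC x hx) (norm_gradient_le hK x) (norm_nonneg _) ((norm_nonneg _).trans (hC x hx))
  · intro x hx
    refine support_fderiv_subset ℝ fun h ↦ hx ?_
    simp only [gradient, h, map_zero, inner_zero_right]

theorem integral_mul_fderiv_eq_neg {g : E → ℝ} (hg : ContDiff ℝ 1 g) (hη : IsLipschitz η)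
    (hc : HasCompactSupport η) (e : E) :
    ∫ x, g x * fderiv ℝ η x e = -∫ x, fderiv ℝ g x e * η x := by
  obtain ⟨K, hK⟩ := id hη
  obtain ⟨R, hR⟩ := hc.isCompact.isBounded.subset_ball (0 : E)
  let b : ContDiffBump (0 : E) := ⟨|R| + 1, |R| + 2, by positivity, by linarith⟩
  have hb : ContDiff ℝ 1 (⇑b * g) := b.contDiff.mul hg
  obtain ⟨C, hC⟩ := hb.lipschitzWith_of_hasCompactSupport b.hasCompactSupport.mul_right one_ne_zero
  have hbg : ∀ x ∈ tsupport η, ⇑b * g =ᶠ[𝓝 x] g := fun x hx ↦ by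
    have hx' : x ∈ ball (0 : E) (|R| + 1) :=
      ball_subset_ball ((le_abs_self R).trans (le_add_of_nonneg_right zero_le_one)) (hR hx)
    filter_upwards [isOpen_ball.mem_nhds hx'] with y hy
    rw [Pi.mul_apply, b.one_of_mem_closedBall (ball_subset_closedBall hy), one_mul]
  have hleft : ∀ x, lineDeriv ℝ (⇑b * g) x e * η x = fderiv ℝ g x e * η x := fun x ↦ by
    by_cases hx : x ∈ tsupport η
    · rw [(hb.differentiable one_ne_zero x).lineDeriv_eq_fderiv, (hbg x hx).fderiv_eq]
    · rw [image_eq_zero_of_notMem_tsupport hx, mul_zero, mul_zero]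
  have hright : ∀ᵐ x, lineDeriv ℝ η x (-e) * (⇑b * g) x = -(g x * fderiv ℝ η x e) := by
    filter_upwards [hη.ae_differentiableAt] with x hx
    rw [hx.lineDeriv_eq_fderiv, map_neg]
    by_cases hxs : x ∈ tsupport η
    · rw [(hbg x hxs).self_of_nhds]; ring
    · rw [fderiv_of_notMem_tsupport ℝ hxs]; simp
  have key := hC.integral_lineDeriv_mul_eq (μ := volume) hK hc e
  rw [integral_congr_ae (.of_forall hleft), integral_congr_ae hright, integral_neg] at key
  rw [key, neg_neg]

theorem integral_inner_gradient_eq_neg_laplacian {P : E → ℝ} (hP : ContDiff ℝ 2 P)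
    (hη : IsLipschitz η) (hc : HasCompactSupport η) :
    ∫ x, ⟪∇ P x, ∇ η x⟫ = -∫ x, Δ P x * η x := by
  let b := stdOrthonormalBasis ℝ E
  have hPi : ∀ i, ContDiff ℝ 1 fun y ↦ fderiv ℝ P y (b i) := fun i ↦
    (hP.fderiv_right le_rfl).clm_apply contDiff_const
  have hinner : ∀ x, ⟪∇ P x, ∇ η x⟫ = ∑ i, fderiv ℝ P x (b i) * fderiv ℝ η x (b i) := fun x ↦ by
    rw [← b.sum_inner_mul_inner]
    simp_rw [inner_gradient_left, real_inner_comm (∇ η x), inner_gradient_left]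
  have hint : ∀ i, Integrable fun x ↦ fderiv ℝ P x (b i) * fderiv ℝ η x (b i) := fun i ↦ by
    refine (integrable_inner_gradient
      ((hPi i).continuous.smul (continuous_const (y := b i))) hη hc).congr (.of_forall fun x ↦ ?_)
    simp only [real_inner_comm (∇ η x), inner_gradient_left, Pi.smul_apply', map_smul, smul_eq_mul]
  have hint' : ∀ i, Integrable fun x ↦ fderiv ℝ (fun y ↦ fderiv ℝ P y (b i)) x (b i) * η x :=
    fun i ↦ Continuous.integrable_of_hasCompactSupport
      ((((hPi i).continuous_fderiv one_ne_zero).clm_apply continuous_const).mul hη.continuous)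
      hc.mul_left
  simp only [hinner, laplacian_eq_sum_fderiv hP b, Finset.sum_mul]
  rw [integral_finsetSum _ fun i _ ↦ hint i, integral_finsetSum _ fun i _ ↦ hint' i,
    ← Finset.sum_neg_distrib]
  exact Finset.sum_congr rfl fun i _ ↦ integral_mul_fderiv_eq_neg (hPi i) hη hc (b i)

theorem eq_zero_of_ae_gradient_eq_zero [Nontrivial E] (hη : IsLipschitz η)
    (hc : HasCompactSupport η) (hη0 : ∀ x, 0 ≤ η x) (hgrad : ∀ᵐ x, ∇ η x = 0) : η = 0 := by
  obtain ⟨e, he⟩ := exists_ne (0 : E)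
  have hzero : ∫ x, ⟪e, x⟫ * fderiv ℝ η x e = 0 := by
    refine integral_eq_zero_of_ae ?_
    filter_upwards [hgrad] with x hx
    rw [← inner_gradient_left, hx, inner_zero_left, mul_zero, Pi.zero_apply]
  have hfd : ∀ x, fderiv ℝ (fun y ↦ ⟪e, y⟫) x e = ⟪e, e⟫ := fun x ↦
    congrArg (· e) (innerSL ℝ e).fderiv
  have hlin : ContDiff ℝ 1 fun y ↦ ⟪e, y⟫ := (innerSL ℝ e).contDiff
  rw [integral_mul_fderiv_eq_neg hlin hη hc, neg_eq_zero] at hzero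
  simp only [hfd, integral_const_mul, mul_eq_zero, inner_self_eq_zero, he, false_or] at hzero
  have hint : Integrable η := hη.continuous.integrable_of_hasCompactSupport hc
  rw [integral_eq_zero_iff_of_nonneg hη0 hint] at hzero
  exact (hη.continuous.ae_eq_iff_eq volume continuous_const).1 hzero

end IntegrationByParts

section Comparison

open scoped Laplacian

variable {E : Type*} [NormedAddCommGroup E] [InnerProductSpace ℝ E] [FiniteDimensional ℝ E]
  [MeasurableSpace E] [BorelSpace E] {u v P Q F η : E → ℝ} {r c : ℝ}

theorem eq_zero_of_integral_nonneg {G : E → ℝ} (hη : Continuous η) (hη0 : ∀ x, 0 ≤ η x)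
    (hG : Integrable G) (hint : 0 ≤ ∫ x, G x) (hlt : ∀ x, 0 < η x → G x < 0)
    (hle : ∀ x, η x = 0 → G x ≤ 0) : η = 0 := by
  have hG0 : ∀ x, 0 ≤ -G x := fun x ↦ neg_nonneg.2 <|
    (hη0 x).eq_or_lt.elim (fun h ↦ hle x h.symm) fun h ↦ (hlt x h).le
  have hzero : ∫ x, -G x = 0 :=
    le_antisymm (by rw [integral_neg]; linarith) (integral_nonneg hG0)
  rw [integral_eq_zero_iff_of_nonneg hG0 hG.neg] at hzero
  refine (hη.ae_eq_iff_eq volume continuous_const).1 ?_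
  filter_upwards [hzero] with x hx
  by_contra hne
  exact (hlt x (lt_of_le_of_ne (hη0 x) (Ne.symm hne))).ne (neg_eq_zero.1 hx)

theorem integrable_inner_gradient_of_contDiff (hP : ContDiff ℝ 2 P) (hη : IsLipschitz η)
    (hc : HasCompactSupport η) : Integrable fun x ↦ ⟪∇ P x, ∇ η x⟫ :=
  integrable_inner_gradient ((LinearIsometryEquiv.continuous _).comp
    (hP.continuous_fderiv two_ne_zero)) hη hc

theorem eq_zero_of_integral_inner_gradient_nonneg (hη : IsLipschitz η) (hc : HasCompactSupport η)
    (hη0 : ∀ x, 0 ≤ η x) (hP : ContDiff ℝ 2 P) (hF : Integrable F)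
    (hint : 0 ≤ ∫ x, (c * ⟪∇ P x, ∇ η x⟫ + F x))
    (hlt : ∀ x, 0 < η x → F x < c * (Δ P x * η x)) (hle : ∀ x, η x = 0 → F x ≤ 0) : η = 0 := by
  have hΔ : Integrable fun x ↦ c * (Δ P x * η x) :=
    (((continuous_laplacian hP).mul hη.continuous).integrable_of_hasCompactSupport
      hc.mul_left).const_mul c
  refine eq_zero_of_integral_nonneg hη.continuous hη0 (hF.sub hΔ) ?_
    (fun x hx ↦ sub_neg.2 (hlt x hx)) fun x hx ↦ by simpa [hx] using hle x hx
  have hgrad := (integrable_inner_gradient_of_contDiff hP hη hc).const_mul c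
  rw [integral_add hgrad hF, integral_const_mul,
    integral_inner_gradient_eq_neg_laplacian hP hη hc] at hint
  simp only [Pi.sub_apply]
  rw [integral_sub hF hΔ, integral_const_mul]
  linarith

theorem ae_energyDensity_max_sub_le (hu : IsLipschitz u) (hu0 : ∀ x, 0 ≤ u x) (hP : IsLipschitz P)
    (hgrad : ∀ᵐ x, u x = 0 → u x < P x → 1 ≤ ‖∇ P x‖) :
    ∀ᵐ x, energyDensity (fun y ↦ max (u y) (P y)) x - energyDensity u x ≤
      2 * ⟪∇ P x, ∇ (fun y ↦ max (P y - u y) 0) x⟫ := by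
  have hη : IsLipschitz fun y ↦ max (P y - u y) 0 := (hP.sub hu).max (isLipschitz_const 0)
  filter_upwards [ae_energyDensity_eq (hu.max hP) hu, ae_energyDensity_eq (hu.max hP) hP,
    ae_gradient_eq_zero hη, ae_gradient_eq_zero hu, ae_gradient_eq hη (hP.sub hu),
    hP.ae_differentiableAt, hu.ae_differentiableAt, hgrad]
    with x hmaxu hmaxP hη0 hgradu hηeq hPx hux hgradP
  rcases le_or_gt (P x) (u x) with h | h
  · rw [hmaxu (max_eq_left h), hη0 (max_eq_right (sub_nonpos.2 h)), inner_zero_right, mul_zero,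
      sub_self]
  · have hPpos : 0 < P x := (hu0 x).trans_lt h
    rw [hmaxP (max_eq_right h.le), hηeq (max_eq_left (sub_pos.2 h).le), gradient_fun_sub hPx hux,
      inner_sub_right, real_inner_self_eq_norm_sq, energyDensity, energyDensity, if_pos hPpos]
    rcases (hu0 x).eq_or_lt with h0 | h0
    · have hgradP := hgradP h0.symm h
      rw [hgradu h0.symm, inner_zero_right, norm_zero, ← h0, if_neg (lt_irrefl 0)]
      nlinarith
    · have hsq := norm_sub_sq_real (∇ P x) (∇ u x)
      rw [if_pos h0]
      nlinarith [sq_nonneg ‖∇ P x - ∇ u x‖]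

theorem le_of_energyDiff_max_nonneg (hu : IsLipschitz u) (hu0 : ∀ x, 0 ≤ u x) (hP : IsLipschitz P)
    (hP2 : ContDiff ℝ 2 P) (hr : ∀ x ∉ ball (0 : E) r, P x ≤ u x)
    (hJ : 0 ≤ energyDiff (fun x ↦ max (u x) (P x)) u) (hΔ : ∀ x, u x < P x → 0 < Δ P x)
    (hgrad : ∀ᵐ x, u x = 0 → u x < P x → 1 ≤ ‖∇ P x‖) (x : E) : P x ≤ u x := by
  set η : E → ℝ := fun x ↦ max (P x - u x) 0 with hηdef
  have hη : IsLipschitz η := (hP.sub hu).max (isLipschitz_const 0)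
  have hcs : HasCompactSupport η :=
    hasCompactSupport_of_eqOn_zero fun x hx ↦ max_eq_right (sub_nonpos.2 (hr x hx))
  have hint : 0 ≤ ∫ x, (2 * ⟪∇ P x, ∇ η x⟫ + 0) := by
    simp only [add_zero]
    exact hJ.trans <| integral_mono_ae
      (integrable_energyDensity_sub (hu.max hP) hu fun x hx ↦ max_eq_left (hr x hx))
      ((integrable_inner_gradient_of_contDiff hP2 hη hcs).const_mul 2)
      (ae_energyDensity_max_sub_le hu hu0 hP hgrad)
  have hη0 : η = 0 := eq_zero_of_integral_inner_gradient_nonneg hη hcs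
    (fun x ↦ le_max_right _ _) hP2 (integrable_zero _ _ _) hint
    (fun x hx ↦ mul_pos two_pos (mul_pos (hΔ x (by simpa [hηdef] using hx)) hx)) fun _ _ ↦ le_rfl
  exact sub_nonpos.1 ((le_max_left (P x - u x) 0).trans_eq (congrFun hη0 x))

theorem ae_energyDensity_sub_le_of_eq_max (hu : IsLipschitz u) (hv : IsLipschitz v)
    (hvu : ∀ x, v x ≤ u x) (hQ : IsLipschitz Q)
    (hvQ : ∀ x, v x < u x → v x = max (Q x) 0) :
    ∀ᵐ x, energyDensity v x - energyDensity u x ≤ -2 * ⟪∇ Q x, ∇ (fun y ↦ u y - v y) x⟫ +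
      {x | v x < u x ∧ Q x ≤ 0}.indicator (fun x ↦ ‖∇ Q x‖ ^ 2 - 1) x := by
  filter_upwards [ae_energyDensity_eq hv hu, ae_gradient_eq hv hQ,
    ae_gradient_eq_zero (hu.sub hv), ae_gradient_eq_zero hv, hu.ae_differentiableAt,
    hv.ae_differentiableAt] with x hvu' hgradQ hgrad0 hgradv hux hvx
  rcases (hvu x).eq_or_lt with h | h
  · simp [hvu' h, hgrad0 (sub_eq_zero.2 h.symm), h]
  · have hv0 : 0 ≤ v x := by rw [hvQ x h]; exact le_max_right _ _
    rw [gradient_fun_sub hux hvx, inner_sub_right, energyDensity, energyDensity,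
      if_pos (hv0.trans_lt h)]
    have hsq := norm_sub_sq_real (∇ Q x) (∇ u x)
    have hnonneg := sq_nonneg ‖∇ Q x - ∇ u x‖
    rcases le_or_gt (Q x) 0 with hQx | hQx
    · have hvx0 : v x = 0 := (hvQ x h).trans (max_eq_right hQx)
      rw [indicator_of_mem (by exact ⟨h, hQx⟩), hgradv hvx0, hvx0, inner_zero_right,
        if_neg (lt_irrefl 0), norm_zero]
      linarith
    · have hvxQ : v x = Q x := (hvQ x h).trans (max_eq_left hQx.le)
      rw [indicator_of_notMem (fun h' ↦ hQx.not_ge h'.2), hgradQ hvxQ, hvxQ, if_pos hQx,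
        real_inner_self_eq_norm_sq]
      linarith

theorem eq_of_energyDiff_nonneg_of_eq_max (hu : IsLipschitz u) (hv : IsLipschitz v)
    (hvu : ∀ x, v x ≤ u x) (hQ : IsLipschitz Q) (hQ2 : ContDiff ℝ 2 Q)
    (hr : EqOn v u (ball 0 r)ᶜ) (hJ : 0 ≤ energyDiff v u)
    (hvQ : ∀ x, v x < u x → v x = max (Q x) 0)
    (hΔ : ∀ x, v x < u x → 0 < Q x → Δ Q x < 0)
    (hgrad : ∀ x, v x < u x → Q x ≤ 0 → 2 * Δ Q x * u x < 1 - ‖∇ Q x‖ ^ 2) : v = u := by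
  have hη : IsLipschitz fun x ↦ u x - v x := hu.sub hv
  have hcs : HasCompactSupport fun x ↦ u x - v x :=
    hasCompactSupport_of_eqOn_zero fun x hx ↦ sub_eq_zero.2 (hr hx).symm
  set S : Set E := {x | v x < u x ∧ Q x ≤ 0}
  set F : E → ℝ := S.indicator fun x ↦ ‖∇ Q x‖ ^ 2 - 1 with hF
  have hSmeas : MeasurableSet S := (measurableSet_lt hv.continuous.measurable
    hu.continuous.measurable).inter (measurableSet_le hQ.continuous.measurable measurable_const)
  have hSball : S ⊆ ball 0 r := fun x hx ↦ by_contra fun h ↦ hx.1.ne (hr h)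
  have hFi : Integrable F := by
    have hcont : Continuous fun x ↦ ‖∇ Q x‖ ^ 2 - 1 := by
      simp only [norm_gradient]
      exact ((hQ2.continuous_fderiv two_ne_zero).norm.pow 2).sub continuous_const
    refine (IntegrableOn.mono_set ?_ (hSball.trans ball_subset_closedBall)).integrable_indicator
      hSmeas
    exact hcont.continuousOn.integrableOn_compact (isCompact_closedBall 0 r)
  have hint := hJ.trans <| integral_mono_ae (integrable_energyDensity_sub hv hu hr)
    (((integrable_inner_gradient_of_contDiff hQ2 hη hcs).const_mul (-2)).add hFi)
    (ae_energyDensity_sub_le_of_eq_max hu hv hvu hQ hvQ)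
  have hη0 := eq_zero_of_integral_inner_gradient_nonneg hη hcs
    (fun x ↦ sub_nonneg.2 (hvu x)) hQ2 hFi hint (fun x hx ↦ ?_) fun x hx ↦ ?_
  · exact funext fun x ↦ (sub_eq_zero.1 (congrFun hη0 x)).symm
  · have hlt : v x < u x := sub_pos.1 hx
    rcases le_or_gt (Q x) 0 with hQx | hQx
    · rw [hF, indicator_of_mem (by exact ⟨hlt, hQx⟩), hvQ x hlt, max_eq_right hQx]
      linarith [hgrad x hlt hQx]
    · rw [hF, indicator_of_notMem fun h ↦ hQx.not_ge h.2]
      nlinarith [hΔ x hlt hQx]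
  · rw [hF, indicator_of_notMem fun h ↦ (sub_pos.2 h.1).ne' hx]

end Comparison

section Gluing

theorem inter_frontier_nonempty {X : Type*} [TopologicalSpace X] {s t : Set X}
    (ht : IsPreconnected t) (hs : (t ∩ s).Nonempty) (hsc : (t ∩ sᶜ).Nonempty) :
    (t ∩ frontier s).Nonempty := by
  by_contra hempty
  have hmem : ∀ x ∈ t, x ∈ interior s ∪ interior sᶜ := fun x hx ↦ by
    rw [← compl_frontier_eq_union_interior]
    exact fun h ↦ hempty ⟨x, hx, h⟩
  obtain ⟨x, hxt, hxs⟩ := hs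
  obtain ⟨y, hyt, hys⟩ := hsc
  obtain ⟨z, -, hz, hzc⟩ := ht _ _ isOpen_interior isOpen_interior hmem
    ⟨x, hxt, (hmem x hxt).resolve_right fun h ↦ interior_subset h hxs⟩
    ⟨y, hyt, (hmem y hyt).resolve_left fun h ↦ hys (interior_subset h)⟩
  exact interior_subset hzc (interior_subset hz)

variable {E X : Type*} [SeminormedAddCommGroup E] [NormedSpace ℝ E] [PseudoMetricSpace X]
  {f g : E → X} {K : ℝ≥0} {s : Set E}

theorem dist_le_mul_of_eqOn_frontier (hf : LipschitzWith K f) (hg : LipschitzWith K g)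
    (h : EqOn f g (frontier s)) {x y : E} (hx : x ∈ s) (hy : y ∉ s) :
    dist (f x) (g y) ≤ K * dist x y := by
  obtain ⟨z, hz, hzs⟩ := inter_frontier_nonempty (convex_segment x y).isPreconnected
    ⟨x, left_mem_segment ℝ x y, hx⟩ ⟨y, right_mem_segment ℝ x y, hy⟩
  calc dist (f x) (g y) ≤ dist (f x) (f z) + dist (f z) (g y) := dist_triangle _ _ _
    _ ≤ K * dist x z + K * dist z y := by
        rw [h hzs]
        exact add_le_add ((h hzs ▸ hf.dist_le_mul x z)) (hg.dist_le_mul z y)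
    _ = K * dist x y := by rw [← mul_add, dist_add_dist_of_mem_segment hz]

theorem lipschitzWith_piecewise [∀ x, Decidable (x ∈ s)] (hf : LipschitzWith K f)
    (hg : LipschitzWith K g) (h : EqOn f g (frontier s)) : LipschitzWith K (s.piecewise f g) := by
  refine .of_dist_le_mul fun x y ↦ ?_
  by_cases hx : x ∈ s <;> by_cases hy : y ∈ s <;>
    simp only [hx, hy, not_false_eq_true, piecewise_eq_of_mem, piecewise_eq_of_notMem]
  · exact hf.dist_le_mul x y
  · exact dist_le_mul_of_eqOn_frontier hf hg h hx hy
  · rw [dist_comm, dist_comm x]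
    exact dist_le_mul_of_eqOn_frontier hf hg h hy hx
  · exact hg.dist_le_mul x y

theorem isLipschitz_piecewise {u v : E → ℝ} [∀ x, Decidable (x ∈ s)] (hu : IsLipschitz u)
    (hv : IsLipschitz v) (h : EqOn u v (frontier s)) : IsLipschitz (s.piecewise u v) :=
  let ⟨_, hK⟩ := hu
  let ⟨_, hL⟩ := hv
  ⟨_, lipschitzWith_piecewise (hK.weaken (le_max_left _ _)) (hL.weaken (le_max_right _ _)) h⟩

end Gluing

section GaussianBarrier

open scoped Laplacian
open Module Real

variable {E : Type*} [NormedAddCommGroup E] {A β s : ℝ} {p x : E}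

/-- The Gaussian barrier of amplitude `A` and concentration `β` centred at `p`, normalized to vanish
on the sphere of radius `s`. It is subharmonic (for `A > 0`) away from its centre and its gradient
can be made large near that sphere. -/
noncomputable def gaussianBarrier (A β s : ℝ) (p x : E) : ℝ :=
  A * (exp (-(β * ‖x - p‖ ^ 2)) - exp (-(β * s ^ 2)))

theorem gaussianBarrier_nonpos_iff (hA : 0 < A) (hβ : 0 < β) (hs : 0 ≤ s) :
    gaussianBarrier A β s p x ≤ 0 ↔ s ≤ ‖x - p‖ := by
  rw [gaussianBarrier, ← not_lt, mul_pos_iff_of_pos_left hA, not_lt, sub_nonpos, exp_le_exp,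
    neg_le_neg_iff, mul_le_mul_iff_right₀ hβ, pow_le_pow_iff_left₀ hs (norm_nonneg _) two_ne_zero]

theorem gaussianBarrier_neg_nonpos_iff (hA : 0 < A) (hβ : 0 < β) (hs : 0 ≤ s) :
    gaussianBarrier (-A) β s p x ≤ 0 ↔ ‖x - p‖ ≤ s := by
  rw [gaussianBarrier, neg_mul, neg_nonpos, mul_nonneg_iff_of_pos_left hA, sub_nonneg, exp_le_exp,
    neg_le_neg_iff, mul_le_mul_iff_right₀ hβ, pow_le_pow_iff_left₀ (norm_nonneg _) hs two_ne_zero]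

theorem gaussianBarrier_le (hA : 0 ≤ A) (hβ : 0 ≤ β) : gaussianBarrier A β s p x ≤ A := by
  refine mul_le_of_le_one_right hA ((sub_le_self _ (exp_pos _).le).trans ?_)
  exact exp_le_one_iff.2 (neg_nonpos.2 (by positivity))

variable [InnerProductSpace ℝ E]

theorem contDiff_gaussianBarrier : ContDiff ℝ 2 (gaussianBarrier A β s p) := by
  unfold gaussianBarrier
  exact contDiff_const.mul ((((contDiff_id.sub contDiff_const).norm_sq ℝ).const_smul β).neg.exp.sub
    contDiff_const)

theorem hasFDerivAt_gaussianBarrier (A β s : ℝ) (p x : E) :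
    HasFDerivAt (gaussianBarrier A β s p)
      ((-(2 * A * β * exp (-(β * ‖x - p‖ ^ 2)))) • innerSL ℝ (x - p)) x := by
  have hsq := ((hasFDerivAt_id x).sub_const p).norm_sq
  refine (((hsq.const_mul β).neg.exp.sub_const (exp (-(β * s ^ 2)))).const_mul A).congr_fderiv ?_
  ext e
  simp
  ring

theorem fderiv_gaussianBarrier_apply (A β s : ℝ) (p x e : E) :
    fderiv ℝ (gaussianBarrier A β s p) x e =
      gaussianBarrier (-(2 * A * β)) β 0 p x * ⟪x - p, e⟫ - 2 * A * β * ⟪x - p, e⟫ := by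
  simp only [(hasFDerivAt_gaussianBarrier A β s p x).fderiv, smul_apply, innerSL_apply_apply,
    smul_eq_mul, gaussianBarrier, zero_pow two_ne_zero, mul_zero, neg_zero, exp_zero]
  ring

theorem fderiv_fderiv_gaussianBarrier (A β s : ℝ) (p x e : E) :
    fderiv ℝ (fun y ↦ fderiv ℝ (gaussianBarrier A β s p) y e) x e =
      2 * A * β * exp (-(β * ‖x - p‖ ^ 2)) * (2 * β * ⟪x - p, e⟫ ^ 2 - ‖e‖ ^ 2) := by
  have hinner : HasFDerivAt (fun y ↦ ⟪y - p, e⟫) (innerSL ℝ e) x :=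
    ((innerSL ℝ e).hasFDerivAt.sub_const ⟪e, p⟫).congr_of_eventuallyEq <| .of_forall fun y ↦ by
      simp [real_inner_comm e, inner_sub_right]
  simp only [fderiv_gaussianBarrier_apply]
  rw [(((hasFDerivAt_gaussianBarrier (-(2 * A * β)) β 0 p x).fun_mul hinner).fun_sub
    (hinner.const_mul _)).fderiv]
  simp [gaussianBarrier, inner_sub_left]
  ring

section Complete

variable [CompleteSpace E]

theorem norm_gradient_gaussianBarrier (hβ : 0 ≤ β) :
    ‖∇ (gaussianBarrier A β s p) x‖ = |A| * (2 * β * exp (-(β * ‖x - p‖ ^ 2)) * ‖x - p‖) := by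
  rw [norm_gradient, (hasFDerivAt_gaussianBarrier A β s p x).fderiv, norm_smul, innerSL_apply_norm,
    norm_neg, norm_mul, norm_mul, norm_mul, norm_of_nonneg hβ, norm_of_nonneg (exp_pos _).le,
    norm_of_nonneg zero_le_two, norm_eq_abs]
  ring

theorem lipschitzWith_gaussianBarrier (hβ : 0 ≤ β) :
    LipschitzWith (|A| * √β).toNNReal (gaussianBarrier A β s p) := by
  refine lipschitzWith_of_nnnorm_fderiv_le (𝕜 := ℝ)
    (fun x ↦ (hasFDerivAt_gaussianBarrier A β s p x).differentiableAt) fun x ↦ ?_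
  rw [← NNReal.coe_le_coe, coe_nnnorm, ← norm_gradient, norm_gradient_gaussianBarrier hβ,
    coe_toNNReal _ (by positivity)]
  have hsq : (√β * ‖x - p‖) ^ 2 = β * ‖x - p‖ ^ 2 := by rw [mul_pow, Real.sq_sqrt hβ]
  have hexp : 2 * (√β * ‖x - p‖) ≤ exp (β * ‖x - p‖ ^ 2) := by
    rw [← hsq]
    nlinarith [add_one_le_exp ((√β * ‖x - p‖) ^ 2), sq_nonneg (√β * ‖x - p‖ - 1)]
  gcongr |A| * ?_
  calc 2 * β * exp (-(β * ‖x - p‖ ^ 2)) * ‖x - p‖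
      = √β * (2 * (√β * ‖x - p‖)) * exp (-(β * ‖x - p‖ ^ 2)) := by
        linear_combination -(2 * ‖x - p‖ * exp (-(β * ‖x - p‖ ^ 2))) * Real.sq_sqrt hβ
    _ ≤ √β * exp (β * ‖x - p‖ ^ 2) * exp (-(β * ‖x - p‖ ^ 2)) := by gcongr
    _ = √β := by rw [mul_assoc, ← exp_add, add_neg_cancel, exp_zero, mul_one]

end Complete

variable [FiniteDimensional ℝ E]

theorem laplacian_gaussianBarrier : Δ (gaussianBarrier A β s p) x =
    2 * A * β * exp (-(β * ‖x - p‖ ^ 2)) * (2 * β * ‖x - p‖ ^ 2 - finrank ℝ E) := by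
  rw [laplacian_eq_sum_fderiv contDiff_gaussianBarrier (stdOrthonormalBasis ℝ E)]
  simp only [fderiv_fderiv_gaussianBarrier, OrthonormalBasis.norm_eq_one, ← Finset.mul_sum,
    Finset.sum_sub_distrib, OrthonormalBasis.sum_sq_inner_left]
  simp

theorem laplacian_gaussianBarrier_pos (hA : 0 < A) (hβ : 0 < β)
    (h : (finrank ℝ E : ℝ) < 2 * β * ‖x - p‖ ^ 2) : 0 < Δ (gaussianBarrier A β s p) x := by
  rw [laplacian_gaussianBarrier]
  have := sub_pos.2 h
  positivity

theorem laplacian_gaussianBarrier_neg (hA : A < 0) (hβ : 0 < β)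
    (h : (finrank ℝ E : ℝ) < 2 * β * ‖x - p‖ ^ 2) : Δ (gaussianBarrier A β s p) x < 0 := by
  rw [laplacian_gaussianBarrier]
  have := sub_pos.2 h
  have := exp_pos (-(β * ‖x - p‖ ^ 2))
  exact mul_neg_of_neg_of_pos (by nlinarith [mul_pos hβ this]) ‹_›

end GaussianBarrier

section EquiLipschitz

variable {ι X : Type*} [PseudoMetricSpace X] {K : ℝ≥0}

theorem lipschitzWith_of_tendsto {l : Filter ι} [l.NeBot] {f : ι → X → ℝ} {g : X → ℝ}
    (hf : ∀ i, LipschitzWith K (f i)) (h : Tendsto f l (𝓝 g)) : LipschitzWith K g :=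
  .of_dist_le_mul fun x y ↦ le_of_tendsto
    ((tendsto_pi_nhds.1 h x).dist (tendsto_pi_nhds.1 h y))
    (.of_forall fun i ↦ (hf i).dist_le_mul x y)

variable [ProperSpace X]

theorem eventually_abs_sub_le_of_tendsto {l : Filter ι} {f : ι → X → ℝ} {g : X → ℝ}
    (hf : ∀ i, LipschitzWith K (f i)) (h : Tendsto f l (𝓝 g)) (x₀ : X) (r : ℝ) {ε : ℝ}
    (hε : 0 < ε) : ∀ᶠ i in l, ∀ x ∈ closedBall x₀ r, |f i x - g x| ≤ ε := by
  have hequi : Equicontinuous f := (LipschitzWith.uniformEquicontinuous f K hf).equicontinuous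
  have hunif := UniformOnFun.tendsto_iff_tendstoUniformlyOn.1
    ((EquicontinuousOn.tendsto_uniformOnFun_iff_pi (𝔖 := {s : Set X | IsCompact s}) (fun _ ↦ id)
      (sUnion_eq_univ_iff.2 fun x ↦ ⟨{x}, isCompact_singleton, rfl⟩)
      (fun s _ ↦ hequi.equicontinuousOn s) l g).2 h) _ (isCompact_closedBall x₀ r)
  filter_upwards [Metric.tendstoUniformlyOn_iff.1 hunif ε hε] with i hi x hx
  rw [← Real.dist_eq, dist_comm]
  exact (hi x hx).le

theorem exists_subseq_tendsto_of_lipschitzWith {f : ℕ → X → ℝ} (hf : ∀ k, LipschitzWith K (f k))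
    (x₀ : X) {M : ℝ} (hM : ∀ k, |f k x₀| ≤ M) :
    ∃ (φ : ℕ → ℕ) (g : X → ℝ), StrictMono φ ∧ Tendsto (f ∘ φ) atTop (𝓝 g) := by
  let S : Set C(X, ℝ) := {h | LipschitzWith K h ∧ |h x₀| ≤ M}
  have hS : IsCompact (ContinuousMap.toFun '' S) := by
    have himage : ContinuousMap.toFun '' S = {h : X → ℝ | LipschitzWith K h ∧ |h x₀| ≤ M} :=
      Subset.antisymm (image_subset_iff.2 fun h hh ↦ hh)
        fun h hh ↦ ⟨⟨h, hh.1.continuous⟩, hh, rfl⟩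
    have hclosed : IsClosed {h : X → ℝ | LipschitzWith K h ∧ |h x₀| ≤ M} := by
      simp only [lipschitzWith_iff_dist_le_mul, ofPred_and, ofPred_forall]
      refine .inter (isClosed_iInter fun x ↦ isClosed_iInter fun y ↦ isClosed_le ?_ ?_)
        (isClosed_le ?_ ?_) <;> fun_prop
    rw [himage]
    refine (isCompact_univ_pi fun x ↦ isCompact_Icc).of_isClosed_subset (s :=
      univ.pi fun x ↦ Icc (-(M + K * dist x x₀)) (M + K * dist x x₀)) hclosed fun h hh x _ ↦ ?_
    have hdist := hh.1.dist_le_mul x x₀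
    rw [Real.dist_eq] at hdist
    exact abs_le.1 (by linarith [abs_sub_abs_le_abs_sub (h x) (h x₀), hh.2])
  have hequi : Equicontinuous ((↑) : S → X → ℝ) :=
    (LipschitzWith.uniformEquicontinuous _ K fun h : S ↦ h.2.1).equicontinuous
  obtain ⟨g, -, φ, hφ, hg⟩ := (ArzelaAscoli.isCompact_of_equicontinuous S hS hequi).tendsto_subseq
    (x := fun k ↦ ⟨f k, (hf k).continuous⟩) fun k ↦ ⟨hf k, hM k⟩
  exact ⟨φ, g, hφ, tendsto_pi_nhds.2 fun x ↦ ((continuous_eval_const x).tendsto g).comp hg⟩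

end EquiLipschitz

section LowerSemicontinuity

variable {E : Type*} [NormedAddCommGroup E] [InnerProductSpace ℝ E] {K : ℝ≥0}

theorem abs_fderiv_apply_le {u : E → ℝ} (hu : LipschitzWith K u) (x e : E) :
    |fderiv ℝ u x e| ≤ K * ‖e‖ :=
  (fderiv ℝ u x).le_of_opNorm_le (norm_fderiv_le_of_lipschitz ℝ hu) e

variable [FiniteDimensional ℝ E] [MeasurableSpace E] [BorelSpace E]

theorem tendsto_integral_mul_fderiv_of_contDiff {ψ : E → ℝ} (hψ : ContDiff ℝ 1 ψ)
    (hc : HasCompactSupport ψ) {f : ℕ → E → ℝ} (hf : ∀ k, LipschitzWith K (f k))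
    (h : Tendsto f atTop (𝓝 0)) (e : E) :
    Tendsto (fun k ↦ ∫ x, ψ x * fderiv ℝ (f k) x e) atTop (𝓝 0) := by
  obtain ⟨C, hC⟩ := hψ.lipschitzWith_of_hasCompactSupport hc one_ne_zero
  have hparts : ∀ k, ∫ x, ψ x * fderiv ℝ (f k) x e = ∫ x, fderiv ℝ ψ x (-e) * f k x := fun k ↦ by
    rw [← integral_congr_ae (.of_forall fun x ↦ congrArg (· * f k x)
      ((hψ.differentiable one_ne_zero x).lineDeriv_eq_fderiv (v := -e))),
      ← LipschitzWith.integral_lineDeriv_mul_eq (hf k) hC hc e]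
    refine integral_congr_ae ?_
    filter_upwards [(hf k).ae_differentiableAt] with x hx
    rw [hx.lineDeriv_eq_fderiv, mul_comm]
  simp only [hparts]
  have hdcont : Continuous fun x ↦ fderiv ℝ ψ x (-e) :=
    (hψ.continuous_fderiv one_ne_zero).clm_apply continuous_const
  have hdc : HasCompactSupport fun x ↦ fderiv ℝ ψ x (-e) := hc.fderiv_apply ℝ (-e)
  obtain ⟨M, hM⟩ := (tendsto_pi_nhds.1 h 0).abs.bddAbove_range
  have hbound : ∀ k x, ‖fderiv ℝ ψ x (-e) * f k x‖ ≤ ‖fderiv ℝ ψ x (-e) * (M + K * ‖x‖)‖ := by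
    intro k x
    have h0 : |f k 0| ≤ M := hM (mem_range_self k)
    have hx := (hf k).dist_le_mul x 0
    rw [Real.dist_eq, dist_zero_right] at hx
    rw [norm_mul, norm_mul]
    refine mul_le_mul_of_nonneg_left ((Real.norm_eq_abs _).trans_le ?_) (norm_nonneg _)
    exact le_trans (by linarith [abs_sub_abs_le_abs_sub (f k x) (f k 0)]) (le_abs_self _)
  simpa using tendsto_integral_of_dominated_convergence (f := fun x ↦ fderiv ℝ ψ x (-e) * 0) _
    (fun k ↦ (hdcont.mul (hf k).continuous).aestronglyMeasurable)
    ((hdcont.mul (by fun_prop)).integrable_of_hasCompactSupport hdc.mul_right).norm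
    (fun k ↦ .of_forall (hbound k))
    (.of_forall fun x ↦ (tendsto_pi_nhds.1 h x).const_mul _)

theorem integrable_mul_fderiv {φ u : E → ℝ} (hφ : Integrable φ) (hu : LipschitzWith K u) (e : E) :
    Integrable fun x ↦ φ x * fderiv ℝ u x e :=
  hφ.mul_bdd (measurable_fderiv_apply_const ℝ u e).aestronglyMeasurable
    (.of_forall fun x ↦ abs_fderiv_apply_le hu x e)

theorem tendsto_integral_mul_fderiv {φ : E → ℝ} (hφ : Integrable φ) {f : ℕ → E → ℝ}
    (hf : ∀ k, LipschitzWith K (f k)) (h : Tendsto f atTop (𝓝 0)) (e : E) :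
    Tendsto (fun k ↦ ∫ x, φ x * fderiv ℝ (f k) x e) atTop (𝓝 0) := by
  rw [Metric.tendsto_nhds]
  intro ε hε
  have hδ : 0 < ε / (2 * (K * ‖e‖ + 1)) := by positivity
  obtain ⟨ψ, hc, hψ, hφψ⟩ :=
    (memLp_one_iff_integrable.2 hφ).exist_eLpNorm_sub_le one_ne_top le_rfl hδ
  have hψi : Integrable ψ := hψ.continuous.integrable_of_hasCompactSupport hc
  have hL1 : ∫ x, ‖(φ - ψ) x‖ ≤ ε / (2 * (K * ‖e‖ + 1)) := by
    rw [integral_norm_eq_lintegral_enorm (hφ.sub hψi).1, ← eLpNorm_one_eq_lintegral_enorm]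
    exact toReal_le_of_le_ofReal hδ.le hφψ
  have happrox : ∀ k, |∫ x, (φ - ψ) x * fderiv ℝ (f k) x e| ≤ ε / 2 := fun k ↦
    calc |∫ x, (φ - ψ) x * fderiv ℝ (f k) x e| ≤ ∫ x, ‖(φ - ψ) x‖ * (K * ‖e‖) :=
          norm_integral_le_of_norm_le ((hφ.sub hψi).norm.mul_const _) <| .of_forall fun x ↦
            (norm_mul _ _).trans_le <|
              mul_le_mul_of_nonneg_left (abs_fderiv_apply_le (hf k) x e) (norm_nonneg _)
      _ ≤ ε / (2 * (K * ‖e‖ + 1)) * (K * ‖e‖ + 1) := by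
          rw [integral_mul_const]
          gcongr
          linarith
      _ = ε / 2 := by field_simp
  have hsmooth := tendsto_integral_mul_fderiv_of_contDiff (hψ.of_le (by simp)) hc hf h e
  filter_upwards [Metric.tendsto_nhds.1 hsmooth (ε / 2) (half_pos hε)] with k hk
  have hsplit : ∫ x, φ x * fderiv ℝ (f k) x e
      = (∫ x, (φ - ψ) x * fderiv ℝ (f k) x e) + ∫ x, ψ x * fderiv ℝ (f k) x e := by
    rw [← integral_add (integrable_mul_fderiv (hφ.sub hψi) (hf k) e)
      (integrable_mul_fderiv hψi (hf k) e)]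
    simp only [Pi.sub_apply, sub_mul, sub_add_cancel]
  rw [Real.dist_eq, sub_zero] at hk ⊢
  rw [hsplit]
  linarith [abs_add_le (∫ x, (φ - ψ) x * fderiv ℝ (f k) x e) (∫ x, ψ x * fderiv ℝ (f k) x e),
    happrox k]

theorem tendsto_setIntegral_inner_gradient {u : E → ℝ} (hu : IsLipschitz u) {f : ℕ → E → ℝ}
    (hf : ∀ k, LipschitzWith K (f k)) (h : Tendsto f atTop (𝓝 0)) (r : ℝ) :
    Tendsto (fun k ↦ ∫ x in ball 0 r, ⟪∇ u x, ∇ (f k) x⟫) atTop (𝓝 0) := by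
  obtain ⟨L, hL⟩ := hu
  let b := stdOrthonormalBasis ℝ E
  let φ i : E → ℝ := (ball 0 r).indicator fun x ↦ fderiv ℝ u x (b i)
  have hφ : ∀ i, Integrable (φ i) := fun i ↦ (integrable_indicator_iff measurableSet_ball).2 <|
    Measure.integrableOn_of_bounded measure_ball_lt_top.ne
      (measurable_fderiv_apply_const ℝ u _).aestronglyMeasurable
      (.of_forall fun x ↦ abs_fderiv_apply_le hL x (b i))
  have hexpand : ∀ k, ∫ x in ball 0 r, ⟪∇ u x, ∇ (f k) x⟫
      = ∑ i, ∫ x, φ i x * fderiv ℝ (f k) x (b i) := fun k ↦ by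
    rw [← integral_finsetSum _ fun i _ ↦ integrable_mul_fderiv (hφ i) (hf k) (b i),
      ← integral_indicator measurableSet_ball]
    refine integral_congr_ae (.of_forall fun x ↦ ?_)
    by_cases hx : x ∈ ball (0 : E) r
    · rw [indicator_of_mem hx, ← b.sum_inner_mul_inner]
      simp only [φ, indicator_of_mem hx, inner_gradient_left, ← real_inner_comm (b _) (∇ (f k) x)]
    · simp only [φ, indicator_of_notMem hx, zero_mul, Finset.sum_const_zero]
  simp only [hexpand]
  simpa using tendsto_finsetSum Finset.univ fun i _ ↦
    tendsto_integral_mul_fderiv (hφ i) hf h (b i)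

theorem tendsto_setIntegral_indicator_nonpos {f : ℕ → E → ℝ} {g : E → ℝ}
    (hf : ∀ k, Continuous (f k)) (hg : Continuous g) (h : Tendsto f atTop (𝓝 g)) (r : ℝ) :
    Tendsto (fun k ↦ ∫ x in ball 0 r, {x | 0 < g x ∧ f k x ≤ 0}.indicator 1 x) atTop
      (𝓝 (0 : ℝ)) := by
  have hmeas : ∀ k, MeasurableSet {x | 0 < g x ∧ f k x ≤ 0} := fun k ↦
    (measurableSet_lt measurable_const hg.measurable).inter
      (measurableSet_le (hf k).measurable measurable_const)
  simpa using tendsto_integral_of_dominated_convergence (μ := volume.restrict (ball (0 : E) r))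
    (F := fun k ↦ {x | 0 < g x ∧ f k x ≤ 0}.indicator 1) (f := fun _ ↦ (0 : ℝ)) (fun _ ↦ 1)
    (fun k ↦ (measurable_one.indicator (hmeas k)).aestronglyMeasurable)
    (integrableOn_const measure_ball_lt_top.ne)
    (fun k ↦ .of_forall fun x ↦ by
      simpa using norm_indicator_le_norm_self (1 : E → ℝ) x (s := {x | 0 < g x ∧ f k x ≤ 0}))
    (.of_forall fun x ↦ tendsto_const_nhds.congr' <| by
      by_cases hx : 0 < g x
      · filter_upwards [(tendsto_pi_nhds.1 h x).eventually_const_lt hx] with k hk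
        exact (indicator_of_notMem (fun hmem ↦ hk.not_ge hmem.2) _).symm
      · filter_upwards with k
        exact (indicator_of_notMem (fun hmem ↦ hx hmem.1) _).symm)

theorem eventually_setIntegral_energyDensity_le {f : ℕ → E → ℝ} {g : E → ℝ}
    (hf : ∀ k, LipschitzWith K (f k)) (h : Tendsto f atTop (𝓝 g)) (r : ℝ) {δ : ℝ} (hδ : 0 < δ) :
    ∀ᶠ k in atTop,
      ∫ x in ball 0 r, energyDensity g x ≤ (∫ x in ball 0 r, energyDensity (f k) x) + δ := by
  have hg : LipschitzWith K g := lipschitzWith_of_tendsto hf h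
  have hdiff : ∀ k, LipschitzWith (K + K) fun x ↦ f k x - g x := fun k ↦ (hf k).sub hg
  have hlim := ((tendsto_setIntegral_inner_gradient ⟨K, hg⟩ hdiff
    (by simpa using! h.sub_const g) r).const_mul 2).sub
    (tendsto_setIntegral_indicator_nonpos (fun k ↦ (hf k).continuous) hg.continuous h r)
  filter_upwards [hlim.eventually_const_lt (u := -δ) (by linarith)] with k hk
  have hinner : IntegrableOn (fun x ↦ 2 * ⟪∇ g x, ∇ (fun y ↦ f k y - g y) x⟫) (ball 0 r) := by
    refine Integrable.const_mul (Measure.integrableOn_of_bounded (M := K * (K + K : ℝ≥0))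
      measure_ball_lt_top.ne
      ((measurable_gradient _).inner (measurable_gradient _)).aestronglyMeasurable
      (.of_forall fun x ↦ (norm_inner_le_norm (𝕜 := ℝ) _ _).trans ?_)) 2
    exact mul_le_mul (norm_gradient_le hg x) (norm_gradient_le (hdiff k) x) (norm_nonneg _) K.2
  have hind : IntegrableOn ({x | 0 < g x ∧ f k x ≤ 0}.indicator (1 : E → ℝ)) (ball 0 r) :=
    (integrableOn_const measure_ball_lt_top.ne).indicator
      ((measurableSet_lt measurable_const hg.continuous.measurable).inter
        (measurableSet_le (hf k).continuous.measurable measurable_const))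
  have hgi := integrableOn_energyDensity ⟨K, hg⟩ 0 r
  have hmono := setIntegral_mono_ae ((hgi.add hinner).sub hind)
    (integrableOn_energyDensity ⟨K, hf k⟩ 0 r) <| by
      filter_upwards [hg.ae_differentiableAt, (hf k).ae_differentiableAt] with x h1 h2
      exact energyDensity_add_inner_le h1 h2
  rw [integral_sub' (hgi.add hinner) hind, integral_add' hgi hinner, integral_const_mul] at hmono
  linarith

end LowerSemicontinuity

section ObstacleProblem

variable {K L : ℝ≥0}

section PseudoMetricSpace

variable {X : Type*} [PseudoMetricSpace X] {u v w lo hi : X → ℝ}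

theorem lipschitzWith_midpoint_add (hu : LipschitzWith K u) (hw : LipschitzWith K w) (c : ℝ) :
    LipschitzWith K fun x ↦ (u x + w x + c) / 2 := .of_dist_le_mul fun x y ↦ by
  have hux := hu.dist_le_mul x y
  have hwx := hw.dist_le_mul x y
  rw [Real.dist_eq, abs_le] at *
  constructor <;> linarith

theorem IsLipschitz.midpoint_add (hu : IsLipschitz u) (hw : IsLipschitz w) (c : ℝ) :
    IsLipschitz fun x ↦ (u x + w x + c) / 2 :=
  let ⟨_, hK⟩ := hu
  let ⟨_, hL⟩ := hw
  ⟨_, lipschitzWith_midpoint_add (hK.weaken (le_max_left _ _)) (hL.weaken (le_max_right _ _)) c⟩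

/-- The admissible class of the obstacle problem: `K`-Lipschitz functions between the lower
obstacle `lo` and the upper obstacle `hi`. The Lipschitz bound is built in so that a minimizer
exists by compactness. -/
def lipschitzBetween (K : ℝ≥0) (lo hi : X → ℝ) : Set (X → ℝ) :=
  {v | LipschitzWith K v ∧ v ∈ Icc lo hi}

theorem eqOn_of_mem_lipschitzBetween {s : Set X} (hs : EqOn lo hi s)
    (hu : u ∈ lipschitzBetween K lo hi) (hv : v ∈ lipschitzBetween L lo hi) : EqOn u v s :=
  fun x hx ↦ le_antisymm ((hu.2.2 x).trans ((hs hx).ge.trans (hv.2.1 x)))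
    ((hv.2.2 x).trans ((hs hx).ge.trans (hu.2.1 x)))

end PseudoMetricSpace

theorem lipschitzWith_comp_add_right {G : Type*} [SeminormedAddCommGroup G] {u : G → ℝ}
    (hu : LipschitzWith K u) (h : G) : LipschitzWith K fun x ↦ u (x + h) :=
  .of_dist_le_mul fun x y ↦ by simpa only [dist_add_right] using hu.dist_le_mul (x + h) (y + h)

variable {E : Type*} [NormedAddCommGroup E] [InnerProductSpace ℝ E] [FiniteDimensional ℝ E]
  {u w lo hi : E → ℝ} {Λ : ℝ≥0} {c r : ℝ}

theorem gradient_midpoint_add {x : E} (hu : DifferentiableAt ℝ u x) (hw : DifferentiableAt ℝ w x)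
    (c : ℝ) : ∇ (fun y ↦ (u y + w y + c) / 2) x = (2⁻¹ : ℝ) • (∇ u x + ∇ w x) := by
  simp only [div_eq_inv_mul]
  rw [gradient_const_mul _ ((hu.fun_add hw).add_const c), ← gradient_fun_add hu hw]
  simp only [gradient, fderiv_add_const]

variable [MeasurableSpace E] [BorelSpace E]

theorem energyDiff_comp_add_right (u v : E → ℝ) (h : E) :
    energyDiff (fun x ↦ u (x + h)) (fun x ↦ v (x + h)) = energyDiff u v := by
  simp only [energyDiff, energyDensity, gradient, fderiv_comp_add_right]
  exact integral_add_right_eq_self (fun x ↦ energyDensity u x - energyDensity v x) h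

/-- `u` minimizes the energy among the `K`-Lipschitz functions between two obstacles. -/
structure IsObstacleMinimizer (K : ℝ≥0) (lo hi u : E → ℝ) : Prop where
  mem : u ∈ lipschitzBetween K lo hi
  energyDiff_nonneg : ∀ v ∈ lipschitzBetween K lo hi, 0 ≤ energyDiff v u

theorem exists_isObstacleMinimizer (hlo : LipschitzWith K lo) (hle : lo ≤ hi)
    (heq : EqOn lo hi (ball 0 r)ᶜ) : ∃ u, IsObstacleMinimizer K lo hi u := by
  let J (v : E → ℝ) : ℝ := ∫ x in ball 0 r, energyDensity v x
  have hne : (J '' lipschitzBetween K lo hi).Nonempty := ⟨_, lo, ⟨hlo, le_rfl, hle⟩, rfl⟩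
  have hbdd : BddBelow (J '' lipschitzBetween K lo hi) := ⟨0, by
    rintro _ ⟨v, -, rfl⟩
    exact integral_nonneg (energyDensity_nonneg v)⟩
  obtain ⟨s, -, hs, hmem⟩ := exists_seq_tendsto_sInf hne hbdd
  choose f hf hfs using hmem
  obtain ⟨φ, g, hφ, hg⟩ := exists_subseq_tendsto_of_lipschitzWith (fun k ↦ (hf k).1) 0
    fun k ↦ abs_le_max_abs_abs ((hf k).2.1 0) ((hf k).2.2 0)
  have hgmem : g ∈ lipschitzBetween K lo hi :=
    ⟨lipschitzWith_of_tendsto (fun k ↦ (hf (φ k)).1) hg,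
      isClosed_Icc.mem_of_tendsto hg (.of_forall fun k ↦ (hf (φ k)).2)⟩
  have hgmin : J g ≤ sInf (J '' lipschitzBetween K lo hi) := by
    refine le_of_forall_pos_le_add fun δ hδ ↦ ?_
    obtain ⟨k, hlsc, hk⟩ := ((eventually_setIntegral_energyDensity_le (fun k ↦ (hf (φ k)).1) hg r
      (half_pos hδ)).and ((hs.comp hφ.tendsto_atTop).eventually_lt_const
        (lt_add_of_pos_right _ (half_pos hδ)))).exists
    have hJ : J (f (φ k)) = s (φ k) := hfs (φ k)
    simp only [Function.comp_apply] at hlsc hk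
    linarith
  refine ⟨g, hgmem, fun v hv ↦ ?_⟩
  rw [energyDiff_eq_sub_setIntegral ⟨K, hv.1⟩ ⟨K, hgmem.1⟩
    (eqOn_of_mem_lipschitzBetween heq hv hgmem), sub_nonneg]
  exact hgmin.trans (csInf_le hbdd ⟨v, hv, rfl⟩)

-- Moving `u` and `w` towards each other where they differ by more than `c` makes both gradients
-- equal to their average, and `2|(a + b) / 2|² - |a|² - |b|² = -|b - a|² / 2`.
theorem ae_energyDensity_add_of_midpoint (hu : IsLipschitz u) (hw : IsLipschitz w) (hc : 0 ≤ c)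
    (hpos : ∀ x, u x + c < w x → 0 < u x) :
    ∀ᵐ x, energyDensity (fun y ↦ max (u y) ((u y + w y + -c) / 2)) x - energyDensity u x
        + (energyDensity (fun y ↦ min (w y) ((w y + u y + c) / 2)) x - energyDensity w x)
      = -(1 / 2) * ‖∇ (fun y ↦ max (w y - c - u y) 0) x‖ ^ 2 := by
  have hmax := hu.max (hu.midpoint_add hw (-c))
  have hmin := hw.min (hw.midpoint_add hu c)
  have hexcess := (hw.sub (isLipschitz_const c)).sub hu
  filter_upwards [ae_energyDensity_eq hmax hu, ae_energyDensity_eq hmin hw,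
    ae_gradient_eq_zero (hexcess.max (isLipschitz_const 0)),
    ae_gradient_eq (hexcess.max (isLipschitz_const 0)) hexcess,
    ae_gradient_eq hmax (hu.midpoint_add hw (-c)), ae_gradient_eq hmin (hw.midpoint_add hu c),
    hu.ae_differentiableAt, hw.ae_differentiableAt]
    with x hmaxu hminw hzero hex hmaxm hminm hud hwd
  rcases le_or_gt (w x) (u x + c) with hx | hx
  · rw [hmaxu (max_eq_left (by linarith)), hminw (min_eq_left (by linarith)),
      hzero (max_eq_right (by linarith))]
    simp
  have hux := hpos x hx
  have hgrad_ex : ∇ (fun y ↦ w y - c - u y) x = ∇ w x - ∇ u x := by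
    rw [gradient_fun_sub (hwd.sub_const c) hud]
    simp only [gradient, fderiv_sub_const]
  have hswap : (fun y ↦ (w y + u y + c) / 2) = fun y ↦ (u y + w y + c) / 2 := by
    simp only [add_comm (w _)]
  rw [hex (max_eq_left (by linarith)), hgrad_ex]
  simp only [energyDensity]
  rw [hmaxm (max_eq_right (by linarith)), hminm (min_eq_right (by linarith)), hswap,
    gradient_midpoint_add hud hwd, gradient_midpoint_add hud hwd,
    if_pos (lt_max_of_lt_left hux), if_pos hux,
    if_pos (lt_min (by linarith) (by linarith)), if_pos (by linarith), norm_smul, mul_pow]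
  norm_num
  linarith [parallelogram_law_with_norm ℝ (∇ w x) (∇ u x), norm_add_sq_real (∇ u x) (∇ w x),
    norm_sub_sq_real (∇ w x) (∇ u x), real_inner_comm (∇ u x) (∇ w x)]

theorem le_add_of_energyDiff_midpoint_nonneg [Nontrivial E] (hu : IsLipschitz u)
    (hw : IsLipschitz w) (hc : 0 ≤ c) (hpos : ∀ x, u x + c < w x → 0 < u x)
    (hr : ∀ x ∉ ball 0 r, w x ≤ u x + c)
    (hJu : 0 ≤ energyDiff (fun y ↦ max (u y) ((u y + w y + -c) / 2)) u)
    (hJw : 0 ≤ energyDiff (fun y ↦ min (w y) ((w y + u y + c) / 2)) w) (x : E) :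
    w x ≤ u x + c := by
  let η : E → ℝ := fun y ↦ max (w y - c - u y) 0
  have hη : IsLipschitz η :=
    ((hw.sub (isLipschitz_const c)).sub hu).max (isLipschitz_const 0)
  have hη0 : EqOn η 0 (ball 0 r)ᶜ := fun y hy ↦ max_eq_right (by linarith [hr y hy])
  have hint_u := integrable_energyDensity_sub (r := r) (hu.max (hu.midpoint_add hw (-c))) hu
    fun y hy ↦ max_eq_left (by linarith [hr y hy])
  have hint_w := integrable_energyDensity_sub (r := r) (hw.min (hw.midpoint_add hu c)) hw
    fun y hy ↦ min_eq_left (by linarith [hr y hy])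
  have hae := ae_energyDensity_add_of_midpoint hu hw hc hpos
  have hint : Integrable fun y ↦ ‖∇ η y‖ ^ 2 := by
    simpa [← mul_assoc] using ((hint_u.add hint_w).congr hae).const_mul (-2)
  have hsum := add_nonneg hJu hJw
  rw [energyDiff, energyDiff, ← integral_add hint_u hint_w, integral_congr_ae hae,
    integral_const_mul] at hsum
  have hzero : ∫ y, ‖∇ η y‖ ^ 2 = 0 :=
    le_antisymm (by linarith) (integral_nonneg fun y ↦ sq_nonneg _)
  rw [integral_eq_zero_iff_of_nonneg (fun y ↦ sq_nonneg _) hint] at hzero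
  have hη_eq : η = 0 := eq_zero_of_ae_gradient_eq_zero hη (hasCompactSupport_of_eqOn_zero hη0)
    (fun y ↦ le_max_right _ _) (hzero.mono fun y hy ↦ by simpa using hy)
  have hηx : w x - c - u x ≤ 0 := (le_max_left _ 0).trans_eq (congrFun hη_eq x)
  linarith

theorem IsObstacleMinimizer.le_add_of_linear_growth [Nontrivial E]
    (hu : IsObstacleMinimizer K lo hi u) (hlo : LipschitzWith Λ lo) (hhi : LipschitzWith Λ hi)
    (hlo0 : ∀ x, 0 ≤ lo x) (heq : EqOn lo hi (ball 0 r)ᶜ) (hΛ : Λ ≤ L)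
    (hgrowth : ∀ x z, u z = 0 → u x ≤ L * ‖x - z‖) (h x : E) : u (x + h) ≤ u x + L * ‖h‖ := by
  have hshift : ∀ {f : E → ℝ}, LipschitzWith Λ f → ∀ y h, |f (y + h) - f y| ≤ L * ‖h‖ :=
    fun hf y h ↦ by simpa [dist_eq_norm] using (hf.weaken hΛ).dist_le_mul (y + h) y
  have hu0 : ∀ y, 0 ≤ u y := fun y ↦ (hlo0 y).trans (hu.mem.2.1 y)
  have hwL : ∀ h, LipschitzWith K fun y ↦ u (y + h) := lipschitzWith_comp_add_right hu.mem.1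
  refine le_add_of_energyDiff_midpoint_nonneg (u := u) (w := fun y ↦ u (y + h)) (r := r)
    ⟨K, hu.mem.1⟩ ⟨K, hwL h⟩ (by positivity) (fun y hy ↦ ?_) (fun y hy ↦ ?_) ?_ ?_ x
  · refine (hu0 y).lt_of_ne fun hy0 ↦ ?_
    have := hgrowth (y + h) y hy0.symm
    rw [add_sub_cancel_left] at this
    linarith
  · linarith [hu.mem.2.1 y, hu.mem.2.2 (y + h), heq hy, (abs_le.1 (hshift hhi y h)).2]
  · refine hu.energyDiff_nonneg _ ⟨?_, fun y ↦ le_max_of_le_left (hu.mem.2.1 y),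
      fun y ↦ max_le (hu.mem.2.2 y) ?_⟩
    · simpa using hu.mem.1.max (lipschitzWith_midpoint_add hu.mem.1 (hwL h) _)
    · linarith [hu.mem.2.2 y, hu.mem.2.2 (y + h), (abs_le.1 (hshift hhi y h)).2]
  · rw [← energyDiff_comp_add_right _ _ (-h)]
    simp only [neg_add_cancel_right]
    refine hu.energyDiff_nonneg _ ⟨?_, fun y ↦ le_min (hu.mem.2.1 y) ?_,
      fun y ↦ min_le_of_left_le (hu.mem.2.2 y)⟩
    · simpa using hu.mem.1.min (lipschitzWith_midpoint_add hu.mem.1 (hwL (-h)) _)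
    · have := (abs_le.1 (hshift hlo y (-h))).1
      rw [norm_neg] at this
      linarith [hu.mem.2.1 y, hu.mem.2.1 (y + -h)]

theorem IsObstacleMinimizer.lipschitzWith_of_linear_growth [Nontrivial E]
    (hu : IsObstacleMinimizer K lo hi u) (hlo : LipschitzWith Λ lo) (hhi : LipschitzWith Λ hi)
    (hlo0 : ∀ x, 0 ≤ lo x) (heq : EqOn lo hi (ball 0 r)ᶜ) (hΛ : Λ ≤ L)
    (hgrowth : ∀ x z, u z = 0 → u x ≤ L * ‖x - z‖) : LipschitzWith L u :=
  .of_le_add_mul L fun x y ↦ by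
    simpa [dist_eq_norm] using
      hu.le_add_of_linear_growth hlo hhi hlo0 heq hΛ hgrowth (x - y) y

end ObstacleProblem

section UniformLipschitz

open scoped Laplacian
open Module Real

variable {E : Type*} [NormedAddCommGroup E] {u lo hi : E → ℝ} {a α d : ℝ} {p x z : E}
  {K k Λ : ℝ≥0}

theorem lt_norm_sub_of_lt_gaussianBarrier (ha : 0 ≤ a) (hd : 0 ≤ d) (hα : 0 ≤ α)
    (hk : LipschitzWith k u) (hup : a * d + k * (d / 4) ≤ u p)
    (hx : u x < gaussianBarrier (a * d) (α / d ^ 2) (2 * d) p x) : d / 4 < ‖x - p‖ := by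
  by_contra! h
  have hlip := hk.le_add_mul p x
  have hdist : k * dist p x ≤ k * (d / 4) := by
    rw [dist_comm, dist_eq_norm]
    gcongr
  linarith [gaussianBarrier_le (A := a * d) (β := α / d ^ 2) (s := 2 * d) (p := p) (x := x)
    (by positivity) (by positivity)]

variable [InnerProductSpace ℝ E]

theorem one_le_norm_gradient_gaussianBarrier [CompleteSpace E] (hd : 0 < d) (ha : 0 ≤ a)
    (hα : 0 ≤ α) (haα : 2 * exp (4 * α) ≤ a * α) (h₁ : d / 4 ≤ ‖x - p‖) (h₂ : ‖x - p‖ ≤ 2 * d) :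
    1 ≤ ‖∇ (gaussianBarrier (a * d) (α / d ^ 2) (2 * d) p) x‖ := by
  have hexp : exp (-(4 * α)) ≤ exp (-(α / d ^ 2 * ‖x - p‖ ^ 2)) := by
    rw [exp_le_exp, neg_le_neg_iff]
    calc α / d ^ 2 * ‖x - p‖ ^ 2 ≤ α / d ^ 2 * (2 * d) ^ 2 := by gcongr
      _ = 4 * α := by field_simp; norm_num
  rw [norm_gradient_gaussianBarrier (by positivity), abs_of_nonneg (by positivity)]
  calc (1 : ℝ) = exp (4 * α) * exp (-(4 * α)) := by rw [← exp_add, add_neg_cancel, exp_zero]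
    _ ≤ a * α / 2 * exp (-(4 * α)) := by gcongr; linarith
    _ = a * d * (2 * (α / d ^ 2) * exp (-(4 * α)) * (d / 4)) := by field_simp; norm_num
    _ ≤ _ := by gcongr

theorem max_gaussianBarrier_mem_lipschitzBetween [CompleteSpace E] (hd : 0 < d) (ha : 0 < a)
    (hα : 0 < α) (haK : a * √α ≤ K) (hu : u ∈ lipschitzBetween K lo hi) (hu0 : ∀ x, 0 ≤ u x)
    (hhi : LipschitzWith Λ hi) (hup : a * d + Λ * (2 * d) ≤ u p) :
    (fun x ↦ max (u x) (gaussianBarrier (a * d) (α / d ^ 2) (2 * d) p x)) ∈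
      lipschitzBetween K lo hi := by
  have had : 0 < a * d := by positivity
  have hβ : 0 < α / d ^ 2 := by positivity
  have hconst : a * d * √(α / d ^ 2) = a * √α := by
    rw [Real.sqrt_div hα.le, Real.sqrt_sq hd.le]
    field_simp
  have hbarrier : LipschitzWith K (gaussianBarrier (a * d) (α / d ^ 2) (2 * d) p) := by
    refine (lipschitzWith_gaussianBarrier hβ.le).weaken (toNNReal_le_iff_le_coe.2 ?_)
    rwa [abs_of_pos had, hconst]
  refine ⟨by simpa only [max_self] using hu.1.max hbarrier,
    fun x ↦ (hu.2.1 x).trans (le_max_left _ _), fun x ↦ max_le (hu.2.2 x) ?_⟩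
  obtain hx | hx := le_total (2 * d) ‖x - p‖
  · exact ((gaussianBarrier_nonpos_iff had hβ (by positivity)).2 hx).trans
      ((hu0 x).trans (hu.2.2 x))
  · have hlip := hhi.le_add_mul p x
    have hdist : Λ * dist p x ≤ Λ * (2 * d) := by
      rw [dist_comm, dist_eq_norm]
      gcongr
    linarith [gaussianBarrier_le (s := 2 * d) (p := p) (x := x) had.le hβ.le, hu.2.2 p]

variable [FiniteDimensional ℝ E] [MeasurableSpace E] [BorelSpace E]

theorem IsObstacleMinimizer.pos_of_lt_apply (hu : IsObstacleMinimizer K lo hi u)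
    (hu0 : ∀ x, 0 ≤ u x) (hhi : LipschitzWith Λ hi) (hk : LipschitzWith k u) (hd : 0 < d)
    (ha : 0 < a) (hα : 8 * (finrank ℝ E : ℝ) < α) (haα : 2 * exp (4 * α) ≤ a * α)
    (haK : a * √α ≤ K) (hupΛ : a * d + Λ * (2 * d) ≤ u p) (hupk : a * d + k * (d / 4) ≤ u p)
    (hz : ‖z - p‖ < 2 * d) : 0 < u z := by
  have hα0 : 0 < α := lt_of_le_of_lt (by positivity) hα
  have hβ : 0 < α / d ^ 2 := by positivity
  have had : 0 < a * d := by positivity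
  set P : E → ℝ := gaussianBarrier (a * d) (α / d ^ 2) (2 * d) p
  have hsign (x : E) : P x ≤ 0 ↔ 2 * d ≤ ‖x - p‖ :=
    gaussianBarrier_nonpos_iff had hβ (by positivity)
  have hinner {x : E} (hx : u x < P x) : d / 4 < ‖x - p‖ :=
    lt_norm_sub_of_lt_gaussianBarrier ha.le hd.le hα0.le hk hupk hx
  have houter {x : E} (hx : u x < P x) : ‖x - p‖ < 2 * d :=
    not_le.1 fun h ↦ (((hsign x).2 h).trans (hu0 x)).not_gt hx
  refine (not_le.1 fun h ↦ hz.not_ge ((hsign z).1 h) : 0 < P z).trans_le <|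
    le_of_energyDiff_max_nonneg (r := ‖p‖ + 2 * d) ⟨k, hk⟩ hu0
      ⟨_, lipschitzWith_gaussianBarrier hβ.le⟩ contDiff_gaussianBarrier (fun x hx ↦ ?_)
      (hu.energyDiff_nonneg _ (max_gaussianBarrier_mem_lipschitzBetween hd ha hα0 haK hu.mem hu0
        hhi hupΛ)) (fun x hx ↦ laplacian_gaussianBarrier_pos had hβ ?_)
      (.of_forall fun x _ hx ↦ one_le_norm_gradient_gaussianBarrier hd ha.le hα0.le haα
        (hinner hx).le (houter hx).le) z
  · rw [mem_ball_zero_iff, not_lt] at hx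
    exact ((hsign x).2 (by linarith [norm_sub_norm_le x p])).trans (hu0 x)
  · calc (finrank ℝ E : ℝ) < 2 * (α / d ^ 2) * (d / 4) ^ 2 := by field_simp; linarith
      _ ≤ 2 * (α / d ^ 2) * ‖x - p‖ ^ 2 := by gcongr; exact (hinner hx).le

variable (E) in
theorem exists_forall_isObstacleMinimizer_le_mul (Λ : ℝ≥0) :
    ∃ C : ℝ≥0, Λ ≤ C ∧ ∀ (K k : ℝ≥0) (lo hi u : E → ℝ), LipschitzWith Λ hi → (∀ x, 0 ≤ lo x) →
      IsObstacleMinimizer K lo hi u → LipschitzWith k u → C ≤ k → k ≤ K →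
      ∀ x z, u z = 0 → u x ≤ 3 / 4 * k * ‖x - z‖ := by
  set α : ℝ := 8 * finrank ℝ E + 1
  have hα : 0 < α := by positivity
  set a : ℝ := 2 * exp (4 * α) / α
  have ha : 0 < a := by positivity
  refine ⟨6 * Λ + (3 * a).toNNReal + (a * √α).toNNReal, ?_, ?_⟩
  · exact (le_mul_of_one_le_left zero_le (by norm_num)).trans (le_add_right le_self_add)
  intro K k lo hi u hhi hlo0 hu hk hCk hkK x z hz
  by_contra! hlt
  have hd : 0 < ‖x - z‖ := norm_pos_iff.2 fun h ↦ by
    rw [sub_eq_zero.1 h, hz, sub_self, norm_zero, mul_zero] at hlt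
    exact hlt.false
  have hCk : 6 * (Λ : ℝ) + 3 * a + a * √α ≤ k := by
    simpa only [NNReal.coe_add, NNReal.coe_mul, NNReal.coe_ofNat,
      coe_toNNReal _ (by positivity : 0 ≤ 3 * a),
      coe_toNNReal _ (by positivity : 0 ≤ a * √α)] using NNReal.coe_le_coe.2 hCk
  have hsq : 0 ≤ a * √α := by positivity
  have := Λ.coe_nonneg
  refine (hu.pos_of_lt_apply (fun y ↦ (hlo0 y).trans (hu.mem.2.1 y)) hhi hk hd ha (lt_add_one _)
    (div_mul_cancel₀ _ hα.ne').ge ?_ ?_ ?_ (p := x) (z := z) ?_).ne' hz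
  · exact (by linarith : a * √α ≤ k).trans (NNReal.coe_le_coe.2 hkK)
  · nlinarith
  · nlinarith
  · rw [norm_sub_rev]
    linarith

theorem isClosed_setOf_lipschitzWith {X Y : Type*} [PseudoMetricSpace X] [PseudoMetricSpace Y]
    (f : X → Y) : IsClosed {k : ℝ≥0 | LipschitzWith k f} := by
  simp only [lipschitzWith_iff_dist_le_mul, ofPred_forall]
  exact isClosed_iInter fun x ↦ isClosed_iInter fun y ↦
    isClosed_le continuous_const (NNReal.continuous_coe.mul continuous_const)

variable (E) in
theorem exists_forall_isObstacleMinimizer_lipschitzWith [Nontrivial E] (Λ : ℝ≥0) :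
    ∃ C : ℝ≥0, Λ ≤ C ∧ ∀ (K : ℝ≥0) (lo hi u : E → ℝ) (r : ℝ), LipschitzWith Λ lo →
      LipschitzWith Λ hi → (∀ x, 0 ≤ lo x) → EqOn lo hi (ball 0 r)ᶜ →
      IsObstacleMinimizer K lo hi u → LipschitzWith C u := by
  obtain ⟨C, hΛC, hC⟩ := exists_forall_isObstacleMinimizer_le_mul E Λ
  refine ⟨C, hΛC, fun K lo hi u r hlo hhi hlo0 heq hu ↦ ?_⟩
  have hbdd : BddBelow {k : ℝ≥0 | LipschitzWith k u} := OrderBot.bddBelow _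
  set k := sInf {k : ℝ≥0 | LipschitzWith k u}
  have hk : LipschitzWith k u := (isClosed_setOf_lipschitzWith u).csInf_mem ⟨K, hu.mem.1⟩ hbdd
  obtain hkC | hCk := le_or_gt k C
  · exact hk.weaken hkC
  have hgrowth := hC K k lo hi u hhi hlo0 hu hk hCk.le (csInf_le hbdd hu.mem.1)
  have himproved : LipschitzWith (max C (3 / 4 * k)) u :=
    hu.lipschitzWith_of_linear_growth hlo hhi hlo0 heq (hΛC.trans (le_max_left _ _)) fun x z hz ↦
      (hgrowth x z hz).trans <| by
        gcongr
        exact_mod_cast le_max_right C (3 / 4 * k)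
  have hlt : max C (3 / 4 * k) < k := max_lt hCk <| by
    rw [← NNReal.coe_lt_coe] at hCk ⊢
    push_cast
    linarith [C.coe_nonneg]
  exact absurd (csInf_le hbdd himproved) hlt.not_ge

variable (E) in
theorem exists_lipschitzWith_minimizer_between [Nontrivial E] (Λ : ℝ≥0) :
    ∃ C : ℝ≥0, ∀ (lo hi : E → ℝ) (r : ℝ), LipschitzWith Λ lo → LipschitzWith Λ hi →
      (∀ x, 0 ≤ lo x) → lo ≤ hi → EqOn lo hi (ball 0 r)ᶜ →
      ∃ u ∈ Icc lo hi, LipschitzWith C u ∧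
        ∀ v ∈ Icc lo hi, IsLipschitz v → 0 ≤ energyDiff v u := by
  obtain ⟨C, hΛC, hC⟩ := exists_forall_isObstacleMinimizer_lipschitzWith E Λ
  refine ⟨C, fun lo hi r hlo hhi hlo0 hle heq ↦ ?_⟩
  obtain ⟨u, hu⟩ := exists_isObstacleMinimizer (hlo.weaken hΛC) hle heq
  refine ⟨u, hu.mem.2, hu.mem.1, fun v hv ⟨Kv, hKv⟩ ↦ ?_⟩
  obtain ⟨w, hw⟩ := exists_isObstacleMinimizer (hlo.weaken (hΛC.trans (le_max_left C Kv))) hle heq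
  have hwC : w ∈ lipschitzBetween C lo hi :=
    ⟨hC _ lo hi w r hlo hhi hlo0 heq hw, hw.mem.2⟩
  have hvK : v ∈ lipschitzBetween (max C Kv) lo hi := ⟨hKv.weaken (le_max_right _ _), hv⟩
  rw [← energyDiff_add ⟨_, hKv⟩ ⟨_, hwC.1⟩ ⟨_, hu.mem.1⟩
    (eqOn_of_mem_lipschitzBetween heq hvK hw.mem) (eqOn_of_mem_lipschitzBetween heq hw.mem hu.mem)]
  exact add_nonneg (hw.energyDiff_nonneg v hvK) (hu.energyDiff_nonneg w hwC)

end UniformLipschitz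

section Minimizers

variable {E : Type*} [NormedAddCommGroup E] [InnerProductSpace ℝ E] [FiniteDimensional ℝ E]
  [MeasurableSpace E] [BorelSpace E] {u v : E → ℝ} {r R : ℝ}

/-- `u` minimizes the energy in the open ball of radius `R` centred at the origin. The energies of
Lipschitz functions agreeing outside a ball are compared through `energyDiff`, and only globally
Lipschitz functions are considered. -/
structure IsMinimizerOnBall (R : ℝ) (u : E → ℝ) : Prop where
  isLipschitz : IsLipschitz u
  nonneg : ∀ x, 0 ≤ u x
  energyDiff_nonneg : ∀ ⦃v⦄, IsLipschitz v → (∀ x, 0 ≤ v x) → ∀ ⦃r⦄, r < R →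
    EqOn v u (ball 0 r)ᶜ → 0 ≤ energyDiff v u

/-- Globally Lipschitz global minimizers of the energy. -/
def IsGlobalMinimizer (u : E → ℝ) : Prop := ∀ R, IsMinimizerOnBall R u

namespace IsGlobalMinimizer

theorem isLipschitz (hu : IsGlobalMinimizer u) : IsLipschitz u := (hu 0).isLipschitz

theorem nonneg (hu : IsGlobalMinimizer u) (x : E) : 0 ≤ u x := (hu 0).nonneg x

theorem energyDiff_nonneg (hu : IsGlobalMinimizer u) (hv : IsLipschitz v) (hv0 : ∀ x, 0 ≤ v x)
    (h : EqOn v u (ball 0 r)ᶜ) : 0 ≤ energyDiff v u :=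
  (hu (r + 1)).energyDiff_nonneg hv hv0 (lt_add_one r) h

theorem comp_add_right (hu : IsGlobalMinimizer u) (h : E) :
    IsGlobalMinimizer fun x ↦ u (x + h) := fun R ↦
  let shift {w : E → ℝ} (hw : IsLipschitz w) (h : E) : IsLipschitz fun x ↦ w (x + h) :=
    hw.imp fun _ hK ↦ lipschitzWith_comp_add_right hK h
  { isLipschitz := shift hu.isLipschitz h
    nonneg := fun x ↦ hu.nonneg (x + h)
    energyDiff_nonneg := fun v hv hv0 r _ hvu ↦ by
      have hEq : EqOn (fun x ↦ v (x + -h)) u (ball 0 (r + ‖h‖))ᶜ := fun x hx ↦ by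
        rw [mem_compl_iff, mem_ball_zero_iff, not_lt] at hx
        have hx' : x + -h ∉ ball (0 : E) r := by
          rw [mem_ball_zero_iff, not_lt, ← sub_eq_add_neg]
          linarith [norm_sub_norm_le x h]
        simpa only [neg_add_cancel_right] using hvu hx'
      have := hu.energyDiff_nonneg (shift hv (-h)) (fun x ↦ hv0 _) hEq
      rw [← energyDiff_comp_add_right _ _ h] at this
      simpa only [add_neg_cancel_right] using this }

end IsGlobalMinimizer

end Minimizers

section Scaling

section SeminormedAddCommGroup

variable {E : Type*} [SeminormedAddCommGroup E] [NormedSpace ℝ E] {u : E → ℝ} {d : ℝ} {K : ℝ≥0}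

/-- The blow-up `x ↦ u (d x) / d` of `u` at the origin, under which the energy is homogeneous. -/
noncomputable def rescale (d : ℝ) (u : E → ℝ) (x : E) : ℝ := d⁻¹ * u (d • x)

theorem lipschitzWith_rescale (hd : 0 < d) (hu : LipschitzWith K u) :
    LipschitzWith K (rescale d u) := .of_dist_le_mul fun x y ↦ by
  have h := hu.dist_le_mul (d • x) (d • y)
  rw [dist_smul₀, Real.norm_of_nonneg hd.le] at h
  rw [rescale, rescale, Real.dist_eq, ← mul_sub, abs_mul, abs_of_pos (inv_pos.2 hd), ← Real.dist_eq,
    inv_mul_le_iff₀ hd]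
  linarith

theorem IsLipschitz.rescale (hd : 0 < d) (hu : IsLipschitz u) : IsLipschitz (rescale d u) :=
  hu.imp fun _ ↦ lipschitzWith_rescale hd

theorem rescale_nonneg (hd : 0 < d) (hu : ∀ x, 0 ≤ u x) (x : E) : 0 ≤ rescale d u x :=
  mul_nonneg (inv_nonneg.2 hd.le) (hu _)

theorem rescale_rescale_inv (hd : d ≠ 0) (u : E → ℝ) : rescale d (rescale d⁻¹ u) = u := by
  ext x
  rw [rescale, rescale, smul_smul, inv_mul_cancel₀ hd, one_smul, inv_inv, inv_mul_cancel_left₀ hd]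

end SeminormedAddCommGroup

variable {E : Type*} [NormedAddCommGroup E] [InnerProductSpace ℝ E]

theorem gradient_rescale [CompleteSpace E] {d : ℝ} (hd : d ≠ 0) (u : E → ℝ) (x : E) :
    ∇ (rescale d u) x = ∇ u (d • x) := by
  have hsmul : fderiv ℝ (rescale d u) x = d⁻¹ • fderiv ℝ (fun x ↦ u (d • x)) x :=
    congrFun (fderiv_const_smul_field (𝕜 := ℝ) d⁻¹ (f := fun x ↦ u (d • x))) x
  rw [gradient, hsmul, fderiv_comp_smul, inv_smul_smul₀ hd, gradient]

theorem energyDensity_rescale [CompleteSpace E] {d : ℝ} (hd : 0 < d) (u : E → ℝ) (x : E) :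
    energyDensity (rescale d u) x = energyDensity u (d • x) := by
  have hpos : 0 < rescale d u x ↔ 0 < u (d • x) := mul_pos_iff_of_pos_left (inv_pos.2 hd)
  simp only [energyDensity, gradient_rescale hd.ne', hpos]

variable [FiniteDimensional ℝ E] [MeasurableSpace E] [BorelSpace E] {u v : E → ℝ} {d R : ℝ}

theorem energyDiff_rescale (hd : 0 < d) (u v : E → ℝ) :
    energyDiff (rescale d u) (rescale d v) =
      (d ^ Module.finrank ℝ E)⁻¹ * energyDiff u v := by
  simp_rw [energyDiff, energyDensity_rescale hd]
  rw [Measure.integral_comp_smul volume (fun x ↦ energyDensity u x - energyDensity v x) d,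
    abs_of_nonneg (by positivity), smul_eq_mul]

theorem IsMinimizerOnBall.rescale (hd : 0 < d) (hu : IsMinimizerOnBall R u) :
    IsMinimizerOnBall (R / d) (rescale d u) where
  isLipschitz := hu.isLipschitz.rescale hd
  nonneg := rescale_nonneg hd hu.nonneg
  energyDiff_nonneg v hv hv0 r hr hvu := by
    have hd' : 0 < d⁻¹ := inv_pos.2 hd
    have hEq : EqOn (AltCaffarelli.rescale d⁻¹ v) u (ball 0 (r * d))ᶜ := fun x hx ↦ by
      rw [mem_compl_iff, mem_ball_zero_iff, not_lt] at hx
      have hx' : d⁻¹ • x ∉ ball (0 : E) r := by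
        rwa [mem_ball_zero_iff, norm_smul, Real.norm_of_nonneg hd'.le, inv_mul_eq_div,
          div_lt_iff₀ hd, not_lt]
      rw [AltCaffarelli.rescale, inv_inv, hvu hx', AltCaffarelli.rescale, smul_inv_smul₀ hd.ne',
        mul_inv_cancel_left₀ hd.ne']
    rw [← rescale_rescale_inv hd.ne' v, energyDiff_rescale hd]
    exact mul_nonneg (by positivity) (hu.energyDiff_nonneg (hv.rescale hd')
      (rescale_nonneg hd' hv0) ((lt_div_iff₀ hd).1 hr) hEq)

theorem IsGlobalMinimizer.rescale (hd : 0 < d) (hu : IsGlobalMinimizer u) :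
    IsGlobalMinimizer (rescale d u) := fun R ↦ by
  simpa only [mul_div_cancel_right₀ R hd.ne'] using (hu (R * d)).rescale hd

end Scaling

section Nondegeneracy

open scoped Laplacian
open Module Real

variable {E : Type*} [NormedAddCommGroup E] {u : E → ℝ} {a α c r R : ℝ} {p x : E}

theorem gaussianBarrier_of_norm_sub_eq (hr : 0 < r) (hx : ‖x - p‖ = r) :
    gaussianBarrier (-(a * r)) (α / r ^ 2) (r / 2) p x =
      a * (exp (-(α / 4)) - exp (-α)) * r := by
  have hα : α / r ^ 2 * (r / 2) ^ 2 = α / 4 := by field_simp; norm_num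
  rw [gaussianBarrier, hx, hα, div_mul_cancel₀ α (pow_pos hr 2).ne']
  ring

variable [InnerProductSpace ℝ E]

theorem norm_gradient_gaussianBarrier_le [CompleteSpace E] (hr : 0 < r) (ha : 0 ≤ a) (hα : 0 ≤ α)
    (hx : ‖x - p‖ ≤ r / 2) :
    ‖∇ (gaussianBarrier (-(a * r)) (α / r ^ 2) (r / 2) p) x‖ ≤ a * α := by
  rw [norm_gradient_gaussianBarrier (by positivity), abs_neg, abs_of_nonneg (by positivity)]
  calc a * r * (2 * (α / r ^ 2) * exp (-(α / r ^ 2 * ‖x - p‖ ^ 2)) * ‖x - p‖)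
      ≤ a * r * (2 * (α / r ^ 2) * 1 * (r / 2)) := by
        gcongr
        exact exp_le_one_iff.2 (neg_nonpos.2 (by positivity))
    _ = a * α := by field_simp

theorem laplacian_gaussianBarrier_le [FiniteDimensional ℝ E] (hr : 0 < r) (ha : 0 ≤ a)
    (hα : 0 ≤ α) : Δ (gaussianBarrier (-(a * r)) (α / r ^ 2) (r / 2) p) x ≤
      2 * (a * α) * finrank ℝ E / r := by
  rw [laplacian_gaussianBarrier]
  calc 2 * -(a * r) * (α / r ^ 2) * exp (-(α / r ^ 2 * ‖x - p‖ ^ 2)) *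
        (2 * (α / r ^ 2) * ‖x - p‖ ^ 2 - finrank ℝ E)
      = 2 * (a * r) * (α / r ^ 2) * exp (-(α / r ^ 2 * ‖x - p‖ ^ 2)) *
        (finrank ℝ E - 2 * (α / r ^ 2) * ‖x - p‖ ^ 2) := by ring
    _ ≤ 2 * (a * r) * (α / r ^ 2) * exp (-(α / r ^ 2 * ‖x - p‖ ^ 2)) * finrank ℝ E := by
        gcongr
        exact sub_le_self _ (by positivity)
    _ ≤ 2 * (a * r) * (α / r ^ 2) * 1 * finrank ℝ E := by
        gcongr
        exact exp_le_one_iff.2 (neg_nonpos.2 (by positivity))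
    _ = 2 * (a * α) * finrank ℝ E / r := by field_simp

variable [FiniteDimensional ℝ E] [MeasurableSpace E] [BorelSpace E]

theorem IsMinimizerOnBall.le_max_of_forall_sphere_le {Q : E → ℝ} (hu : IsMinimizerOnBall R u)
    (hR : ‖p‖ + r < R) (hQ : IsLipschitz Q) (hQ2 : ContDiff ℝ 2 Q)
    (huQ : ∀ x ∈ sphere p r, u x ≤ Q x) (hΔ : ∀ x ∈ closedBall p r, 0 < Q x → Δ Q x < 0)
    (hgrad : ∀ x ∈ closedBall p r, Q x ≤ 0 → 2 * Δ Q x * u x < 1 - ‖∇ Q x‖ ^ 2)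
    (hx : x ∈ closedBall p r) : u x ≤ max (Q x) 0 := by
  classical
  set v : E → ℝ := (closedBall p r).piecewise (fun y ↦ min (u y) (max (Q y) 0)) u
  have hin {y : E} (hy : y ∈ closedBall p r) : v y = min (u y) (max (Q y) 0) :=
    piecewise_eq_of_mem _ _ _ hy
  have hout {y : E} (hy : y ∉ closedBall p r) : v y = u y := piecewise_eq_of_notMem _ _ _ hy
  have hball {y : E} (hy : v y < u y) : y ∈ closedBall p r := by_contra fun h ↦ hy.ne (hout h)
  have hvL : IsLipschitz v :=
    isLipschitz_piecewise (hu.isLipschitz.min (hQ.max (isLipschitz_const 0))) hu.isLipschitz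
      fun y hy ↦ min_eq_left (le_max_of_le_left (huQ y (frontier_closedBall_subset_sphere hy)))
  have hv0 (y : E) : 0 ≤ v y := by
    by_cases hy : y ∈ closedBall p r
    · exact (hin hy).symm ▸ le_min (hu.nonneg y) (le_max_right _ _)
    · exact (hout hy).symm ▸ hu.nonneg y
  obtain ⟨s, hps, hsR⟩ := exists_between hR
  have hvu : EqOn v u (ball 0 s)ᶜ := fun y hy ↦ hout fun h ↦ hy <| by
    rw [mem_closedBall_iff_norm] at h
    rw [mem_ball_zero_iff]
    linarith [norm_sub_norm_le y p]
  have hkey : v = u := by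
    refine eq_of_energyDiff_nonneg_of_eq_max hu.isLipschitz hvL
      (piecewise_le (g := u) (fun y _ ↦ min_le_left _ _) fun _ _ ↦ le_rfl) hQ hQ2 hvu
      (hu.energyDiff_nonneg hvL hv0 hsR hvu) (fun y hy ↦ ?_) (fun y hy ↦ hΔ y (hball hy))
      fun y hy ↦ hgrad y (hball hy)
    have h := hin (hball hy)
    rw [h] at hy ⊢
    exact min_eq_right (not_lt.1 fun hlt ↦ hy.ne (min_eq_left hlt.le))
  rw [← hkey, hin hx]
  exact min_le_right _ _

theorem IsMinimizerOnBall.eq_zero_of_forall_le (hu : IsMinimizerOnBall R u) (hr : 0 < r)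
    (hR : ‖p‖ + r < R) (ha : 0 < a) (hα : 2 * (finrank ℝ E : ℝ) < α) (haα : a * α = 1 / 2)
    (hca : c ≤ a * (exp (-(α / 4)) - exp (-α))) (hcn : 4 * finrank ℝ E * c ≤ 1)
    (hsmall : ∀ x ∈ closedBall p r, u x ≤ c * r) (hx : x ∈ closedBall p (r / 2)) : u x = 0 := by
  have hα0 : 0 < α := lt_of_le_of_lt (by positivity) hα
  have hβ : 0 < α / r ^ 2 := by positivity
  have har : 0 < a * r := by positivity
  set Q : E → ℝ := gaussianBarrier (-(a * r)) (α / r ^ 2) (r / 2) p with hQdef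
  have hsign (y : E) : Q y ≤ 0 ↔ ‖y - p‖ ≤ r / 2 :=
    gaussianBarrier_neg_nonpos_iff har hβ (by positivity)
  have hux : u x ≤ max (Q x) 0 := by
    refine hu.le_max_of_forall_sphere_le hR ⟨_, lipschitzWith_gaussianBarrier hβ.le⟩
      contDiff_gaussianBarrier (fun y hy ↦ ?_) (fun y _ hQy ↦ ?_) (fun y hy hQy ↦ ?_)
      (closedBall_subset_closedBall (by linarith) hx)
    · rw [hQdef, gaussianBarrier_of_norm_sub_eq hr (mem_sphere_iff_norm.1 hy)]
      exact (hsmall y (sphere_subset_closedBall hy)).trans (by gcongr)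
    · have hlt : r / 2 < ‖y - p‖ := not_le.1 fun h ↦ hQy.not_ge ((hsign y).2 h)
      refine laplacian_gaussianBarrier_neg (neg_lt_zero.2 har) hβ ?_
      calc (finrank ℝ E : ℝ) < 2 * (α / r ^ 2) * (r / 2) ^ 2 := by field_simp; linarith
        _ ≤ 2 * (α / r ^ 2) * ‖y - p‖ ^ 2 := by gcongr
    · have hgrad : ‖∇ Q y‖ ≤ 1 / 2 := haα ▸
        norm_gradient_gaussianBarrier_le hr ha.le hα0.le ((hsign y).1 hQy)
      have hΔ : Δ Q y ≤ finrank ℝ E / r := by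
        refine (laplacian_gaussianBarrier_le hr ha.le hα0.le).trans_eq ?_
        rw [haα]
        ring
      have huy := hu.nonneg y
      calc 2 * Δ Q y * u y ≤ 2 * (finrank ℝ E / r) * (c * r) := by gcongr; exact hsmall y hy
        _ = 4 * finrank ℝ E * c / 2 := by field_simp; ring
        _ < 1 - ‖∇ Q y‖ ^ 2 := by nlinarith [norm_nonneg (∇ Q y)]
  rw [max_eq_right ((hsign x).2 (mem_closedBall_iff_norm.1 hx))] at hux
  exact hux.antisymm (hu.nonneg x)

variable (E) in
theorem exists_forall_isMinimizerOnBall_eq_zero [Nontrivial E] :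
    ∃ c : ℝ, 0 < c ∧ ∀ (u : E → ℝ) (R : ℝ) (p : E) (r : ℝ), IsMinimizerOnBall R u → 0 < r →
      ‖p‖ + r < R → (∀ x ∈ closedBall p r, u x ≤ c * r) → ∀ x ∈ closedBall p (r / 2), u x = 0 := by
  have hn : (0 : ℝ) < finrank ℝ E := by exact_mod_cast finrank_pos
  set α : ℝ := 2 * finrank ℝ E + 1
  have hα : 0 < α := by positivity
  set c : ℝ := min (1 / (2 * α) * (exp (-(α / 4)) - exp (-α))) (1 / (4 * finrank ℝ E))
  have hexp : exp (-α) < exp (-(α / 4)) := exp_lt_exp.2 (by linarith)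
  refine ⟨c, lt_min (mul_pos (by positivity) (sub_pos.2 hexp)) (by positivity),
    fun u R p r hu hr hR hsmall x hx ↦ ?_⟩
  refine hu.eq_zero_of_forall_le hr hR (by positivity : 0 < 1 / (2 * α)) (lt_add_one _)
    (by rw [div_mul_eq_mul_div, mul_div_mul_right 1 2 hα.ne']) (min_le_left _ _) ?_ hsmall hx
  calc 4 * finrank ℝ E * c ≤ 4 * finrank ℝ E * (1 / (4 * finrank ℝ E)) := by
        gcongr
        exact min_le_right _ _
    _ = 1 := by field_simp

end Nondegeneracy

section LimitsOfMinimizers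

variable {E : Type*} [NormedAddCommGroup E] {K L : ℝ≥0} {r ρ s t δ : ℝ}

theorem exists_lipschitzWith_eqOn_closedBall_eqOn_compl [NormedSpace ℝ E] {f g : E → ℝ}
    (hf : LipschitzWith K f) (hg : LipschitzWith K g) (ht : 0 < t)
    (hfg : ∀ x ∈ sphere 0 ρ, |f x - g x| ≤ t) :
    ∃ h, LipschitzWith (K + 1) h ∧ EqOn h g (closedBall 0 ρ) ∧ EqOn h f (ball 0 (ρ + t))ᶜ ∧
      ∀ x, h x ∈ uIcc (g x) (f x) := by
  classical
  set σ : E → ℝ := fun x ↦ max (ρ + t - ‖x‖) 0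
  have hσ : LipschitzWith 1 σ := by
    simpa only [zero_add] using
      ((LipschitzWith.const (ρ + t)).sub lipschitzWith_one_norm).max_const 0
  have hσ0 (x : E) : 0 ≤ σ x := le_max_right _ _
  set T : E → ℝ := fun x ↦ max (f x - σ x) (min (g x) (f x + σ x))
  have hT : LipschitzWith (K + 1) T :=
    ((hf.sub hσ).max (hg.min (hf.add hσ))).weaken (by simp)
  refine ⟨(closedBall 0 ρ).piecewise g T, lipschitzWith_piecewise (hg.weaken le_self_add) hT
    fun x hx ↦ ?_, piecewise_eqOn _ _ _, fun x hx ↦ ?_, fun x ↦ ?_⟩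
  · have hxρ := frontier_closedBall_subset_sphere hx
    have h := abs_le.1 (hfg x hxρ)
    have hσx : σ x = t := by
      simp only [σ, mem_sphere_zero_iff_norm.1 hxρ, add_sub_cancel_left, max_eq_left ht.le]
    simp only [T, hσx]
    rw [min_eq_left (by linarith), max_eq_right (by linarith)]
  · rw [mem_compl_iff, mem_ball_zero_iff, not_lt] at hx
    have hxρ : x ∉ closedBall (0 : E) ρ := by
      rw [mem_closedBall_zero_iff, not_le]
      linarith
    have hσx : σ x = 0 := max_eq_right (by linarith)
    rw [piecewise_eq_of_notMem _ _ _ hxρ]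
    simp only [T, hσx, sub_zero, add_zero, max_eq_left (min_le_right _ _)]
  · by_cases hx : x ∈ closedBall (0 : E) ρ
    · rw [piecewise_eq_of_mem _ _ _ hx]
      exact left_mem_uIcc
    · rw [piecewise_eq_of_notMem _ _ _ hx]
      have := hσ0 x
      exact ⟨le_max_of_le_right (min_le_min_left _ (by linarith)),
        max_le (le_max_of_le_right (by linarith)) (le_max_of_le_left (min_le_left _ _))⟩

variable [InnerProductSpace ℝ E] [FiniteDimensional ℝ E] [MeasurableSpace E] [BorelSpace E]
  {u v w g : E → ℝ}

variable (E) in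
theorem exists_pos_mul_measureReal_ball_sub_le (hρ : 0 < ρ) (C : ℝ) (hδ : 0 < δ) : ∃ t : ℝ, 0 < t ∧
    C * (volume.real (ball (0 : E) (ρ + t)) - volume.real (ball (0 : E) ρ)) ≤ δ := by
  have hlim : Tendsto (fun t ↦ C * ((ρ + t) ^ Module.finrank ℝ E * volume.real (ball (0 : E) 1) -
      ρ ^ Module.finrank ℝ E * volume.real (ball (0 : E) 1))) (𝓝[>] 0) (𝓝 0) := by
    refine tendsto_nhdsWithin_of_tendsto_nhds (Continuous.tendsto' (by fun_prop) _ _ ?_)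
    rw [add_zero, sub_self, mul_zero]
  obtain ⟨t, htδ, ht⟩ := ((hlim.eventually_le_const hδ).and self_mem_nhdsWithin).exists
  have hvol {r : ℝ} (hr : 0 < r) : volume.real (ball (0 : E) r) =
      r ^ Module.finrank ℝ E * volume.real (ball (0 : E) 1) := by
    rw [Measure.real, Measure.addHaar_ball_of_pos _ _ hr, ENNReal.toReal_mul,
      ENNReal.toReal_ofReal (by positivity), Measure.real]
  exact ⟨t, ht, by rwa [hvol (add_pos hρ ht), hvol hρ]⟩

theorem setIntegral_energyDensity_mono (hu : IsLipschitz u) (h : ρ ≤ s) :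
    ∫ x in ball 0 ρ, energyDensity u x ≤ ∫ x in ball 0 s, energyDensity u x :=
  setIntegral_mono_set (integrableOn_energyDensity hu 0 s)
    (.of_forall fun x ↦ energyDensity_nonneg u x) (ball_subset_ball h).eventuallyLE

theorem setIntegral_energyDensity_le_add_of_eqOn (hu : LipschitzWith L u) (hg : IsLipschitz g)
    (hug : EqOn u g (ball 0 ρ)) (h : ρ ≤ s) :
    ∫ x in ball 0 s, energyDensity u x ≤ (∫ x in ball 0 ρ, energyDensity g x) +
      ((L : ℝ) ^ 2 + 1) * (volume.real (ball (0 : E) s) - volume.real (ball (0 : E) ρ)) := by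
  have huL : IsLipschitz u := ⟨L, hu⟩
  have hsub : ball (0 : E) ρ ⊆ ball 0 s := ball_subset_ball h
  have hdiff := setIntegral_sdiff measurableSet_ball (integrableOn_energyDensity huL 0 s) hsub
  have hin : ∫ x in ball 0 ρ, energyDensity u x = ∫ x in ball 0 ρ, energyDensity g x := by
    refine setIntegral_congr_ae measurableSet_ball ?_
    filter_upwards [ae_energyDensity_eq huL hg] with x hx hxρ
    exact hx (hug hxρ)
  have hannulus := setIntegral_mono_on (μ := volume)
    ((integrableOn_energyDensity huL 0 s).mono_set sdiff_subset)
    (integrableOn_const (measure_ne_top_of_subset sdiff_subset measure_ball_lt_top.ne))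
    (measurableSet_ball.diff (measurableSet_ball (x := (0 : E)) (ε := ρ)))
    fun x _ ↦ energyDensity_le hu x
  rw [setIntegral_const, smul_eq_mul,
    measureReal_sdiff hsub measurableSet_ball measure_ball_lt_top.ne] at hannulus
  linarith

theorem isGlobalMinimizer_of_tendsto {f : ℕ → E → ℝ} {R : ℕ → ℝ} (hf : ∀ k, LipschitzWith K (f k))
    (hR : Tendsto R atTop atTop) (hmin : ∀ k, IsMinimizerOnBall (R k) (f k))
    (h : Tendsto f atTop (𝓝 g)) : IsGlobalMinimizer g := fun _ ↦ by
  have hg : IsLipschitz g := ⟨K, lipschitzWith_of_tendsto hf h⟩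
  refine ⟨hg, fun x ↦ ge_of_tendsto' (tendsto_pi_nhds.1 h x) fun k ↦ (hmin k).nonneg x,
    fun v hv hv0 r _ hvg ↦ ?_⟩
  obtain ⟨Kv, hKv⟩ := id hv
  set ρ : ℝ := max r 1
  have hvgρ : EqOn v g (ball 0 ρ)ᶜ :=
    hvg.mono (compl_subset_compl.2 (ball_subset_ball (le_max_left _ _)))
  rw [energyDiff_eq_sub_setIntegral hv hg hvgρ, sub_nonneg]
  refine le_of_forall_pos_le_add fun δ hδ ↦ ?_
  obtain ⟨t, ht, hvol⟩ := exists_pos_mul_measureReal_ball_sub_le E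
    (zero_lt_one.trans_le (le_max_right r 1)) (((max K Kv + 1 : ℝ≥0) : ℝ) ^ 2 + 1) (half_pos hδ)
  obtain ⟨k, hlsc, hclose, hk⟩ :=
    ((eventually_setIntegral_energyDensity_le hf h ρ (half_pos hδ)).and
      ((eventually_abs_sub_le_of_tendsto hf h 0 ρ ht).and
        (hR.eventually_gt_atTop (ρ + t)))).exists
  obtain ⟨w, hw, hwv, hwf, hwI⟩ := exists_lipschitzWith_eqOn_closedBall_eqOn_compl
    ((hf k).weaken (le_max_left K Kv)) (hKv.weaken (le_max_right K Kv)) ht fun x hx ↦ by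
      rw [hvgρ fun hx' ↦ (sphere_disjoint_ball.notMem_of_mem_left hx) hx']
      exact hclose x (sphere_subset_closedBall hx)
  have hfk := (hmin k).isLipschitz
  have hmink := (hmin k).energyDiff_nonneg ⟨_, hw⟩
    (fun x ↦ (le_min (hv0 x) ((hmin k).nonneg x)).trans (hwI x).1) hk hwf
  rw [energyDiff_eq_sub_setIntegral ⟨_, hw⟩ hfk hwf] at hmink
  linarith [setIntegral_energyDensity_mono hfk (le_add_of_nonneg_right ht.le : ρ ≤ ρ + t),
    setIntegral_energyDensity_le_add_of_eqOn hw hv (hwv.mono ball_subset_closedBall)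
      (le_add_of_nonneg_right ht.le)]

section Perturbation

variable {f W : ℕ → E → ℝ}

theorem setIntegral_energyDensity_le_of_tendsto (hf : ∀ k, LipschitzWith K (f k))
    (hW : ∀ k, LipschitzWith K (W k)) (hfv : Tendsto f atTop (𝓝 v)) (hWu : Tendsto W atTop (𝓝 u))
    (hρ : 0 < ρ) (hfW : ∀ k, EqOn (f k) (W k) (ball 0 ρ)ᶜ) (hmin : ∀ k, 0 ≤ energyDiff (W k) (f k))
    (hcomp : ∀ k r h, IsLipschitz h → EqOn h (W k) (ball 0 r)ᶜ →
      (∀ x, h x ∈ uIcc (u x) (W k x)) → energyDiff (W k) h ≤ 0) :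
    ∫ x in ball 0 ρ, energyDensity v x ≤ ∫ x in ball 0 ρ, energyDensity u x := by
  have hu : LipschitzWith K u := lipschitzWith_of_tendsto hW hWu
  refine le_of_forall_pos_le_add fun δ hδ ↦ ?_
  obtain ⟨t, ht, hvol⟩ := exists_pos_mul_measureReal_ball_sub_le E hρ
    (((K + 1 : ℝ≥0) : ℝ) ^ 2 + 1) (half_pos hδ)
  obtain ⟨k, hlsc, hclose⟩ :=
    ((eventually_setIntegral_energyDensity_le hf hfv ρ (half_pos hδ)).and
      (eventually_abs_sub_le_of_tendsto hW hWu 0 ρ ht)).exists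
  obtain ⟨h, hh, hhu, hhW, hhI⟩ := exists_lipschitzWith_eqOn_closedBall_eqOn_compl (hW k) hu ht
    fun x hx ↦ hclose x (sphere_subset_closedBall hx)
  have hρt : ρ ≤ ρ + t := le_add_of_nonneg_right ht.le
  have hWh := hcomp k _ h ⟨_, hh⟩ hhW hhI
  rw [energyDiff_eq_sub_setIntegral ⟨K, hW k⟩ ⟨_, hh⟩ hhW.symm] at hWh
  have hfk := hmin k
  rw [energyDiff_eq_sub_setIntegral ⟨K, hW k⟩ ⟨K, hf k⟩
    ((hfW k).symm.mono (compl_subset_compl.2 (ball_subset_ball hρt)))] at hfk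
  linarith [setIntegral_energyDensity_mono ⟨K, hf k⟩ hρt,
    setIntegral_energyDensity_le_add_of_eqOn hh ⟨K, hu⟩ (hhu.mono ball_subset_closedBall) hρt]

theorem isGlobalMinimizer_of_tendsto_of_energyDiff_nonneg (hu : IsGlobalMinimizer u)
    (hf : ∀ k, LipschitzWith K (f k)) (hf0 : ∀ k x, 0 ≤ f k x) (hW : ∀ k, LipschitzWith K (W k))
    (hfv : Tendsto f atTop (𝓝 v)) (hWu : Tendsto W atTop (𝓝 u))
    (hfW : ∀ k, EqOn (f k) (W k) (ball 0 ρ)ᶜ) (hmin : ∀ k, 0 ≤ energyDiff (W k) (f k))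
    (hcomp : ∀ k r h, IsLipschitz h → EqOn h (W k) (ball 0 r)ᶜ →
      (∀ x, h x ∈ uIcc (u x) (W k x)) → energyDiff (W k) h ≤ 0) :
    IsGlobalMinimizer v ∧ EqOn v u (ball 0 ρ)ᶜ := by
  have hvu : EqOn v u (ball 0 ρ)ᶜ := fun x hx ↦ tendsto_nhds_unique (tendsto_pi_nhds.1 hfv x)
    ((tendsto_pi_nhds.1 hWu x).congr fun k ↦ (hfW k hx).symm)
  have hv : IsLipschitz v := ⟨K, lipschitzWith_of_tendsto hf hfv⟩
  have mono {a b : ℝ} {p q : E → ℝ} (hab : a ≤ b) (h : EqOn p q (ball 0 a)ᶜ) :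
      EqOn p q (ball 0 b)ᶜ := h.mono (compl_subset_compl.2 (ball_subset_ball hab))
  have henergy : 0 ≤ energyDiff u v := by
    have hle : ρ ≤ max ρ 1 := le_max_left _ _
    rw [energyDiff_eq_sub_setIntegral hu.isLipschitz hv (mono hle hvu.symm), sub_nonneg]
    exact setIntegral_energyDensity_le_of_tendsto hf hW hfv hWu
      (zero_lt_one.trans_le (le_max_right ρ 1)) (fun k ↦ mono hle (hfW k)) hmin hcomp
  refine ⟨fun R ↦ ⟨hv, fun x ↦ ge_of_tendsto' (tendsto_pi_nhds.1 hfv x) fun k ↦ hf0 k x,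
    fun w hw hw0 r _ hwv ↦ ?_⟩, hvu⟩
  have huv : EqOn u v (ball 0 (max r ρ))ᶜ := mono (le_max_right _ _) hvu.symm
  have hwu : EqOn w u (ball 0 (max r ρ))ᶜ := (mono (le_max_left _ _) hwv).trans huv.symm
  rw [← energyDiff_add hw hu.isLipschitz hv hwu huv]
  exact add_nonneg (hu.energyDiff_nonneg hw hw0 hwu) henergy

end Perturbation

end LimitsOfMinimizers

section SubminimizersAndSuperminimizers

variable {E : Type*} [NormedAddCommGroup E] [InnerProductSpace ℝ E] [FiniteDimensional ℝ E]
  [MeasurableSpace E] [BorelSpace E] {u v : E → ℝ}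

theorem energyDiff_max_left (hu : IsLipschitz u) (hv : IsLipschitz v) :
    energyDiff (fun x ↦ max (u x) (v x)) u = -energyDiff (fun x ↦ min (u x) (v x)) v := by
  rw [energyDiff, energyDiff, ← integral_neg]
  refine integral_congr_ae ?_
  filter_upwards [ae_energyDensity_max_add_min hu hv] with x hx
  linarith

theorem energyDiff_min_left (hu : IsLipschitz u) (hv : IsLipschitz v) :
    energyDiff (fun x ↦ min (u x) (v x)) u = -energyDiff (fun x ↦ max (u x) (v x)) v := by
  rw [energyDiff, energyDiff, ← integral_neg]
  refine integral_congr_ae ?_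
  filter_upwards [ae_energyDensity_max_add_min hu hv] with x hx
  linarith

/-- A subminimizer of the energy: raising a competitor that lies above `W` outside a ball to its
maximum with `W` does not increase the energy. -/
structure IsSubminimizer (W : E → ℝ) : Prop where
  isLipschitz : IsLipschitz W
  nonneg : ∀ x, 0 ≤ W x
  energyDiff_max_nonpos : ∀ ⦃f⦄, IsLipschitz f → (∀ x, 0 ≤ f x) → ∀ ⦃r⦄,
    (∀ x ∉ ball 0 r, W x ≤ f x) → energyDiff (fun x ↦ max (f x) (W x)) f ≤ 0

/-- A superminimizer of the energy: lowering a competitor that lies below `W` outside a ball to its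
minimum with `W` does not increase the energy. -/
structure IsSuperminimizer (W : E → ℝ) : Prop where
  isLipschitz : IsLipschitz W
  nonneg : ∀ x, 0 ≤ W x
  energyDiff_min_nonpos : ∀ ⦃f⦄, IsLipschitz f → (∀ x, 0 ≤ f x) → ∀ ⦃r⦄,
    (∀ x ∉ ball 0 r, f x ≤ W x) → energyDiff (fun x ↦ min (f x) (W x)) f ≤ 0

theorem IsGlobalMinimizer.isSubminimizer (hu : IsGlobalMinimizer u) : IsSubminimizer u where
  isLipschitz := hu.isLipschitz
  nonneg := hu.nonneg
  energyDiff_max_nonpos f hf hf0 r hr := by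
    rw [energyDiff_max_left hf hu.isLipschitz, neg_nonpos]
    exact hu.energyDiff_nonneg (hf.min hu.isLipschitz) (fun x ↦ le_min (hf0 x) (hu.nonneg x))
      fun x hx ↦ min_eq_right (hr x hx)

theorem IsGlobalMinimizer.isSuperminimizer (hu : IsGlobalMinimizer u) : IsSuperminimizer u where
  isLipschitz := hu.isLipschitz
  nonneg := hu.nonneg
  energyDiff_min_nonpos f hf hf0 r hr := by
    rw [energyDiff_min_left hf hu.isLipschitz, neg_nonpos]
    exact hu.energyDiff_nonneg (hf.max hu.isLipschitz) (fun x ↦ le_max_of_le_left (hf0 x))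
      fun x hx ↦ max_eq_right (hr x hx)

theorem IsSubminimizer.max (hu : IsSubminimizer u) (hv : IsSubminimizer v) :
    IsSubminimizer fun x ↦ max (u x) (v x) where
  isLipschitz := hu.isLipschitz.max hv.isLipschitz
  nonneg x := le_max_of_le_left (hu.nonneg x)
  energyDiff_max_nonpos f hf hf0 r hr := by
    have huf (x : E) (hx : x ∉ ball 0 r) : u x ≤ f x := (le_max_left _ _).trans (hr x hx)
    have hvf (x : E) (hx : x ∉ ball 0 r) : v x ≤ Max.max (f x) (u x) :=
      le_max_of_le_left ((le_max_right _ _).trans (hr x hx))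
    have hfu := hf.max hu.isLipschitz
    have hadd := energyDiff_add (hfu.max hv.isLipschitz) hfu hf (fun x hx ↦ max_eq_left (hvf x hx))
      fun x hx ↦ max_eq_left (huf x hx)
    simp only [← max_assoc]
    rw [← hadd]
    exact add_nonpos (hv.energyDiff_max_nonpos hfu (fun x ↦ le_max_of_le_left (hf0 x)) hvf)
      (hu.energyDiff_max_nonpos hf hf0 huf)

theorem IsSuperminimizer.min (hu : IsSuperminimizer u) (hv : IsSuperminimizer v) :
    IsSuperminimizer fun x ↦ min (u x) (v x) where
  isLipschitz := hu.isLipschitz.min hv.isLipschitz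
  nonneg x := le_min (hu.nonneg x) (hv.nonneg x)
  energyDiff_min_nonpos f hf hf0 r hr := by
    have huf (x : E) (hx : x ∉ ball 0 r) : f x ≤ u x := (hr x hx).trans (min_le_left _ _)
    have hvf (x : E) (hx : x ∉ ball 0 r) : Min.min (f x) (u x) ≤ v x :=
      min_le_of_left_le ((hr x hx).trans (min_le_right _ _))
    have hfu := hf.min hu.isLipschitz
    have hadd := energyDiff_add (hfu.min hv.isLipschitz) hfu hf (fun x hx ↦ min_eq_left (hvf x hx))
      fun x hx ↦ min_eq_left (huf x hx)
    simp only [← min_assoc]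
    rw [← hadd]
    exact add_nonpos (hv.energyDiff_min_nonpos hfu (fun x ↦ le_min (hf0 x) (hu.nonneg x)) hvf)
      (hu.energyDiff_min_nonpos hf hf0 huf)

end SubminimizersAndSuperminimizers

section MinimizingCones

variable {E : Type*} [NormedAddCommGroup E] [InnerProductSpace ℝ E] [FiniteDimensional ℝ E]
  [MeasurableSpace E] [BorelSpace E] {u U : E → ℝ} {p x : E} {d r m ρ s R : ℝ} {L : ℝ≥0}

theorem IsMinimizerOnBall.mono (hu : IsMinimizerOnBall R u) (hr : r ≤ R) :
    IsMinimizerOnBall r u where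
  isLipschitz := hu.isLipschitz
  nonneg := hu.nonneg
  energyDiff_nonneg _ hv hv0 _ hr' h := hu.energyDiff_nonneg hv hv0 (hr'.trans_le hr) h

theorem exists_forall_isMinimizerOnBall_le_apply_zero [Nontrivial E] (hm : 0 < m) (hρ : 0 < ρ)
    (hps : ‖p‖ < s) (hR : ‖p‖ + s < R) : ∃ c, 0 < c ∧ ∀ u : E → ℝ, IsMinimizerOnBall R u →
      (∀ x ∈ closedBall p ρ, m ≤ u x) → (∀ x ∈ ball 0 R, x ≠ 0 → 0 < u x) → c ≤ u 0 := by
  set β : ℝ := Module.finrank ℝ E / ρ ^ 2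
  have hn : (0 : ℝ) < Module.finrank ℝ E := by exact_mod_cast Module.finrank_pos
  have hβ : 0 < β := by positivity
  have hβρ : β * ρ ^ 2 = Module.finrank ℝ E := div_mul_cancel₀ _ (by positivity)
  set P : E → ℝ := gaussianBarrier m β s p
  have hPs (x : E) : P x ≤ 0 ↔ s ≤ ‖x - p‖ :=
    gaussianBarrier_nonpos_iff hm hβ ((norm_nonneg p).trans hps.le)
  refine ⟨P 0, ?_, fun u hu hmu hpos ↦ ?_⟩
  · rwa [← not_le, hPs, zero_sub, norm_neg, not_le]
  have hPR (x : E) (hx : ‖p‖ + s ≤ ‖x‖) : P x ≤ 0 :=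
    (hPs x).2 (by linarith [norm_sub_norm_le x p])
  have hPu (x : E) (hx : x ∉ ball (0 : E) (‖p‖ + s)) : P x ≤ u x :=
    (hPR x (by simpa only [mem_ball_zero_iff, not_lt] using hx)).trans (hu.nonneg x)
  have hPL : IsLipschitz P := ⟨_, lipschitzWith_gaussianBarrier hβ.le⟩
  refine le_of_energyDiff_max_nonneg hu.isLipschitz hu.nonneg hPL contDiff_gaussianBarrier hPu
    (hu.energyDiff_nonneg (hu.isLipschitz.max hPL) (fun x ↦ le_max_of_le_left (hu.nonneg x)) hR
      fun x hx ↦ max_eq_left (hPu x hx)) (fun x hx ↦ laplacian_gaussianBarrier_pos hm hβ ?_) ?_ 0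
  · have hxρ : ρ < ‖x - p‖ := by
      by_contra! hle
      have := hmu x (mem_closedBall_iff_norm.2 hle)
      exact hx.not_ge ((gaussianBarrier_le hm.le hβ.le).trans this)
    have : β * ρ ^ 2 < β * ‖x - p‖ ^ 2 := by gcongr
    linarith
  · filter_upwards [Measure.ae_ne volume (0 : E)] with x hx0 hux hlt
    refine absurd hux (hpos x ?_ hx0).ne'
    rw [mem_ball_zero_iff]
    by_contra! hRx
    exact (hPR x (hR.le.trans hRx)).not_gt (hux ▸ hlt)

/-- Nonzero, positively one-homogeneous global minimizers of the energy. -/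
structure IsMinimizingCone (U : E → ℝ) : Prop where
  isGlobalMinimizer : IsGlobalMinimizer U
  map_smul : ∀ t : ℝ, 0 < t → ∀ x, U (t • x) = t * U x
  exists_pos : ∃ y, 0 < U y

namespace IsMinimizingCone

theorem apply_zero (hU : IsMinimizingCone U) : U 0 = 0 := by
  have := hU.map_smul 2 two_pos 0
  rw [smul_zero] at this
  linarith

theorem ne_zero (hU : IsMinimizingCone U) (hx : 0 < U x) : x ≠ 0 := by
  rintro rfl
  exact hx.ne' hU.apply_zero

theorem nontrivial (hU : IsMinimizingCone U) : Nontrivial E :=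
  let ⟨y, hy⟩ := hU.exists_pos
  ⟨y, 0, hU.ne_zero hy⟩

theorem le_mul_norm (hU : IsMinimizingCone U) (hL : LipschitzWith L U) (x : E) :
    U x ≤ L * ‖x‖ := by
  have := hL.le_add_mul x 0
  rwa [hU.apply_zero, zero_add, dist_zero_right] at this

theorem rescale_eq (hU : IsMinimizingCone U) (hd : 0 < d) : rescale d U = U := by
  ext x
  rw [rescale, hU.map_smul d hd, inv_mul_cancel_left₀ hd.ne']

theorem le_rescale (hU : IsMinimizingCone U) (hd : 0 < d) (h : ∀ x, U x ≤ u x) (x : E) :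
    U x ≤ rescale d u x := by
  conv_lhs => rw [← hU.rescale_eq hd]
  exact mul_le_mul_of_nonneg_left (h _) (inv_nonneg.2 hd.le)

theorem rescale_le (hU : IsMinimizingCone U) (hd : 0 < d) (h : ∀ x, u x ≤ U x) (x : E) :
    rescale d u x ≤ U x := by
  conv_rhs => rw [← hU.rescale_eq hd]
  exact mul_le_mul_of_nonneg_left (h _) (inv_nonneg.2 hd.le)

theorem exists_forall_mul_le_apply_zero (hU : IsMinimizingCone U) :
    ∃ c, 0 < c ∧ ∀ (u : E → ℝ) (d : ℝ), 0 < d → IsMinimizerOnBall d u → (∀ x, U x ≤ u x) →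
      (∀ x ∈ ball 0 d, x ≠ 0 → 0 < u x) → c * d ≤ u 0 := by
  have := hU.nontrivial
  obtain ⟨y, hy⟩ := hU.exists_pos
  have hy0 : 0 < ‖y‖ := norm_pos_iff.2 (hU.ne_zero hy)
  set p : E := (4 * ‖y‖)⁻¹ • y
  have hp : ‖p‖ = 1 / 4 := by
    rw [norm_smul, Real.norm_of_nonneg (by positivity)]
    field_simp
  have hUp : 0 < U p := by
    rw [hU.map_smul _ (by positivity)]
    positivity
  obtain ⟨ρ, hρ, hUρ⟩ := nhds_basis_closedBall.eventually_iff.1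
    ((hU.isGlobalMinimizer.isLipschitz.continuous.tendsto p).eventually_const_le (half_lt_self hUp))
  obtain ⟨c, hc, hmin⟩ := exists_forall_isMinimizerOnBall_le_apply_zero (half_pos hUp) hρ
    (p := p) (s := 1 / 2) (R := 1) (by linarith) (by linarith)
  refine ⟨c, hc, fun u d hd hu hUu hpos ↦ ?_⟩
  have hu' : IsMinimizerOnBall 1 (rescale d u) := by
    simpa only [div_self hd.ne'] using hu.rescale hd
  have := hmin _ hu' (fun x hx ↦ (hUρ hx).trans (hU.le_rescale hd hUu x)) fun x hx hx0 ↦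
    mul_pos (inv_pos.2 hd) (hpos _ (by
      rw [mem_ball_zero_iff] at hx ⊢
      rw [norm_smul, Real.norm_of_nonneg hd.le]
      exact mul_lt_of_lt_one_right hd hx) (smul_ne_zero hd.ne' hx0))
  rwa [rescale, smul_zero, inv_mul_eq_div, le_div_iff₀ hd] at this

theorem exists_norm_eq_one_apply_eq_zero (hU : IsMinimizingCone U) : ∃ x, ‖x‖ = 1 ∧ U x = 0 := by
  obtain ⟨x, hx, hUx⟩ : ∃ x, x ≠ 0 ∧ U x = 0 := by
    by_contra! hne
    obtain ⟨c, hc, hmin⟩ := hU.exists_forall_mul_le_apply_zero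
    have := hmin U 1 one_pos (hU.isGlobalMinimizer 1) (fun _ ↦ le_rfl) fun x _ hx ↦
      (hU.isGlobalMinimizer.nonneg x).lt_of_ne' (hne x hx)
    linarith [hU.apply_zero]
  refine ⟨‖x‖⁻¹ • x, norm_smul_inv_norm (𝕜 := ℝ) hx, ?_⟩
  rw [hU.map_smul _ (inv_pos.2 (norm_pos_iff.2 hx)), hUx, mul_zero]

theorem exists_norm_eq_one_apply_pos (hU : IsMinimizingCone U) : ∃ x, ‖x‖ = 1 ∧ 0 < U x := by
  obtain ⟨y, hy⟩ := hU.exists_pos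
  have hy0 := hU.ne_zero hy
  refine ⟨‖y‖⁻¹ • y, norm_smul_inv_norm (𝕜 := ℝ) hy0, ?_⟩
  rw [hU.map_smul _ (inv_pos.2 (norm_pos_iff.2 hy0))]
  positivity

end IsMinimizingCone

end MinimizingCones

section ApproximatingMinimizers

section Cutoff

variable {E : Type*} [SeminormedAddCommGroup E] {W : E → ℝ} {L M : ℝ≥0}

theorem lipschitzWith_cutoff (M : ℝ≥0) :
    LipschitzWith (2 * M) fun x : E ↦ 2 * M * max (1 - ‖x‖) 0 := by
  have h : LipschitzWith 1 fun x : E ↦ max (1 - ‖x‖) 0 := by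
    simpa only [zero_add] using ((LipschitzWith.const 1).sub lipschitzWith_one_norm).max_const 0
  refine .of_dist_le_mul fun x y ↦ ?_
  have := h.dist_le_mul x y
  rw [Real.dist_eq, ← mul_sub, abs_mul, abs_of_nonneg (by positivity), ← Real.dist_eq]
  push_cast at this ⊢
  rw [one_mul] at this
  gcongr

theorem exists_lipschitzWith_le_max (hW : LipschitzWith L W) (hW0 : ∀ x, 0 ≤ W x) (M : ℝ≥0) :
    ∃ hi, LipschitzWith (L + 2 * M) hi ∧ W ≤ hi ∧ (∀ x, hi x ≤ max (W x) M) ∧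
      EqOn W hi (ball 0 1)ᶜ ∧ ∀ x ∈ ball 0 (1 / 2), hi x = max (W x) M := by
  set T : E → ℝ := fun x ↦ 2 * M * max (1 - ‖x‖) 0
  refine ⟨fun x ↦ max (W x) (min (W x + T x) M), ?_, fun x ↦ le_max_left _ _,
    fun x ↦ max_le_max_left _ (min_le_right _ _), fun x hx ↦ ?_, fun x hx ↦ ?_⟩
  · exact (hW.max ((hW.add (lipschitzWith_cutoff M)).min_const M)).weaken (by simp)
  · rw [mem_compl_iff, mem_ball_zero_iff, not_lt] at hx
    have hT : T x = 0 := by simp only [T, max_eq_right (sub_nonpos.2 hx), mul_zero]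
    simp only [hT, add_zero, max_eq_left (min_le_left _ _)]
  · rw [mem_ball_zero_iff] at hx
    have hT : M ≤ T x := by
      simp only [T]
      nlinarith [le_max_left (1 - ‖x‖) 0, M.coe_nonneg]
    simp only [min_eq_right (hT.trans (le_add_of_nonneg_left (hW0 x)))]

theorem exists_lipschitzWith_le (hW : LipschitzWith L W) (hW0 : ∀ x, 0 ≤ W x) (M : ℝ≥0) :
    ∃ lo, LipschitzWith (L + 2 * M) lo ∧ lo ≤ W ∧ (∀ x, 0 ≤ lo x) ∧ EqOn lo W (ball 0 1)ᶜ ∧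
      ∀ x ∈ ball 0 (1 / 2), W x ≤ M → lo x = 0 := by
  set T : E → ℝ := fun x ↦ 2 * M * max (1 - ‖x‖) 0
  refine ⟨fun x ↦ max (W x - T x) 0, (hW.sub (lipschitzWith_cutoff M)).max_const 0,
    fun x ↦ max_le (sub_le_self _ (by positivity)) (hW0 x), fun x ↦ le_max_right _ _,
    fun x hx ↦ ?_, fun x hx hWM ↦ ?_⟩
  · rw [mem_compl_iff, mem_ball_zero_iff, not_lt] at hx
    have hT : T x = 0 := by simp only [T, max_eq_right (sub_nonpos.2 hx), mul_zero]
    simp only [hT, sub_zero, max_eq_left (hW0 x)]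
  · rw [mem_ball_zero_iff] at hx
    have hT : M ≤ T x := by
      simp only [T]
      nlinarith [le_max_left (1 - ‖x‖) 0, M.coe_nonneg]
    exact max_eq_right (sub_nonpos.2 (hWM.trans hT))

end Cutoff

variable {E : Type*} [NormedAddCommGroup E] [InnerProductSpace ℝ E] [FiniteDimensional ℝ E]
  [MeasurableSpace E] [BorelSpace E] {u v W ψ lo hi : E → ℝ} {r R M : ℝ}

theorem energyDiff_min_max_const_nonpos (hv : IsLipschitz v) (hW : IsLipschitz W) (hM : 0 < M)
    (hr : ∀ x ∉ ball 0 r, v x ≤ max (W x) M) (hWM : ∀ x ∈ ball 0 r, W x ≤ M) :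
    energyDiff (fun x ↦ min (v x) (max (W x) M)) v ≤ 0 := by
  have hmin := hv.min (hW.max (isLipschitz_const M))
  refine integral_nonpos_of_ae ?_
  filter_upwards [ae_energyDensity_eq hmin hv, ae_energyDensity_eq hmin (isLipschitz_const M)]
    with x hxv hxM
  refine sub_nonpos.2 ?_
  rcases le_or_gt (v x) (max (W x) M) with hx | hx
  · exact (hxv (min_eq_left hx)).le
  · have hWx : max (W x) M = M := max_eq_right (hWM x (by_contra fun h ↦ hx.not_ge (hr x h)))
    rw [hWx] at hx
    rw [hxM (by rw [hWx, min_eq_right hx.le])]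
    simp [energyDensity, gradient, hM, hM.trans hx]

theorem isMinimizerOnBall_of_isSubminimizer (hW : IsSubminimizer W) (hM : 0 < M)
    (hWM : ∀ x ∈ ball 0 R, W x ≤ M) (hhi : ∀ x, hi x ≤ max (W x) M)
    (hhiR : ∀ x ∈ ball 0 R, hi x = max (W x) M) (hψ : IsLipschitz ψ) (hψI : ψ ∈ Icc W hi)
    (hmin : ∀ v ∈ Icc W hi, IsLipschitz v → 0 ≤ energyDiff v ψ) : IsMinimizerOnBall R ψ where
  isLipschitz := hψ
  nonneg x := (hW.nonneg x).trans (hψI.1 x)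
  energyDiff_nonneg v hv hv0 r hr hvψ := by
    have hrR : ball (0 : E) r ⊆ ball 0 R := ball_subset_ball hr.le
    -- Truncate the competitor from above by `max W M`, then raise it to `W`.
    set v₁ : E → ℝ := fun x ↦ min (v x) (max (W x) M)
    set v₂ : E → ℝ := fun x ↦ max (v₁ x) (W x)
    have hv₁L : IsLipschitz v₁ := hv.min (hW.isLipschitz.max (isLipschitz_const M))
    have hv₂L : IsLipschitz v₂ := hv₁L.max hW.isLipschitz
    have hvM (x : E) (hx : x ∉ ball 0 r) : v x ≤ max (W x) M :=
      (hvψ hx).trans_le ((hψI.2 x).trans (hhi x))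
    have hv₁v : EqOn v₁ v (ball 0 r)ᶜ := fun x hx ↦ min_eq_left (hvM x hx)
    have hWv₁ (x : E) (hx : x ∉ ball 0 r) : W x ≤ v₁ x := by
      rw [hv₁v hx, hvψ hx]
      exact hψI.1 x
    have hv₂v₁ : EqOn v₂ v₁ (ball 0 r)ᶜ := fun x hx ↦ max_eq_left (hWv₁ x hx)
    have hv₂hi : v₂ ≤ hi := fun x ↦ by
      by_cases hx : x ∈ ball 0 r
      · rw [hhiR x (hrR hx)]
        exact max_le (min_le_right _ _) (le_max_left _ _)
      · rw [hv₂v₁ hx, hv₁v hx, hvψ hx]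
        exact hψI.2 x
    have h₁ := energyDiff_min_max_const_nonpos hv hW.isLipschitz hM hvM fun x hx ↦ hWM x (hrR hx)
    have h₂ := hW.energyDiff_max_nonpos hv₁L
      (fun x ↦ le_min (hv0 x) (le_max_of_le_right hM.le)) hWv₁
    have h₃ := hmin v₂ ⟨fun x ↦ le_max_right _ _, hv₂hi⟩ hv₂L
    have h₂₁ := energyDiff_add hv₂L hv₁L hv hv₂v₁ hv₁v
    have h₂ψ := energyDiff_add hv₂L hv hψ (hv₂v₁.trans hv₁v) hvψ
    linarith

theorem isMinimizerOnBall_of_isSuperminimizer (hW : IsSuperminimizer W) (hlo : ∀ x, 0 ≤ lo x)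
    (hloR : ∀ x ∈ ball 0 R, lo x = 0) (hψ : IsLipschitz ψ) (hψI : ψ ∈ Icc lo W)
    (hmin : ∀ v ∈ Icc lo W, IsLipschitz v → 0 ≤ energyDiff v ψ) : IsMinimizerOnBall R ψ where
  isLipschitz := hψ
  nonneg x := (hlo x).trans (hψI.1 x)
  energyDiff_nonneg v hv hv0 r hr hvψ := by
    set v₁ : E → ℝ := fun x ↦ min (v x) (W x)
    have hvW (x : E) (hx : x ∉ ball 0 r) : v x ≤ W x := (hvψ hx).trans_le (hψI.2 x)
    have hv₁v : EqOn v₁ v (ball 0 r)ᶜ := fun x hx ↦ min_eq_left (hvW x hx)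
    have hlov₁ : lo ≤ v₁ := fun x ↦ by
      by_cases hx : x ∈ ball 0 r
      · rw [hloR x (ball_subset_ball hr.le hx)]
        exact le_min (hv0 x) (hW.nonneg x)
      · rw [hv₁v hx, hvψ hx]
        exact hψI.1 x
    have h₁ := hW.energyDiff_min_nonpos hv hv0 hvW
    have h₂ := hmin v₁ ⟨hlov₁, fun x ↦ min_le_right _ _⟩ (hv.min hW.isLipschitz)
    have h₁ψ := energyDiff_add (hv.min hW.isLipschitz) hv hψ hv₁v hvψ
    linarith

variable (E) in
theorem exists_forall_isSubminimizer_exists_isMinimizerOnBall [Nontrivial E] (L : ℝ≥0) {M : ℝ≥0}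
    (hM : 0 < M) : ∃ C, ∀ W : E → ℝ, LipschitzWith L W → IsSubminimizer W →
      (∀ x ∈ ball 0 1, W x ≤ M) → ∃ ψ, LipschitzWith C ψ ∧ W ≤ ψ ∧ EqOn ψ W (ball 0 1)ᶜ ∧
        0 ≤ energyDiff W ψ ∧ IsMinimizerOnBall (1 / 2) ψ := by
  obtain ⟨C, hC⟩ := exists_lipschitzWith_minimizer_between E (L + 2 * M)
  refine ⟨C, fun W hWL hW hWM ↦ ?_⟩
  obtain ⟨hi, hhiL, hWhi, hhi, hoff, hhi2⟩ := exists_lipschitzWith_le_max hWL hW.nonneg M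
  obtain ⟨ψ, hψI, hψL, hmin⟩ :=
    hC W hi 1 (hWL.weaken le_self_add) hhiL hW.nonneg hWhi hoff
  refine ⟨ψ, hψL, hψI.1, fun x hx ↦ ((hψI.2 x).trans (hoff hx).ge).antisymm (hψI.1 x),
    hmin W (left_mem_Icc.2 hWhi) hW.isLipschitz,
    isMinimizerOnBall_of_isSubminimizer hW hM
      (fun x hx ↦ hWM x (ball_subset_ball (by norm_num) hx)) hhi hhi2 ⟨C, hψL⟩ hψI hmin⟩

variable (E) in
theorem exists_forall_isSuperminimizer_exists_isMinimizerOnBall [Nontrivial E] (L M : ℝ≥0) :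
    ∃ C, ∀ W : E → ℝ, LipschitzWith L W → IsSuperminimizer W →
      (∀ x ∈ ball 0 1, W x ≤ M) → ∃ ψ, LipschitzWith C ψ ∧ ψ ≤ W ∧ EqOn ψ W (ball 0 1)ᶜ ∧
        0 ≤ energyDiff W ψ ∧ IsMinimizerOnBall (1 / 2) ψ := by
  obtain ⟨C, hC⟩ := exists_lipschitzWith_minimizer_between E (L + 2 * M)
  refine ⟨C, fun W hWL hW hWM ↦ ?_⟩
  obtain ⟨lo, hloL, hloW, hlo, hoff, hlo2⟩ := exists_lipschitzWith_le hWL hW.nonneg M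
  obtain ⟨ψ, hψI, hψL, hmin⟩ :=
    hC lo W 1 hloL (hWL.weaken le_self_add) hlo hloW hoff
  exact ⟨ψ, hψL, hψI.2, fun x hx ↦ (hψI.2 x).antisymm ((hoff hx).ge.trans (hψI.1 x)),
    hmin W (right_mem_Icc.2 hloW) hW.isLipschitz,
    isMinimizerOnBall_of_isSuperminimizer hW hlo
      (fun x hx ↦ hlo2 x hx (hWM x (ball_subset_ball (by norm_num) hx))) ⟨C, hψL⟩ hψI hmin⟩

/-- A minimizer `ψ` on the half unit ball that approximates `U` to order `ε` outside the unit ball,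
obtained from an energy minimization between obstacles. The function `W` is the obstacle, which is
uniformly close to `U`; `energyDiff_nonneg` and `energyDiff_nonpos` are what remains of the
minimality of `ψ` and of the sub- or superminimality of `W` in the limit `ε → 0`. -/
structure IsApproximant (U : E → ℝ) (K : ℝ≥0) (ε : ℝ) (W ψ : E → ℝ) : Prop where
  lipschitzWith : LipschitzWith K ψ
  lipschitzWith_obstacle : LipschitzWith K W
  abs_obstacle_sub_le : ∀ x, |W x - U x| ≤ K * ε
  eqOn : EqOn ψ W (ball 0 1)ᶜ
  isMinimizerOnBall : IsMinimizerOnBall (1 / 2) ψ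
  energyDiff_nonneg : 0 ≤ energyDiff W ψ
  energyDiff_nonpos : ∀ ⦃h⦄, IsLipschitz h → ∀ ⦃r⦄, EqOn h W (ball 0 r)ᶜ →
    (∀ x, h x ∈ uIcc (U x) (W x)) → energyDiff W h ≤ 0

theorem IsSubminimizer.energyDiff_nonpos (hW : IsSubminimizer W) (hu0 : ∀ x, 0 ≤ u x)
    (hu : IsLipschitz u) (huW : u ≤ W) (h : EqOn u W (ball 0 r)ᶜ) : energyDiff W u ≤ 0 := by
  simpa only [fun x ↦ max_eq_right (huW x)] using
    hW.energyDiff_max_nonpos hu hu0 fun x hx ↦ (h hx).ge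

theorem IsSuperminimizer.energyDiff_nonpos (hW : IsSuperminimizer W) (hu : IsLipschitz u)
    (hWu : W ≤ u) (h : EqOn u W (ball 0 r)ᶜ) : energyDiff W u ≤ 0 := by
  simpa only [fun x ↦ min_eq_right (hWu x)] using
    hW.energyDiff_min_nonpos hu (fun x ↦ (hW.nonneg x).trans (hWu x)) fun x hx ↦ (h hx).le

end ApproximatingMinimizers

section ConeApproximants

variable {E : Type*} [NormedAddCommGroup E] [InnerProductSpace ℝ E] [FiniteDimensional ℝ E]
  [MeasurableSpace E] [BorelSpace E] {u U : E → ℝ} {ε δ : ℝ} {L : ℝ≥0}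

theorem IsMinimizingCone.exists_isApproximant_ge (hU : IsMinimizingCone U) :
    ∃ K : ℝ≥0, ∀ ε : ℝ, 0 < ε → ε ≤ 1 →
      ∃ W ψ, IsApproximant U K ε W ψ ∧ (∀ x, U x ≤ ψ x) ∧ 0 < ψ 0 := by
  have := hU.nontrivial
  obtain ⟨y, hy⟩ := hU.exists_pos
  obtain ⟨L, hL⟩ := hU.isGlobalMinimizer.isLipschitz
  obtain ⟨C, hC⟩ := exists_forall_isSubminimizer_exists_isMinimizerOnBall E L
    (M := L * (1 + ‖y‖₊) + 1) (by positivity)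
  refine ⟨max (max L C) (L * ‖y‖₊), fun ε hε hε1 ↦ ?_⟩
  set W : E → ℝ := fun x ↦ max (U x) (U (x + ε • y))
  have hUW (x : E) : U x ≤ W x := le_max_left _ _
  have hWU (x : E) : W x ≤ U x + L * ‖y‖ * ε := by
    have := hL.le_add_mul (x + ε • y) x
    rw [dist_self_add_left, norm_smul, Real.norm_of_nonneg hε.le] at this
    exact max_le (le_add_of_nonneg_right (by positivity)) (by linarith)
  have hWL : LipschitzWith L W := by
    simpa only [max_self] using hL.max (lipschitzWith_comp_add_right hL (ε • y))
  have hWsub : IsSubminimizer W := hU.isGlobalMinimizer.isSubminimizer.max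
    (hU.isGlobalMinimizer.comp_add_right (ε • y)).isSubminimizer
  obtain ⟨ψ, hψL, hWψ, hoff, henergy, hmin⟩ := hC W hWL hWsub fun x hx ↦ by
    rw [mem_ball_zero_iff] at hx
    have h₁ : (L : ℝ) * ‖x‖ ≤ L * 1 := by gcongr
    have h₂ : L * ‖y‖ * ε ≤ L * ‖y‖ * 1 := by gcongr
    push_cast
    linarith [hWU x, hU.le_mul_norm hL x]
  refine ⟨W, ψ, ⟨hψL.weaken (by simp), hWL.weaken (by simp), fun x ↦ ?_, hoff, hmin, henergy,
    fun h hh r hhW hhI ↦ ?_⟩, fun x ↦ (hUW x).trans (hWψ x), ?_⟩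
  · rw [abs_of_nonneg (sub_nonneg.2 (hUW x))]
    have : L * ‖y‖ * ε ≤ (max (max L C) (L * ‖y‖₊) : ℝ≥0) * ε := by
      gcongr
      exact le_max_right (max (L : ℝ) C) _
    linarith [hWU x]
  · simp only [fun x ↦ uIcc_of_le (hUW x)] at hhI
    exact hWsub.energyDiff_nonpos (fun x ↦ (hU.isGlobalMinimizer.nonneg x).trans (hhI x).1) hh
      (fun x ↦ (hhI x).2) hhW
  · calc 0 < ε * U y := mul_pos hε hy
      _ = U (0 + ε • y) := by rw [zero_add, hU.map_smul ε hε]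
      _ ≤ ψ 0 := (le_max_right _ _).trans (hWψ 0)

theorem exists_isSuperminimizer_forall_mem_le (hu : IsGlobalMinimizer u) (hL : LipschitzWith L u)
    (hε : 0 ≤ ε) {t : Set E} (ht : t.Finite) (htε : t ⊆ closedBall 0 ε) :
    ∃ W, LipschitzWith L W ∧ IsSuperminimizer W ∧ (∀ x, u x - L * ε ≤ W x) ∧ (∀ x, W x ≤ u x) ∧
      ∀ y ∈ t, ∀ x, W x ≤ u (x + y) := by
  induction t, ht using Set.Finite.induction_on with
  | empty =>
    exact ⟨u, hL, hu.isSuperminimizer, fun x ↦ sub_le_self _ (by positivity), fun x ↦ le_rfl,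
      fun y hy ↦ hy.elim⟩
  | @insert y t _ _ ih =>
    rw [insert_subset_iff, mem_closedBall_zero_iff] at htε
    obtain ⟨W, hWL, hW, hlow, hWu, hWt⟩ := ih htε.2
    refine ⟨fun x ↦ min (W x) (u (x + y)), ?_, hW.min (hu.comp_add_right y).isSuperminimizer,
      fun x ↦ le_min (hlow x) ?_, fun x ↦ min_le_of_left_le (hWu x), ?_⟩
    · simpa only [max_self] using hWL.min (lipschitzWith_comp_add_right hL y)
    · have h₁ := hL.le_add_mul x (x + y)
      rw [dist_self_add_right] at h₁
      have h₂ : L * ‖y‖ ≤ L * ε := mul_le_mul_of_nonneg_left htε.1 L.coe_nonneg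
      linarith
    · rintro z (rfl | hz) x
      · exact min_le_right _ _
      · exact min_le_of_left_le (hWt z hz x)

theorem exists_isSuperminimizer_le_on_closedBall (hu : IsGlobalMinimizer u)
    (hL : LipschitzWith L u) (hu0 : u 0 = 0) (hε : 0 ≤ ε) (hδ : 0 < δ) :
    ∃ W, LipschitzWith L W ∧ IsSuperminimizer W ∧ (∀ x, u x - L * ε ≤ W x) ∧ (∀ x, W x ≤ u x) ∧
      ∀ x ∈ closedBall 0 ε, W x ≤ L * δ := by
  obtain ⟨t, htε, ht, hcover⟩ := (isCompact_closedBall (0 : E) ε).finite_cover_balls hδ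
  obtain ⟨W, hWL, hW, hlow, hWu, hWt⟩ := exists_isSuperminimizer_forall_mem_le hu hL hε ht htε
  refine ⟨W, hWL, hW, hlow, hWu, fun x hx ↦ ?_⟩
  have hx' : -x ∈ closedBall (0 : E) ε := by simpa using hx
  obtain ⟨y, hy, hxy⟩ := mem_iUnion₂.1 (hcover hx')
  rw [mem_ball, dist_eq_norm, ← norm_neg, neg_sub, sub_neg_eq_add, add_comm] at hxy
  calc W x ≤ u (x + y) := hWt y hy x
    _ ≤ u 0 + L * dist (x + y) 0 := hL.le_add_mul _ _
    _ ≤ L * δ := by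
      rw [hu0, zero_add, dist_zero_right]
      gcongr

theorem IsMinimizingCone.exists_isApproximant_le (hU : IsMinimizingCone U) :
    ∃ K : ℝ≥0, ∀ ε : ℝ, 0 < ε → ε < 1 / 2 →
      ∃ W ψ, IsApproximant U K ε W ψ ∧ (∀ x, ψ x ≤ U x) ∧ ∀ x ∈ ball 0 (ε / 2), ψ x = 0 := by
  have := hU.nontrivial
  obtain ⟨L, hL⟩ := hU.isGlobalMinimizer.isLipschitz
  obtain ⟨C, hC⟩ := exists_forall_isSuperminimizer_exists_isMinimizerOnBall E L L
  obtain ⟨c, hc, hnondeg⟩ := exists_forall_isMinimizerOnBall_eq_zero E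
  refine ⟨max L C, fun ε hε hε2 ↦ ?_⟩
  obtain ⟨W, hWL, hW, hlow, hWU, hsmall⟩ := exists_isSuperminimizer_le_on_closedBall
    hU.isGlobalMinimizer hL hU.apply_zero hε.le (δ := c * ε / (L + 1)) (by positivity)
  obtain ⟨ψ, hψL, hψW, hoff, henergy, hmin⟩ := hC W hWL hW fun x hx ↦ by
    have : L * ‖x‖ ≤ L * 1 := by
      gcongr
      exact (mem_ball_zero_iff.1 hx).le
    linarith [hWU x, hU.le_mul_norm hL x]
  refine ⟨W, ψ, ⟨hψL.weaken (by simp), hWL.weaken (by simp), fun x ↦ ?_, hoff, hmin, henergy,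
    fun h hh r hhW hhI ↦ ?_⟩, fun x ↦ (hψW x).trans (hWU x), fun x hx ↦ ?_⟩
  · rw [abs_sub_comm, abs_of_nonneg (sub_nonneg.2 (hWU x))]
    have : L * ε ≤ (max L C : ℝ≥0) * ε := by
      gcongr
      exact le_max_left _ _
    linarith [hlow x]
  · simp only [fun x ↦ uIcc_of_ge (hWU x)] at hhI
    exact hW.energyDiff_nonpos hh (fun x ↦ (hhI x).1) hhW
  · refine hnondeg ψ _ 0 ε hmin hε (by rwa [norm_zero, zero_add]) (fun z hz ↦ ?_) x
      (ball_subset_closedBall hx)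
    calc ψ z ≤ W z := hψW z
      _ ≤ L * (c * ε / (L + 1)) := hsmall z hz
      _ ≤ c * ε := by
        rw [mul_div_assoc', div_le_iff₀ (by positivity)]
        nlinarith [mul_pos hc hε]

end ConeApproximants

section BlowUp

theorem exists_mem_apply_mem_of_tendsto {X : Type*} [PseudoMetricSpace X] {f : ℕ → X → ℝ}
    {g : X → ℝ} {K : ℝ≥0} {s : Set X} {C : Set ℝ} (hs : IsCompact s) (hC : IsClosed C)
    (hf : ∀ k, LipschitzWith K (f k)) (h : Tendsto f atTop (𝓝 g))
    (hmem : ∀ k, ∃ x ∈ s, f k x ∈ C) : ∃ x ∈ s, g x ∈ C := by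
  choose z hzs hzC using hmem
  obtain ⟨x, hx, φ, hφ, hzx⟩ := hs.tendsto_subseq hzs
  refine ⟨x, hx, hC.mem_of_tendsto (b := atTop) (f := fun j ↦ f (φ j) (z (φ j))) ?_
    (.of_forall fun j ↦ hzC (φ j))⟩
  have hfx := (tendsto_pi_nhds.1 h x).comp hφ.tendsto_atTop
  have hbound : Tendsto (fun j ↦ K * dist (z (φ j)) x) atTop (𝓝 0) := by
    simpa only [mul_zero, Function.comp_apply] using
      (tendsto_iff_dist_tendsto_zero.1 hzx).const_mul (K : ℝ)
  exact hfx.congr_dist (squeeze_zero (fun _ ↦ dist_nonneg)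
    (fun j ↦ (dist_comm _ _).trans_le ((hf (φ j)).dist_le_mul _ _)) hbound)

section Normalization

variable {E : Type*} [NormedAddCommGroup E] {u : E → ℝ} {z : E} {ρ : ℝ}

theorem exists_mem_norm_le_disjoint_ball [ProperSpace E] {S : Set E} (hS : IsClosed S)
    (hz : z ∈ S) :
    ∃ w ∈ S, ‖w‖ ≤ ‖z‖ ∧ Disjoint (ball 0 ‖w‖) S := by
  obtain ⟨w, hw, hdist⟩ := hS.exists_infDist_eq_dist ⟨z, hz⟩ 0
  rw [dist_zero_left] at hdist
  exact ⟨w, hw, by simpa only [hdist, dist_zero_left] using infDist_le_dist_of_mem (x := 0) hz,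
    hdist ▸ disjoint_ball_infDist⟩

variable [NormedSpace ℝ E]

theorem smul_mem_ball_zero {d : ℝ} (hd : 0 < d) {x : E} (hx : x ∈ ball 0 1) :
    d • x ∈ ball (0 : E) d := by
  rw [mem_ball_zero_iff] at hx ⊢
  rw [norm_smul, Real.norm_of_nonneg hd.le]
  exact mul_lt_of_lt_one_right hd hx

variable [ProperSpace E]

theorem exists_forall_ball_rescale_pos (hu : Continuous u) (hu0 : ∀ x, 0 ≤ u x) (h0 : 0 < u 0)
    (hz : u z = 0) : ∃ d, 0 < d ∧ d ≤ ‖z‖ ∧ (∀ x ∈ ball 0 1, 0 < rescale d u x) ∧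
      ∃ w, ‖w‖ = 1 ∧ rescale d u w = 0 := by
  obtain ⟨w, hw, hwz, hdisj⟩ :=
    exists_mem_norm_le_disjoint_ball (isClosed_eq hu continuous_const) hz
  have hw0 : w ≠ 0 := by
    rintro rfl
    exact h0.ne' hw
  have hd : 0 < ‖w‖ := norm_pos_iff.2 hw0
  refine ⟨‖w‖, hd, hwz, fun x hx ↦ ?_, ‖w‖⁻¹ • w, norm_smul_inv_norm (𝕜 := ℝ) hw0, ?_⟩
  · exact mul_pos (inv_pos.2 hd)
      ((hu0 _).lt_of_ne' (hdisj.notMem_of_mem_left (smul_mem_ball_zero hd hx)))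
  · rw [rescale, smul_inv_smul₀ hd.ne', show u w = 0 from hw, mul_zero]

theorem exists_forall_ball_rescale_eq_zero (hu0 : ∀ x, 0 ≤ u x) (hρ : 0 < ρ)
    (h0 : ∀ x ∈ ball 0 ρ, u x = 0) (hz : 0 < u z) :
    ∃ d, 0 < d ∧ d ≤ ‖z‖ ∧ (∀ x ∈ ball 0 1, rescale d u x = 0) ∧
      ∃ w ∈ closure {x | 0 < rescale d u x}, ‖w‖ = 1 := by
  obtain ⟨w, hw, hwz, hdisj⟩ :=
    exists_mem_norm_le_disjoint_ball (isClosed_closure (s := {x | 0 < u x})) (subset_closure hz)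
  have hw0 : w ≠ 0 := by
    rintro rfl
    obtain ⟨x, hx, hux⟩ := mem_closure_iff.1 hw _ isOpen_ball (mem_ball_self hρ)
    exact (h0 x hx).not_gt hux
  have hd : 0 < ‖w‖ := norm_pos_iff.2 hw0
  refine ⟨‖w‖, hd, hwz, fun x hx ↦ ?_, ‖w‖⁻¹ • w, ?_, norm_smul_inv_norm (𝕜 := ℝ) hw0⟩
  · have hx' := hdisj.notMem_of_mem_left (smul_mem_ball_zero hd hx)
    rw [rescale, (not_lt.1 fun h ↦ hx' (subset_closure h)).antisymm (hu0 _), mul_zero]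
  · refine map_mem_closure (continuous_const_smul _) hw fun x (hx : 0 < u x) ↦ ?_
    rw [mem_ofPred_eq, rescale, smul_inv_smul₀ hd.ne']
    exact mul_pos (inv_pos.2 hd) hx

end Normalization

variable {E : Type*} [NormedAddCommGroup E] [InnerProductSpace ℝ E] [FiniteDimensional ℝ E]
  [MeasurableSpace E] [BorelSpace E] {U : E → ℝ} {f W ψ : ℕ → E → ℝ} {ε d : ℕ → ℝ} {R : ℝ}
  {K : ℝ≥0}

theorem exists_tendsto_isGlobalMinimizer_of_isApproximant [Nontrivial E]
    (hU : IsGlobalMinimizer U) (hε : Tendsto ε atTop (𝓝 0))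
    (h : ∀ k, IsApproximant U K (ε k) (W k) (ψ k)) : ∃ (φ : ℕ → ℕ) (v : E → ℝ),
      Tendsto (ψ ∘ φ) atTop (𝓝 v) ∧ IsGlobalMinimizer v ∧ EqOn v U (ball 0 1)ᶜ := by
  have hWU : Tendsto W atTop (𝓝 U) := by
    refine tendsto_pi_nhds.2 fun x ↦ tendsto_iff_dist_tendsto_zero.2 ?_
    refine squeeze_zero (fun _ ↦ dist_nonneg) (fun k ↦ (h k).abs_obstacle_sub_le x) ?_
    simpa only [mul_zero] using hε.const_mul (K : ℝ)
  obtain ⟨e, he⟩ := exists_norm_eq E zero_le_one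
  have he' : e ∈ (ball (0 : E) 1)ᶜ := by simp [he]
  have hψe : Tendsto (fun k ↦ ψ k e) atTop (𝓝 (U e)) :=
    (tendsto_pi_nhds.1 hWU e).congr fun k ↦ ((h k).eqOn he').symm
  obtain ⟨M, hM⟩ := hψe.abs.bddAbove_range
  obtain ⟨φ, v, hφ, hv⟩ := exists_subseq_tendsto_of_lipschitzWith
    (fun k ↦ (h k).lipschitzWith) e fun k ↦ hM (mem_range_self k)
  exact ⟨φ, v, hv, isGlobalMinimizer_of_tendsto_of_energyDiff_nonneg hU
    (fun k ↦ (h (φ k)).lipschitzWith) (fun k ↦ (h (φ k)).isMinimizerOnBall.nonneg)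
    (fun k ↦ (h (φ k)).lipschitzWith_obstacle) hv (hWU.comp hφ.tendsto_atTop)
    (fun k ↦ (h (φ k)).eqOn) (fun k ↦ (h (φ k)).energyDiff_nonneg)
    fun k r g hg hgW hgI ↦ (h (φ k)).energyDiff_nonpos hg hgW hgI⟩

theorem exists_tendsto_rescale_isGlobalMinimizer (hR : 0 < R) (hf : ∀ k, LipschitzWith K (f k))
    (hmin : ∀ k, IsMinimizerOnBall R (f k)) (hd : ∀ k, 0 < d k) (hd0 : Tendsto d atTop (𝓝 0))
    (hz : ∀ k, ∃ z ∈ closedBall 0 1, rescale (d k) (f k) z = 0) :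
    ∃ (φ : ℕ → ℕ) (v : E → ℝ), Tendsto (fun k ↦ rescale (d (φ k)) (f (φ k))) atTop (𝓝 v) ∧
      IsGlobalMinimizer v := by
  have hL (k : ℕ) : LipschitzWith K (rescale (d k) (f k)) := lipschitzWith_rescale (hd k) (hf k)
  have hbound (k : ℕ) : |rescale (d k) (f k) 0| ≤ K := by
    obtain ⟨z, hz1, hz0⟩ := hz k
    have := (hL k).dist_le_mul 0 z
    rw [hz0, dist_zero_right, dist_zero_left] at this
    exact this.trans (mul_le_of_le_one_right K.coe_nonneg (mem_closedBall_zero_iff.1 hz1))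
  obtain ⟨φ, v, hφ, hv⟩ := exists_subseq_tendsto_of_lipschitzWith hL 0 hbound
  have hRd : Tendsto (fun k ↦ R / d k) atTop atTop :=
    (tendsto_nhdsWithin_iff.2 ⟨hd0, .of_forall hd⟩).inv_tendsto_nhdsGT_zero.const_mul_atTop hR
  exact ⟨φ, v, hv, isGlobalMinimizer_of_tendsto (fun k ↦ hL (φ k)) (hRd.comp hφ.tendsto_atTop)
    (fun k ↦ (hmin (φ k)).rescale (hd (φ k))) hv⟩

variable (E) in
theorem exists_forall_isMinimizerOnBall_exists_lt [Nontrivial E] :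
    ∃ c : ℝ, 0 < c ∧ ∀ (u : E → ℝ) (R : ℝ) (p : E) (r : ℝ), IsMinimizerOnBall R u → 0 < r →
      ‖p‖ + r < R → p ∈ closure {x | 0 < u x} → ∃ x ∈ closedBall p r, c * r < u x := by
  obtain ⟨c, hc, hzero⟩ := exists_forall_isMinimizerOnBall_eq_zero E
  refine ⟨c, hc, fun u R p r hu hr hR hp ↦ ?_⟩
  by_contra! hsmall
  obtain ⟨x, hx, hux⟩ := mem_closure_iff.1 hp _ isOpen_ball (mem_ball_self (half_pos hr))
  exact (hzero u R p r hu hr hR hsmall x (ball_subset_closedBall hx)).not_gt hux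

end BlowUp

section TrappingMinimizers

variable {E : Type*} [NormedAddCommGroup E] [InnerProductSpace ℝ E] [FiniteDimensional ℝ E]
  [MeasurableSpace E] [BorelSpace E] {U : E → ℝ} {f W ψ : ℕ → E → ℝ} {ε : ℕ → ℝ} {R δ : ℝ}
  {K : ℝ≥0}

namespace IsMinimizingCone

theorem exists_ge_of_forall_ball_pos (hU : IsMinimizingCone U) (hε : Tendsto ε atTop (𝓝 0))
    (h : ∀ k, IsApproximant U K (ε k) (W k) (ψ k)) (hUψ : ∀ k x, U x ≤ ψ k x) (hδ : 0 < δ)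
    (hpos : ∀ k, ∀ x ∈ ball 0 δ, 0 < ψ k x) :
    ∃ v, IsGlobalMinimizer v ∧ (∀ x, U x ≤ v x) ∧ 0 < v 0 ∧ ∃ z, v z = 0 := by
  have := hU.nontrivial
  obtain ⟨φ, v, hv, hvmin, hvU⟩ :=
    exists_tendsto_isGlobalMinimizer_of_isApproximant hU.isGlobalMinimizer hε h
  obtain ⟨c, hc, hc0⟩ := hU.exists_forall_mul_le_apply_zero
  set d : ℝ := min δ (1 / 2)
  have hd : 0 < d := lt_min hδ one_half_pos
  refine ⟨v, hvmin, fun x ↦ ge_of_tendsto' (tendsto_pi_nhds.1 hv x) fun k ↦ hUψ _ x, ?_, ?_⟩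
  · refine (mul_pos hc hd).trans_le (ge_of_tendsto' (tendsto_pi_nhds.1 hv 0) fun k ↦ ?_)
    exact hc0 _ d hd ((h _).isMinimizerOnBall.mono (min_le_right _ _)) (hUψ _)
      fun x hx _ ↦ hpos _ x (ball_subset_ball (min_le_left _ _) hx)
  · obtain ⟨z, hz, hUz⟩ := hU.exists_norm_eq_one_apply_eq_zero
    exact ⟨z, (hvU (by simp [hz])).trans hUz⟩

theorem exists_ge_of_forall_exists_eq_zero (hU : IsMinimizingCone U) (hR : 0 < R)
    (hf : ∀ k, LipschitzWith K (f k)) (hmin : ∀ k, IsMinimizerOnBall R (f k))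
    (hUf : ∀ k x, U x ≤ f k x) (hf0 : ∀ k, 0 < f k 0)
    (hzero : ∀ δ > 0, ∃ k, ∃ x ∈ ball 0 δ, f k x = 0) :
    ∃ v, IsGlobalMinimizer v ∧ (∀ x, U x ≤ v x) ∧ 0 < v 0 ∧ ∃ z, v z = 0 := by
  obtain ⟨r, -, hr, hr0⟩ := exists_seq_strictAnti_tendsto' hR
  choose k z hz hkz using fun j ↦ hzero (r j) (hr j).1
  choose d hd hdz hpos w hw hkw using fun j ↦ exists_forall_ball_rescale_pos
    (hf (k j)).continuous (hmin (k j)).nonneg (hf0 (k j)) (hkz j)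
  have hdr (j : ℕ) : d j ≤ r j := (hdz j).trans (mem_ball_zero_iff.1 (hz j)).le
  have hw' (j : ℕ) : w j ∈ closedBall 0 1 := mem_closedBall_zero_iff.2 (hw j).le
  obtain ⟨φ, v, hv, hvmin⟩ := exists_tendsto_rescale_isGlobalMinimizer hR (fun j ↦ hf (k j))
    (fun j ↦ hmin (k j)) hd (squeeze_zero (fun j ↦ (hd j).le) hdr hr0) fun j ↦ ⟨w j, hw' j, hkw j⟩
  obtain ⟨c, hc, hc0⟩ := hU.exists_forall_mul_le_apply_zero
  have hUr (j : ℕ) : ∀ x, U x ≤ rescale (d j) (f (k j)) x := hU.le_rescale (hd j) (hUf (k j))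
  refine ⟨v, hvmin, fun x ↦ ge_of_tendsto' (tendsto_pi_nhds.1 hv x) fun j ↦ hUr (φ j) x, ?_, ?_⟩
  · refine hc.trans_le (ge_of_tendsto' (tendsto_pi_nhds.1 hv 0) fun j ↦ ?_)
    have hRd : 1 ≤ R / d (φ j) :=
      (one_le_div (hd _)).2 ((hdr (φ j)).trans (hr (φ j)).2.le)
    simpa only [mul_one] using hc0 _ 1 one_pos (((hmin (k (φ j))).rescale (hd (φ j))).mono hRd)
      (hUr (φ j)) fun x hx _ ↦ hpos (φ j) x hx
  · obtain ⟨z, -, hz⟩ := exists_mem_apply_mem_of_tendsto (isCompact_closedBall (0 : E) 1)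
      (isClosed_singleton (x := (0 : ℝ))) (fun j ↦ lipschitzWith_rescale (hd (φ j)) (hf (k (φ j))))
      hv fun j ↦ ⟨w (φ j), hw' (φ j), hkw (φ j)⟩
    exact ⟨z, hz⟩

theorem exists_isGlobalMinimizer_ge (hU : IsMinimizingCone U) :
    ∃ v, IsGlobalMinimizer v ∧ (∀ x, U x ≤ v x) ∧ (∀ x ∈ ball 0 1, 0 < v x) ∧
      ∃ z, ‖z‖ = 1 ∧ v z = 0 := by
  obtain ⟨K, hK⟩ := hU.exists_isApproximant_ge
  obtain ⟨ε, -, hε, hε0⟩ := exists_seq_strictAnti_tendsto' (one_pos (α := ℝ))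
  choose W ψ happrox hUψ hψ0 using fun k ↦ hK (ε k) (hε k).1 (hε k).2.le
  obtain ⟨v, hv, hUv, hv0, z, hz⟩ :
      ∃ v, IsGlobalMinimizer v ∧ (∀ x, U x ≤ v x) ∧ 0 < v 0 ∧ ∃ z, v z = 0 := by
    by_cases hpos : ∃ δ > 0, ∀ k, ∀ x ∈ ball 0 δ, 0 < ψ k x
    · obtain ⟨δ, hδ, hpos⟩ := hpos
      exact hU.exists_ge_of_forall_ball_pos hε0 happrox hUψ hδ hpos
    · push Not at hpos
      refine hU.exists_ge_of_forall_exists_eq_zero one_half_pos (fun k ↦ (happrox k).lipschitzWith)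
        (fun k ↦ (happrox k).isMinimizerOnBall) hUψ hψ0 fun δ hδ ↦ ?_
      obtain ⟨k, x, hx, hψx⟩ := hpos δ hδ
      exact ⟨k, x, hx, hψx.antisymm ((happrox k).isMinimizerOnBall.nonneg x)⟩
  obtain ⟨d, hd, -, hpos, hw⟩ :=
    exists_forall_ball_rescale_pos hv.isLipschitz.continuous hv.nonneg hv0 hz
  exact ⟨_, hv.rescale hd, hU.le_rescale hd hUv, hpos, hw⟩

theorem exists_le_of_forall_ball_eq_zero (hU : IsMinimizingCone U) (hε : Tendsto ε atTop (𝓝 0))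
    (h : ∀ k, IsApproximant U K (ε k) (W k) (ψ k)) (hψU : ∀ k x, ψ k x ≤ U x)
    (hzero : ∀ k, ∀ x ∈ ball 0 δ, ψ k x = 0) :
    ∃ v, IsGlobalMinimizer v ∧ (∀ x, v x ≤ U x) ∧ (∀ x ∈ ball 0 δ, v x = 0) ∧ ∃ z, 0 < v z := by
  have := hU.nontrivial
  obtain ⟨φ, v, hv, hvmin, hvU⟩ :=
    exists_tendsto_isGlobalMinimizer_of_isApproximant hU.isGlobalMinimizer hε h
  refine ⟨v, hvmin, fun x ↦ le_of_tendsto' (tendsto_pi_nhds.1 hv x) fun k ↦ hψU _ x,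
    fun x hx ↦ ?_, ?_⟩
  · exact tendsto_nhds_unique (tendsto_pi_nhds.1 hv x)
      (tendsto_const_nhds.congr fun k ↦ (hzero _ x hx).symm)
  · obtain ⟨z, hz, hUz⟩ := hU.exists_norm_eq_one_apply_pos
    exact ⟨z, hUz.trans_eq (hvU (by simp [hz])).symm⟩

theorem exists_le_of_forall_exists_pos (hU : IsMinimizingCone U) (hR : 0 < R)
    (hf : ∀ k, LipschitzWith K (f k)) (hmin : ∀ k, IsMinimizerOnBall R (f k))
    (hfU : ∀ k x, f k x ≤ U x) (hf0 : ∀ k, ∃ ρ > 0, ∀ x ∈ ball 0 ρ, f k x = 0)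
    (hpos : ∀ δ > 0, ∃ k, ∃ x ∈ ball 0 δ, 0 < f k x) :
    ∃ v, IsGlobalMinimizer v ∧ (∀ x, v x ≤ U x) ∧ (∀ x ∈ ball 0 1, v x = 0) ∧ ∃ z, 0 < v z := by
  have := hU.nontrivial
  obtain ⟨r, -, hr, hr0⟩ := exists_seq_strictAnti_tendsto' (half_pos hR)
  choose k z hz hkz using fun j ↦ hpos (r j) (hr j).1
  choose ρ hρ hf0 using hf0
  choose d hd hdz hzero w hkw hw using fun j ↦ exists_forall_ball_rescale_eq_zero
    (hmin (k j)).nonneg (hρ (k j)) (hf0 (k j)) (hkz j)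
  have hdr (j : ℕ) : d j < r j := (hdz j).trans_lt (mem_ball_zero_iff.1 (hz j))
  obtain ⟨φ, v, hv, hvmin⟩ := exists_tendsto_rescale_isGlobalMinimizer hR (fun j ↦ hf (k j))
    (fun j ↦ hmin (k j)) hd (squeeze_zero (fun j ↦ (hd j).le) (fun j ↦ (hdr j).le) hr0) fun j ↦
      ⟨0, mem_closedBall_self zero_le_one, hzero j 0 (mem_ball_self one_pos)⟩
  obtain ⟨c, hc, hnondeg⟩ := exists_forall_isMinimizerOnBall_exists_lt E
  have hlarge (j : ℕ) : ∃ x ∈ closedBall 0 2, rescale (d j) (f (k j)) x ∈ Ici c := by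
    have hRd : ‖w j‖ + 1 < R / d j := by
      rw [lt_div_iff₀ (hd j), hw]
      linarith [hdr j, (hr j).2]
    obtain ⟨x, hx, hcx⟩ :=
      hnondeg _ _ (w j) 1 ((hmin (k j)).rescale (hd j)) one_pos hRd (hkw j)
    refine ⟨x, mem_closedBall_zero_iff.2 ?_, (mul_one c ▸ hcx).le⟩
    rw [mem_closedBall_iff_norm] at hx
    linarith [norm_sub_norm_le x (w j), hw j]
  refine ⟨v, hvmin, fun x ↦ le_of_tendsto' (tendsto_pi_nhds.1 hv x) fun j ↦
    hU.rescale_le (hd (φ j)) (hfU (k (φ j))) x, fun x hx ↦ ?_, ?_⟩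
  · exact tendsto_nhds_unique (tendsto_pi_nhds.1 hv x)
      (tendsto_const_nhds.congr fun j ↦ (hzero (φ j) x hx).symm)
  · obtain ⟨z, -, hz⟩ := exists_mem_apply_mem_of_tendsto (isCompact_closedBall (0 : E) 2)
      isClosed_Ici (fun j ↦ lipschitzWith_rescale (hd (φ j)) (hf (k (φ j)))) hv fun j ↦ hlarge (φ j)
    exact ⟨z, hc.trans_le hz⟩

theorem exists_isGlobalMinimizer_le (hU : IsMinimizingCone U) :
    ∃ v, IsGlobalMinimizer v ∧ (∀ x, v x ≤ U x) ∧ (∀ x ∈ ball 0 1, v x = 0) ∧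
      ∃ z ∈ closure {x | 0 < v x}, ‖z‖ = 1 := by
  obtain ⟨K, hK⟩ := hU.exists_isApproximant_le
  obtain ⟨ε, -, hε, hε0⟩ := exists_seq_strictAnti_tendsto' (one_half_pos (α := ℝ))
  choose W ψ happrox hψU hψ0 using fun k ↦ hK (ε k) (hε k).1 (hε k).2
  obtain ⟨v, hv, hvU, ⟨ρ, hρ, hv0⟩, z, hz⟩ : ∃ v, IsGlobalMinimizer v ∧ (∀ x, v x ≤ U x) ∧
      (∃ ρ > 0, ∀ x ∈ ball 0 ρ, v x = 0) ∧ ∃ z, 0 < v z := by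
    by_cases hzero : ∃ δ > 0, ∀ k, ∀ x ∈ ball 0 δ, ψ k x = 0
    · obtain ⟨δ, hδ, hzero⟩ := hzero
      obtain ⟨v, hv, hvU, hv0, hz⟩ := hU.exists_le_of_forall_ball_eq_zero hε0 happrox hψU hzero
      exact ⟨v, hv, hvU, ⟨δ, hδ, hv0⟩, hz⟩
    · push Not at hzero
      obtain ⟨v, hv, hvU, hv0, hz⟩ := hU.exists_le_of_forall_exists_pos one_half_pos
        (fun k ↦ (happrox k).lipschitzWith) (fun k ↦ (happrox k).isMinimizerOnBall) hψU
        (fun k ↦ ⟨_, half_pos (hε k).1, hψ0 k⟩) fun δ hδ ↦ by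
          obtain ⟨k, x, hx, hψx⟩ := hzero δ hδ
          exact ⟨k, x, hx, ((happrox k).isMinimizerOnBall.nonneg x).lt_of_ne' hψx⟩
      exact ⟨v, hv, hvU, ⟨1, one_pos, hv0⟩, hz⟩
  obtain ⟨d, hd, -, hzero, hw⟩ := exists_forall_ball_rescale_eq_zero hv.nonneg hρ hv0 hz
  exact ⟨_, hv.rescale hd, hU.rescale_le hd hvU, hzero, hw⟩

end IsMinimizingCone

end TrappingMinimizers

section LocallyLipschitz

variable {E : Type*} [NormedAddCommGroup E] [NormedSpace ℝ E] {u v : E → ℝ} {r : ℝ}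

theorem isLipschitz_of_eqOn_compl_ball [ProperSpace E] (hu : IsLipschitz u)
    (hv : LocallyLipschitz v) (h : EqOn v u (ball 0 r)ᶜ) : IsLipschitz v := by
  classical
  obtain ⟨K, hK⟩ := hu
  obtain ⟨L, hL⟩ := (hv.locallyLipschitzOn (s := closedBall 0 r)).exists_lipschitzOnWith_of_compact
    (isCompact_closedBall 0 r)
  obtain ⟨g, hg, hvg⟩ := hL.extend_real
  have hpiece := lipschitzWith_piecewise (s := closedBall 0 r) (hg.weaken (le_max_left L K))
    (hK.weaken (le_max_right L K)) fun x hx ↦ by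
      have hxr := frontier_closedBall_subset_sphere hx
      rw [← hvg (sphere_subset_closedBall hxr)]
      exact h fun hx' ↦ sphere_disjoint_ball.notMem_of_mem_left hxr hx'
  have hv_eq : (closedBall 0 r).piecewise g u = v := by
    ext x
    by_cases hx : x ∈ closedBall 0 r
    · rw [piecewise_eq_of_mem _ _ _ hx, hvg hx]
    · rw [piecewise_eq_of_notMem _ _ _ hx, h fun hx' ↦ hx (ball_subset_closedBall hx')]
  exact ⟨_, hv_eq ▸ hpiece⟩

theorem isLipschitz_of_map_smul (hu : LocallyLipschitz u)
    (hmap : ∀ t : ℝ, 0 < t → ∀ x, u (t • x) = t * u x) : IsLipschitz u := by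
  obtain ⟨K, s, hs, hK⟩ := hu 0
  obtain ⟨ε, hε, hεs⟩ := Metric.mem_nhds_iff.1 hs
  refine ⟨K, .of_dist_le_mul fun x y ↦ ?_⟩
  -- A dilation moves `x` and `y` into the neighbourhood of the origin where `u` is `K`-Lipschitz.
  set t : ℝ := ε / (‖x‖ + ‖y‖ + 1)
  have ht : 0 < t := by positivity
  have hmem {z : E} (hz : ‖z‖ ≤ ‖x‖ + ‖y‖) : t • z ∈ s := hεs <| by
    rw [mem_ball_zero_iff, norm_smul, Real.norm_of_nonneg ht.le, div_mul_eq_mul_div,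
      div_lt_iff₀ (by positivity)]
    gcongr
    linarith
  have h := hK.dist_le_mul _ (hmem (le_add_of_nonneg_right (norm_nonneg y))) _
    (hmem (le_add_of_nonneg_left (norm_nonneg x)))
  rw [hmap t ht, hmap t ht, dist_smul₀, Real.norm_of_nonneg ht.le, Real.dist_eq, ← mul_sub, abs_mul,
    abs_of_pos ht, ← Real.dist_eq, mul_left_comm] at h
  exact le_of_mul_le_mul_left h ht

end LocallyLipschitz

section Frontier

variable {E : Type*} [SeminormedAddCommGroup E] [NormedSpace ℝ E] {T : Set E} {x z : E} {r : ℝ}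

theorem mem_frontier_of_ball_subset (hr : r ≠ 0) (h : ball x r ⊆ T) (hz : z ∈ closure Tᶜ)
    (hd : dist z x = r) : z ∈ frontier T := by
  rw [frontier_eq_closure_inter_closure]
  refine ⟨closure_mono h ?_, hz⟩
  rw [closure_ball x hr]
  exact hd.le

theorem infDist_frontier_eq_of_ball_subset (hr : r ≠ 0) (h : ball x r ⊆ T) (hz : z ∈ closure Tᶜ)
    (hd : dist z x = r) : infDist x (frontier T) = r := by
  have hzT := mem_frontier_of_ball_subset hr h hz hd
  refine le_antisymm (hd ▸ dist_comm z x ▸ infDist_le_dist_of_mem hzT) ?_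
  refine (le_infDist ⟨z, hzT⟩).2 fun y hy ↦ not_lt.1 fun hlt ↦ ?_
  exact disjoint_interior_frontier.notMem_of_mem_left
    (interior_maximal h isOpen_ball (mem_ball'.2 hlt)) hy

end Frontier

section EuclideanSpace

variable {n : ℕ} {u : EuclideanSpace ℝ (Fin n) → ℝ}

theorem JE_univ_inter_ball (hu : IsLipschitz u) (c : EuclideanSpace ℝ (Fin n)) (r : ℝ) :
    JE (univ ∩ ball c r) u = ENNReal.ofReal (∫ x in ball c r, energyDensity u x) := by
  rw [univ_inter, ofReal_integral_eq_lintegral_ofReal (integrableOn_energyDensity hu c r)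
    (.of_forall fun x ↦ energyDensity_nonneg u x)]
  refine lintegral_congr fun x ↦ ?_
  rw [energyDensity, ENNReal.ofReal_add (by positivity) (by positivity),
    ENNReal.ofReal_pow (norm_nonneg _), ofReal_norm, apply_ite ENNReal.ofReal,
    ENNReal.ofReal_one, ENNReal.ofReal_zero, enorm_eq_nnnorm]

theorem isGlobalMinimizer_of_isMinimizer (h : IsMinimizer univ u) (hu : IsLipschitz u) :
    IsGlobalMinimizer u := fun _ ↦
  { isLipschitz := hu
    nonneg := h.1
    energyDiff_nonneg := fun v hv hv0 r _ hvu ↦ by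
      have hsub : {x | v x ≠ u x} ⊆ ball 0 r := fun x hx ↦ by_contra fun hxr ↦ hx (hvu hxr)
      obtain ⟨K, hK⟩ := id hv
      have hle := h.2.2 v hv0 hK.locallyLipschitz (isBounded_ball.subset hsub) (subset_univ _) 0 r
        hsub
      rwa [JE_univ_inter_ball hu, JE_univ_inter_ball hv, ENNReal.ofReal_le_ofReal_iff
        (integral_nonneg fun x ↦ energyDensity_nonneg v x), ← sub_nonneg,
        ← energyDiff_eq_sub_setIntegral hv hu hvu] at hle }

theorem IsGlobalMinimizer.isMinimizer (hu : IsGlobalMinimizer u) : IsMinimizer univ u := by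
  obtain ⟨K, hK⟩ := hu.isLipschitz
  refine ⟨hu.nonneg, hK.locallyLipschitz, fun v hv0 hv _ _ c r hsub ↦ ?_⟩
  have hvu : EqOn v u (ball c r)ᶜ := fun x hx ↦ by_contra fun hne ↦ hx (hsub hne)
  have hvu0 : EqOn v u (ball 0 (r + dist c 0))ᶜ :=
    hvu.mono (compl_subset_compl.2 (ball_subset_ball' le_rfl))
  have hvL : IsLipschitz v := isLipschitz_of_eqOn_compl_ball hu.isLipschitz hv hvu0
  rw [JE_univ_inter_ball hu.isLipschitz, JE_univ_inter_ball hvL]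
  refine ENNReal.ofReal_le_ofReal (sub_nonneg.1 ?_)
  rw [← energyDiff_eq_sub_setIntegral hvL hu.isLipschitz hvu]
  exact hu.energyDiff_nonneg hvL hv0 hvu0

theorem isMinimizingCone_of_isMinimizer (h : IsMinimizer univ u) (hu : u ≠ 0)
    (hmap : ∀ t : ℝ, 0 < t → ∀ x, u (t • x) = t * u x) : IsMinimizingCone u where
  isGlobalMinimizer := isGlobalMinimizer_of_isMinimizer h (isLipschitz_of_map_smul h.2.1 hmap)
  map_smul := hmap
  exists_pos :=
    let ⟨y, hy⟩ := Function.ne_iff.1 hu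
    ⟨y, (h.1 y).lt_of_ne' hy⟩

end EuclideanSpace

end AltCaffarelli

open AltCaffarelli in
theorem stmt10_general {E : Type*} [NormedAddCommGroup E] [InnerProductSpace ℝ E]
    [FiniteDimensional ℝ E] [MeasurableSpace E] [BorelSpace E] {U : E → ℝ}
    (hU : IsMinimizingCone U) :
    ∃ v w : E → ℝ, IsGlobalMinimizer v ∧ IsGlobalMinimizer w ∧ (∀ x, w x ≤ U x ∧ U x ≤ v x) ∧
      ball (0 : E) 1 ⊆ {x | 0 < v x} ∧ ball (0 : E) 1 ⊆ {x | w x = 0} ∧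
      (frontier {x | 0 < v x}).Nonempty ∧ (frontier {x | 0 < w x}).Nonempty ∧
      infDist (0 : E) (frontier {x | 0 < v x}) = 1 ∧
      infDist (0 : E) (frontier {x | 0 < w x}) = 1 := by
  obtain ⟨v, hv, hUv, hvpos, z, hz, hvz⟩ := hU.exists_isGlobalMinimizer_ge
  obtain ⟨w, hw, hwU, hwzero, y, hwy, hy⟩ := hU.exists_isGlobalMinimizer_le
  have hzv : z ∈ closure {x | 0 < v x}ᶜ := subset_closure hvz.not_gt
  have hball : ball 0 1 ⊆ {x | 0 < w x}ᶜ := fun x hx ↦ (hwzero x hx).not_gt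
  rw [← compl_compl {x | 0 < w x}] at hwy
  rw [← dist_zero_right] at hz hy
  refine ⟨v, w, hv, hw, fun x ↦ ⟨hwU x, hUv x⟩, hvpos, hwzero,
    ⟨z, mem_frontier_of_ball_subset one_ne_zero hvpos hzv hz⟩, ?_,
    infDist_frontier_eq_of_ball_subset one_ne_zero hvpos hzv hz, ?_⟩ <;> rw [← frontier_compl]
  · exact ⟨y, mem_frontier_of_ball_subset one_ne_zero hball hwy hy⟩
  · exact infDist_frontier_eq_of_ball_subset one_ne_zero hball hwy hy

/-- existence of inhomogeneous global minimizers trapping `U₀`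
(Theorem 1.1(i)). -/
theorem stmt10 {n : ℕ} (hn : 2 ≤ n) (U₀ : EuclideanSpace ℝ (Fin n) → ℝ)
    (hU₀min : IsMinimizer (Set.univ : Set (EuclideanSpace ℝ (Fin n))) U₀)
    (hU₀ne : U₀ ≠ 0)
    (hU₀hom : ∀ t : ℝ, 0 < t → ∀ x, U₀ (t • x) = t * U₀ x)
    (h0 : (0 : EuclideanSpace ℝ (Fin n)) ∈ frontier {x | 0 < U₀ x}) :
    ∃ Ubar Ulow : EuclideanSpace ℝ (Fin n) → ℝ,
      IsMinimizer (Set.univ : Set (EuclideanSpace ℝ (Fin n))) Ubar ∧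
      IsMinimizer (Set.univ : Set (EuclideanSpace ℝ (Fin n))) Ulow ∧
      (∀ x, Ulow x ≤ U₀ x ∧ U₀ x ≤ Ubar x) ∧
      Metric.ball (0 : EuclideanSpace ℝ (Fin n)) 1 ⊆ {x | 0 < Ubar x} ∧
      Metric.ball (0 : EuclideanSpace ℝ (Fin n)) 1 ⊆ {x | Ulow x = 0} ∧
      (frontier {x | 0 < Ubar x}).Nonempty ∧
      (frontier {x | 0 < Ulow x}).Nonempty ∧
      Metric.infDist (0 : EuclideanSpace ℝ (Fin n)) (frontier {x | 0 < Ubar x}) = 1 ∧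
      Metric.infDist (0 : EuclideanSpace ℝ (Fin n)) (frontier {x | 0 < Ulow x}) = 1 := by
  obtain ⟨v, w, hv, hw, h⟩ :=
    stmt10_general (AltCaffarelli.isMinimizingCone_of_isMinimizer hU₀min hU₀ne hU₀hom)
  exact ⟨v, w, hv.isMinimizer, hw.isMinimizer, h⟩
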